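/- arXiv:2305.08442 — 2 statements merged into one kernel-verified Lean document; each statement's English description precedes it below -/
import Mathlib

section
/- There exists d₀ such that the following holds. Let G be an (n,d,λ)-graph with λ/d ≤ 0.001 and d ≥ d₀. Then G contains a spanning crown, i.e., a crown on n vertices, with ⌊n/2⌋ spikes. -/
open scoped Classical

/-- An `(n,d,λ)`-graph: a `d`-regular graph on `n` vertices such that all eigenvalues of its
adjacency matrix except the largest one (which equals `d`) are at most `lam` in absolute value. -/
def IsNDLGraph (n : ℕ) (G : SimpleGraph (Fin n)) (d : ℕ) (lam : ℝ) : Prop :=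
  G.IsRegularOfDegree d ∧
  ∃ (h : (G.adjMatrix ℝ).IsHermitian) (i₀ : Fin n),
    h.eigenvalues i₀ = (d : ℝ) ∧ ∀ i, i ≠ i₀ → |h.eigenvalues i| ≤ lam

/-- `G` contains a crown on all of its `n` vertices with `k` spikes: a cycle `c` of `G` together
with a set `M` of `k` edges of `G` forming a matching, edge-disjoint from the cycle, each matching
edge having exactly one vertex in common with the cycle, and every vertex of `G` lying on the
cycle or on a matching edge. -/
def ContainsSpanningCrown (n : ℕ) (G : SimpleGraph (Fin n)) (k : ℕ) : Prop :=
  ∃ (v : Fin n) (c : G.Walk v v) (M : Finset (Sym2 (Fin n))),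
    c.IsCycle ∧ M.card = k ∧
    (∀ e ∈ M, e ∈ G.edgeSet) ∧
    (∀ e ∈ M, ∀ f ∈ M, e ≠ f → ∀ x : Fin n, x ∈ e → x ∉ f) ∧
    (∀ e ∈ M, e ∉ c.edges) ∧
    (∀ e ∈ M, ∃! x : Fin n, x ∈ e ∧ x ∈ c.support) ∧
    (∀ x : Fin n, x ∈ c.support ∨ ∃ e ∈ M, x ∈ e)

namespace Crown
open scoped Classical

theorem mixing_fun {n d : ℕ} {lam : ℝ} {G : SimpleGraph (Fin n)} (hG : IsNDLGraph n G d lam)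
    (hd : 0 < d) (hlam : lam ≤ 0.001 * d) (f g : Fin n → ℝ) :
    |f ⬝ᵥ (G.adjMatrix ℝ).mulVec g - d * ((∑ x, f x) * (∑ x, g x)) / n|
      ≤ 0.001 * d * Real.sqrt ((∑ x, f x ^ 2) * (∑ x, g x ^ 2)) := by
  obtain ⟨hreg, h, i₀, h0, hi⟩ := hG
  set A := G.adjMatrix ℝ with hA
  have hdR : (0 : ℝ) < d := by exact_mod_cast hd
  have hnpos : 0 < n := i₀.pos
  have hnR : (0 : ℝ) < n := by exact_mod_cast hnpos
  let u : Fin n → Fin n → ℝ := fun i => (h.eigenvectorBasis i : Fin n → ℝ)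
  let a : (Fin n → ℝ) → Fin n → ℝ := fun f i => f ⬝ᵥ u i
  have hu : ∀ i, A.mulVec (u i) = h.eigenvalues i • u i := fun i => h.mulVec_eigenvectorBasis i
  have hpars : ∀ f g : Fin n → ℝ, f ⬝ᵥ g = ∑ i, a f i * a g i := by
    intro f g
    have := h.eigenvectorBasis.sum_inner_mul_inner (WithLp.toLp 2 f) (WithLp.toLp 2 g)
    simp only [EuclideanSpace.inner_eq_star_dotProduct] at this
    simp only [star_trivial] at this
    rw [dotProduct_comm, ← this]
    refine Finset.sum_congr rfl fun i _ => ?_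
    simp only [a, u]
    rw [dotProduct_comm (h.eigenvectorBasis i).ofLp f]
  have hsym : ∀ f g : Fin n → ℝ, f ⬝ᵥ A.mulVec g = A.mulVec f ⬝ᵥ g := by
    intro f g
    rw [Matrix.dotProduct_mulVec, ← Matrix.mulVec_transpose, hA, SimpleGraph.transpose_adjMatrix]
  have hAa : ∀ g i, a (A.mulVec g) i = h.eigenvalues i * a g i := by
    intro g i
    simp only [a]
    rw [← hsym, hu, dotProduct_smul, smul_eq_mul]
  let o : Fin n → ℝ := fun _ => 1
  have hAo : A.mulVec o = (d : ℝ) • o := by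
    funext x
    simp only [hA, o, SimpleGraph.adjMatrix_mulVec_apply, Pi.smul_apply, smul_eq_mul, mul_one]
    simp [hreg x]
  have ha0 : ∀ i, i ≠ i₀ → a o i = 0 := by
    intro i hne
    have h1 := hAa o i
    rw [hAo] at h1
    have h2 : a ((d : ℝ) • o) i = d * a o i := by
      simp only [a, smul_dotProduct, smul_eq_mul]
    rw [h2] at h1
    have h3 := (abs_le.1 (hi i hne)).2
    have h4 : ((d : ℝ) - h.eigenvalues i) * a o i = 0 := by linarith
    rcases mul_eq_zero.1 h4 with h5 | h5
    · exfalso; nlinarith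
    · exact h5
  have hone : ∀ f : Fin n → ℝ, ∑ x, f x = a f i₀ * a o i₀ := by
    intro f
    have h1 := hpars f o
    rw [Finset.sum_eq_single i₀ (fun i _ hne => by rw [ha0 i hne, mul_zero]) (by simp)] at h1
    rw [← h1]; simp [dotProduct, o]
  have hoo : a o i₀ * a o i₀ = n := by
    rw [← hone o]; simp [o]
  have hmain : f ⬝ᵥ A.mulVec g = ∑ i, h.eigenvalues i * (a f i * a g i) := by
    rw [hpars]
    refine Finset.sum_congr rfl fun i _ => ?_
    rw [hAa]; ring
  have hfirst : d * ((∑ x, f x) * (∑ x, g x)) / n = d * (a f i₀ * a g i₀) := by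
    rw [hone f, hone g, ← hoo]
    have : a o i₀ ≠ 0 := by
      intro hz; rw [hz] at hoo; linarith
    field_simp
  have hsplit := Finset.add_sum_erase Finset.univ
    (fun i => h.eigenvalues i * (a f i * a g i)) (Finset.mem_univ i₀)
  rw [hmain, hfirst, ← hsplit]
  simp only [h0]
  rw [add_sub_cancel_left]
  have hsq : ∀ f : Fin n → ℝ, ∑ x, f x ^ 2 = ∑ i, a f i ^ 2 := by
    intro f
    have := hpars f f
    simp only [dotProduct] at this
    simp only [sq]; exact this
  have hcs : ∑ i, |a f i| * |a g i| ≤ Real.sqrt ((∑ x, f x ^ 2) * (∑ x, g x ^ 2)) := by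
    apply Real.le_sqrt_of_sq_le
    refine (Finset.sum_mul_sq_le_sq_mul_sq _ _ _).trans ?_
    simp only [sq_abs]
    rw [hsq f, hsq g]
  calc _ ≤ ∑ i ∈ Finset.univ.erase i₀, |h.eigenvalues i * (a f i * a g i)| :=
        Finset.abs_sum_le_sum_abs _ _
    _ ≤ ∑ i ∈ Finset.univ.erase i₀, (0.001 * d) * (|a f i| * |a g i|) := by
        refine Finset.sum_le_sum fun i hi' => ?_
        rw [abs_mul, abs_mul]
        exact mul_le_mul_of_nonneg_right ((hi i (Finset.ne_of_mem_erase hi')).trans hlam)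
          (by positivity)
    _ ≤ ∑ i, (0.001 * d) * (|a f i| * |a g i|) := by
        refine Finset.sum_le_sum_of_subset_of_nonneg (Finset.subset_univ _) fun i _ _ => ?_
        positivity
    _ ≤ _ := by
        rw [← Finset.mul_sum]
        exact mul_le_mul_of_nonneg_left hcs (by positivity)

theorem mixing {n d : ℕ} {lam : ℝ} {G : SimpleGraph (Fin n)} (hG : IsNDLGraph n G d lam)
    (hd : 0 < d) (hlam : lam ≤ 0.001 * d) (S T : Finset (Fin n)) :
    |∑ x ∈ S, ((T.filter (fun y => G.Adj x y)).card : ℝ) - d * (S.card * T.card) / n|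
      ≤ 0.001 * d * Real.sqrt (S.card * T.card) := by
  have := mixing_fun hG hd hlam (fun x => if x ∈ S then 1 else 0) (fun x => if x ∈ T then 1 else 0)
  have e1 : ∀ U : Finset (Fin n), ∑ x, (if x ∈ U then (1:ℝ) else 0) = U.card := by
    intro U; simp
  have e2 : ∀ U : Finset (Fin n), ∑ x, (if x ∈ U then (1:ℝ) else 0) ^ 2 = U.card := by
    intro U; simp
  simp only [e1, e2] at this
  convert this using 4
  simp only [dotProduct, SimpleGraph.adjMatrix_mulVec_apply, ite_mul, one_mul, zero_mul]
  rw [Finset.sum_ite_mem, Finset.univ_inter]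
  refine Finset.sum_congr rfl fun x _ => ?_
  rw [Finset.sum_ite_mem, Finset.sum_const, nsmul_eq_mul, mul_one]
  congr 2
  ext y
  simp [and_comm]

end Crown

namespace Crown
open scoped Classical

noncomputable def av {Ω ι : Type*} [Fintype Ω] (E : ι → Finset Ω) (T : Finset ι) : Finset Ω :=
  Finset.univ.filter (fun ω => ∀ f ∈ T, ω ∉ E f)

lemma mem_av {Ω ι : Type*} [Fintype Ω] {E : ι → Finset Ω} {T : Finset ι} {ω : Ω} :
    ω ∈ av E T ↔ ∀ f ∈ T, ω ∉ E f := by simp [av]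

theorem local_lemma {Ω ι : Type*} [Fintype Ω] [Nonempty Ω] (E : ι → Finset Ω)
    (Γ : ι → Finset ι) (p : ℝ) (D : ℕ) (hp : 0 ≤ p) (hD : 1 ≤ D) (hΓ : ∀ e, (Γ e).card ≤ D)
    (hpD : 4 * p * D ≤ 1)
    (hind : ∀ e (T : Finset ι), Disjoint T (Γ e) →
      (((E e) ∩ av E T).card : ℝ) ≤ p * (av E T).card) (S : Finset ι) :
    0 < (av E S).card := by
  have hp4 : 4 * p ≤ 1 := by
    have : (1:ℝ) ≤ D := by exact_mod_cast hD
    nlinarith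
  have claim : ∀ k : ℕ, ∀ S : Finset ι, S.card = k → ∀ e,
      (((E e) ∩ av E S).card : ℝ) ≤ 2 * p * (av E S).card := by
    intro k
    induction k using Nat.strong_induction_on with
    | _ k ih =>
    intro S hS e
    by_cases hdis : Disjoint S (Γ e)
    · refine (hind e S hdis).trans ?_
      have : (0:ℝ) ≤ (av E S).card := by positivity
      nlinarith
    set T := S \ Γ e with hT
    have hTlt : T.card < k := by
      rw [← hS]
      apply Finset.card_lt_card
      refine ⟨Finset.sdiff_subset, fun hsub => hdis ?_⟩
      rw [Finset.disjoint_left]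
      intro x hx
      exact (Finset.mem_sdiff.1 (hsub hx)).2
    have h1 : (((E e) ∩ av E T).card : ℝ) ≤ p * (av E T).card :=
      hind e T (Finset.sdiff_disjoint)
    have hsub : av E S ⊆ av E T := by
      intro ω hω
      rw [mem_av] at hω ⊢
      exact fun f hf => hω f (Finset.mem_sdiff.1 hf).1
    have h2 : (((E e) ∩ av E S).card : ℝ) ≤ ((E e) ∩ av E T).card := by
      exact_mod_cast Finset.card_le_card (Finset.inter_subset_inter_left hsub)
    have hcov : av E T ⊆ av E S ∪ (S ∩ Γ e).biUnion (fun f => E f ∩ av E T) := by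
      intro ω hω
      by_cases hωS : ω ∈ av E S
      · exact Finset.mem_union_left _ hωS
      · apply Finset.mem_union_right
        rw [mem_av] at hωS
        push Not at hωS
        obtain ⟨f, hf, hfE⟩ := hωS
        refine Finset.mem_biUnion.2 ⟨f, Finset.mem_inter.2 ⟨hf, ?_⟩, Finset.mem_inter.2 ⟨hfE, hω⟩⟩
        by_contra hfΓ
        exact (mem_av.1 hω) f (Finset.mem_sdiff.2 ⟨hf, hfΓ⟩) hfE
    have h3 : ((av E T).card : ℝ) ≤ (av E S).card + D * (2 * p * (av E T).card) := by
      have ha : (av E T).card ≤ (av E S).card + ∑ f ∈ S ∩ Γ e, (E f ∩ av E T).card :=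
        (Finset.card_le_card hcov).trans ((Finset.card_union_le _ _).trans
          (Nat.add_le_add_left Finset.card_biUnion_le _))
      have hb : ((av E T).card : ℝ) ≤
          (av E S).card + ∑ f ∈ S ∩ Γ e, ((E f ∩ av E T).card : ℝ) := by exact_mod_cast ha
      have hc : ∑ f ∈ S ∩ Γ e, ((E f ∩ av E T).card : ℝ) ≤
          (S ∩ Γ e).card * (2 * p * (av E T).card) := by
        rw [← nsmul_eq_mul]
        exact Finset.sum_le_card_nsmul _ _ _ fun f _ => ih _ hTlt T rfl f
      have hdd : ((S ∩ Γ e).card : ℝ) ≤ D := by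
        exact_mod_cast (Finset.card_le_card Finset.inter_subset_right).trans (hΓ e)
      have : ((S ∩ Γ e).card : ℝ) * (2 * p * (av E T).card) ≤ D * (2 * p * (av E T).card) :=
        mul_le_mul_of_nonneg_right hdd (by positivity)
      linarith
    have h4 : (0:ℝ) ≤ (av E T).card := by positivity
    have h5 : ((av E T).card : ℝ) ≤ 2 * (av E S).card := by nlinarith
    nlinarith
  induction S using Finset.induction_on with
  | empty =>
    rw [Finset.card_pos]
    exact ⟨Classical.arbitrary Ω, by simp [mem_av]⟩
  | insert e S _ ih =>
    have h1 := claim _ S rfl e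
    have h2 : av E S ⊆ av E (insert e S) ∪ (E e ∩ av E S) := by
      intro ω hω
      by_cases he : ω ∈ E e
      · exact Finset.mem_union_right _ (Finset.mem_inter.2 ⟨he, hω⟩)
      · refine Finset.mem_union_left _ (mem_av.2 fun f hf => ?_)
        rcases Finset.mem_insert.1 hf with rfl | hf
        · exact he
        · exact mem_av.1 hω f hf
    have h3 : (av E S).card ≤ (av E (insert e S)).card + (E e ∩ av E S).card :=
      (Finset.card_le_card h2).trans (Finset.card_union_le _ _)
    have h3' : ((av E S).card : ℝ) ≤ (av E (insert e S)).card + (E e ∩ av E S).card := by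
      exact_mod_cast h3
    have h4 : (0:ℝ) < (av E S).card := by exact_mod_cast ih
    have : (0:ℝ) < (av E (insert e S)).card := by nlinarith
    exact_mod_cast this

variable {V : Type*} [Fintype V] [DecidableEq V]

lemma single_coord (x : V) (w : Fin 3 → ℝ) (H : (V → Fin 3) → ℝ)
    (hH : ∀ c i, H (Function.update c x i) = H c) :
    ∑ c, w (c x) * H c = (∑ i, w i) / 3 * ∑ c, H c := by
  have hinv : Function.Involutive
      (fun q : (V → Fin 3) × Fin 3 => (Function.update q.1 x q.2, q.1 x)) := by
    rintro ⟨c, i⟩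
    simp
  have h := Equiv.sum_comp hinv.toPerm (fun q : (V → Fin 3) × Fin 3 => w (q.1 x) * H q.1)
  simp only [Function.Involutive.coe_toPerm, Function.update_self, hH] at h
  rw [Fintype.sum_prod_type, Fintype.sum_prod_type] at h
  simp only [← Finset.sum_mul, Finset.sum_const, Finset.card_univ, Fintype.card_fin,
    nsmul_eq_mul] at h
  simp only [← Finset.mul_sum] at h
  push_cast at h
  simp only [mul_assoc, ← Finset.mul_sum] at h
  linarith

lemma multi_coord (w : Fin 3 → ℝ) (B : Finset V) : ∀ (H : (V → Fin 3) → ℝ)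
    (_ : ∀ x ∈ B, ∀ c i, H (Function.update c x i) = H c),
    ∑ c, (∏ x ∈ B, w (c x)) * H c = ((∑ i, w i) / 3) ^ B.card * ∑ c, H c := by
  induction B using Finset.induction_on with
  | empty => intro H _; simp
  | insert x B hx ih =>
    intro H hH
    have := single_coord x w (fun c => (∏ y ∈ B, w (c y)) * H c) (by
      intro c i
      simp only [hH x (Finset.mem_insert_self _ _)]
      congr 1
      refine Finset.prod_congr rfl fun y hy => ?_
      rw [Function.update_of_ne]
      rintro rfl; exact hx hy)
    rw [ih H (fun y hy => hH y (Finset.mem_insert_of_mem hy))] at this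
    rw [Finset.card_insert_of_notMem hx, pow_succ]
    simp only [Finset.prod_insert hx, mul_assoc] at this ⊢
    rw [this]; ring

/-- the base of the exponential tail bound -/
noncomputable def rr : ℝ := ((2 + 0.99 ^ 10) / 3) / 0.99 ^ 3

lemma chernoff {d : ℕ} (B : Finset V) (hB : B.card = d) (i : Fin 3) (Q : Finset (V → Fin 3))
    (hQ : ∀ x ∈ B, ∀ c j, (Function.update c x j ∈ Q ↔ c ∈ Q)) :
    (((Finset.univ.filter (fun c : V → Fin 3 =>
      10 * (B.filter (fun x => c x = i)).card < 3 * d)) ∩ Q).card : ℝ) ≤ rr ^ d * Q.card := by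
  set q : ℝ := 0.99 ^ 10 with hq
  let w : Fin 3 → ℝ := fun j => if j = i then q else 1
  have hw : ∑ j, w j = 2 + q := by
    simp only [w]
    fin_cases i <;> simp [Fin.sum_univ_three] <;> ring
  have h1 := multi_coord w B (fun c => if c ∈ Q then 1 else 0) (by
    intro x hx c j
    simp only [hQ x hx])
  rw [hw, hB] at h1
  simp only [mul_ite, mul_one, mul_zero, Finset.sum_ite_mem, Finset.univ_inter, Finset.sum_const,
    nsmul_eq_mul] at h1
  have hq0 : 0 < q := by rw [hq]; positivity
  have hw0 : ∀ j, 0 ≤ w j := by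
    intro j; simp only [w]; split_ifs <;> linarith
  set Bad := Finset.univ.filter (fun c : V → Fin 3 =>
      10 * (B.filter (fun x => c x = i)).card < 3 * d) with hBad
  have h2 : ∀ c ∈ Bad ∩ Q, (0.99:ℝ) ^ (3 * d) ≤ ∏ x ∈ B, w (c x) := by
    intro c hc
    have hc1 := (Finset.mem_filter.1 (Finset.mem_inter.1 hc).1).2
    have : ∏ x ∈ B, w (c x) = q ^ (B.filter (fun x => c x = i)).card := by
      simp only [w]
      rw [← Finset.prod_filter, Finset.prod_const]
    rw [this, hq, ← pow_mul]
    exact pow_le_pow_of_le_one (by norm_num) (by norm_num) hc1.le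
  have h3 : ((Bad ∩ Q).card : ℝ) * 0.99 ^ (3 * d) ≤ ∑ c ∈ Q, ∏ x ∈ B, w (c x) := by
    rw [← nsmul_eq_mul]
    refine (Finset.card_nsmul_le_sum _ _ _ h2).trans ?_
    exact Finset.sum_le_sum_of_subset_of_nonneg Finset.inter_subset_right
      fun c _ _ => Finset.prod_nonneg fun x _ => hw0 _
  rw [h1] at h3
  rw [rr, div_pow, ← pow_mul, div_mul_eq_mul_div, le_div_iff₀ (by positivity)]
  exact h3

lemma exists_threshold : ∃ d₀ : ℕ, ∀ d : ℕ, d₀ ≤ d → 4 * rr ^ d * ((3 * d ^ 2 : ℕ) : ℝ) ≤ 1 := by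
  have h0 : |rr| < 1 := by
    rw [rr]; norm_num [abs_lt]
  have h := tendsto_pow_const_mul_const_pow_of_abs_lt_one 2 h0
  have h1 := h.eventually (ge_mem_nhds (show (0:ℝ) < 1 / 12 by norm_num))
  obtain ⟨N, hN⟩ := Filter.eventually_atTop.1 h1
  refine ⟨N, fun d hd => ?_⟩
  have := hN d hd
  push_cast
  linarith

theorem exists_colouring : ∃ d₀ : ℕ, ∀ (n d : ℕ) (G : SimpleGraph (Fin n)), d₀ ≤ d →
    G.IsRegularOfDegree d → ∃ c : Fin n → Fin 3, ∀ v i,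
      3 * d ≤ 10 * ((Finset.univ.filter (fun x => G.Adj v x ∧ c x = i)).card) := by
  obtain ⟨d₀, hd₀⟩ := exists_threshold
  refine ⟨max d₀ 1, fun n d G hd hreg => ?_⟩
  have hd1 : 1 ≤ d := (le_max_right _ _).trans hd
  have hthr := hd₀ d ((le_max_left _ _).trans hd)
  let E : Fin n × Fin 3 → Finset (Fin n → Fin 3) := fun e => Finset.univ.filter
    (fun c => 10 * ((G.neighborFinset e.1).filter (fun x => c x = e.2)).card < 3 * d)
  let Γ : Fin n × Fin 3 → Finset (Fin n × Fin 3) := fun e =>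
    ((G.neighborFinset e.1).biUnion (fun x => G.neighborFinset x)) ×ˢ Finset.univ
  have hrr : 0 ≤ rr := by rw [rr]; positivity
  have key := local_lemma E Γ (rr ^ d) (3 * d ^ 2) (by positivity) (by nlinarith) (by
    intro e
    simp only [Γ, Finset.card_product, Finset.card_univ, Fintype.card_fin]
    have : ((G.neighborFinset e.1).biUnion (fun x => G.neighborFinset x)).card ≤ d * d := by
      refine (Finset.card_biUnion_le_card_mul _ _ d ?_).trans ?_
      · intro x _; exact (hreg x).le
      · exact Nat.mul_le_mul_right _ (hreg e.1).le
    nlinarith) hthr (by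
    intro e T hT
    refine le_trans (le_of_eq ?_) (chernoff (G.neighborFinset e.1) (hreg e.1) e.2 (av E T) ?_)
    · congr!
    intro x hx c j
    have : ∀ f ∈ T, (Function.update c x j ∈ E f ↔ c ∈ E f) := by
      intro f hf
      simp only [E, Finset.mem_filter, Finset.mem_univ, true_and]
      have : (G.neighborFinset f.1).filter (fun y => Function.update c x j y = f.2) =
          (G.neighborFinset f.1).filter (fun y => c y = f.2) := by
        refine Finset.filter_congr fun y hy => ?_
        rw [Function.update_of_ne]
        rintro rfl
        refine Finset.disjoint_left.1 hT hf ?_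
        simp only [Γ, Finset.mem_product, Finset.mem_univ, and_true, Finset.mem_biUnion]
        refine ⟨y, hx, ?_⟩
        rw [SimpleGraph.mem_neighborFinset] at hy ⊢
        exact hy.symm
      rw [this]
    rw [mem_av, mem_av]
    exact forall₂_congr fun f hf => not_congr (this f hf)) Finset.univ
  obtain ⟨c, hc⟩ := Finset.card_pos.1 key
  refine ⟨c, fun v i => ?_⟩
  have := mem_av.1 hc (v, i) (Finset.mem_univ _)
  simp only [E, Finset.mem_filter, Finset.mem_univ, true_and, not_lt] at this
  exact this.trans (Nat.mul_le_mul_left _ (Finset.card_le_card fun y hy => by simpa using hy))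

end Crown

open scoped Classical

namespace Crown
variable {V : Type*} [DecidableEq V]

/-- neighbours of `U` inside `F` -/
noncomputable def nbF (G : SimpleGraph V) (F U : Finset V) : Finset V :=
  F.filter (fun y => ∃ u ∈ U, G.Adj u y)

/-- number of children of `v` -/
noncomputable def cc (p : V → V) (Y : Finset V) (v : V) : ℕ := (Y.filter (fun y => p y = v)).card

structure Good (G : SimpleGraph V) (s : ℕ) (R Y : Finset V) (p : V → V) : Prop where
  sub : Y ⊆ R
  adj : ∀ y ∈ Y, G.Adj (p y) y
  par : ∀ y ∈ Y, p y ∉ R \ Y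
  exp : ∀ U : Finset V, U.card ≤ 2 * s →
    4 * U.card ≤ (nbF G (R \ Y) U).card + (Y.filter (fun y => p y ∈ U)).card

/-- any two large sets span an edge -/
def Joined (G : SimpleGraph V) (s : ℕ) : Prop :=
  ∀ A B : Finset V, s ≤ A.card → s ≤ B.card → ∃ a ∈ A, ∃ b ∈ B, G.Adj a b

lemma nbF_union (G : SimpleGraph V) (F A B : Finset V) :
    nbF G F (A ∪ B) = nbF G F A ∪ nbF G F B := by
  ext x; simp only [nbF, Finset.mem_filter, Finset.mem_union]
  constructor
  · rintro ⟨h, u, hu | hu, h2⟩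
    · exact Or.inl ⟨h, u, hu, h2⟩
    · exact Or.inr ⟨h, u, hu, h2⟩
  · rintro (⟨h, u, hu, h2⟩ | ⟨h, u, hu, h2⟩)
    · exact ⟨h, u, Or.inl hu, h2⟩
    · exact ⟨h, u, Or.inr hu, h2⟩

lemma nbF_inter (G : SimpleGraph V) (F A B : Finset V) :
    nbF G F (A ∩ B) ⊆ nbF G F A ∩ nbF G F B := by
  intro x; simp only [nbF, Finset.mem_filter, Finset.mem_inter]
  rintro ⟨h, u, ⟨h1, h2⟩, h3⟩
  exact ⟨⟨h, u, h1, h3⟩, ⟨h, u, h2, h3⟩⟩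

/-- Sub-configurations of good configurations are good. -/
lemma Good.mono {G : SimpleGraph V} {s : ℕ} {R Y Z : Finset V} {p : V → V}
    (h : Good G s R Y p) (hZ : Z ⊆ Y) (hpar : ∀ z ∈ Z, p z ∉ R \ Z) : Good G s R Z p := by
  refine ⟨hZ.trans h.sub, fun y hy => h.adj y (hZ hy), hpar, fun U hU => ?_⟩
  refine (h.exp U hU).trans ?_
  have e1 : (Y.filter (fun y => p y ∈ U)).card =
      (Z.filter (fun y => p y ∈ U)).card + ((Y \ Z).filter (fun y => p y ∈ U)).card := by
    rw [← Finset.card_union_of_disjoint]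
    · rw [← Finset.filter_union, Finset.union_sdiff_of_subset hZ]
    · exact Finset.disjoint_filter_filter Finset.disjoint_sdiff
  have e2 : (nbF G (R \ Y) U).card + ((Y \ Z).filter (fun y => p y ∈ U)).card ≤
      (nbF G (R \ Z) U).card := by
    rw [← Finset.card_union_of_disjoint]
    · apply Finset.card_le_card
      intro x hx
      simp only [nbF, Finset.mem_union, Finset.mem_filter, Finset.mem_sdiff] at hx ⊢
      rcases hx with ⟨⟨h1, h2⟩, h3⟩ | ⟨⟨h1, h2⟩, h3⟩
      · exact ⟨⟨h1, fun h => h2 (hZ h)⟩, h3⟩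
      · exact ⟨⟨h.sub h1, h2⟩, _, h3, h.adj x h1⟩
    · rw [Finset.disjoint_left]
      intro x hx hx2
      simp only [nbF, Finset.mem_filter, Finset.mem_sdiff] at hx hx2
      exact hx.1.2 hx2.1.1
  omega

lemma cc_insert {p : V → V} {Y : Finset V} {y v : V} (hy : y ∉ Y) (w : V) :
    cc (Function.update p y v) (insert y Y) w = cc p Y w + if w = v then 1 else 0 := by
  unfold cc
  have e : Y.filter (fun z => Function.update p y v z = w) = Y.filter (fun z => p z = w) := by
    apply Finset.filter_congr
    intro x hx
    rw [Function.update_of_ne]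
    rintro rfl; exact hy hx
  rw [Finset.filter_insert, e]
  by_cases hw : w = v
  · subst hw
    simp [hy]
  · have : ¬ v = w := fun h => hw h.symm
    simp [hw, this]

lemma Good.extend {G : SimpleGraph V} {s : ℕ} {R Y : Finset V} {p : V → V}
    (h : Good G s R Y p) (hJ : Joined G s) (hs : 1 ≤ s) (hroom : 9 * s < (R \ Y).card)
    {v : V} (hv : v ∉ R \ Y) (hc : cc p Y v < 4) :
    ∃ y ∈ R \ Y, G.Adj v y ∧ Good G s R (insert y Y) (Function.update p y v) := by
  by_contra hcon
  push Not at hcon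
  set g : Finset V → ℕ := fun U =>
    (nbF G (R \ Y) U).card + (Y.filter (fun y => p y ∈ U)).card with hg
  have hexp : ∀ U : Finset V, U.card ≤ 2 * s → 4 * U.card ≤ g U := h.exp
  -- critical sets are small
  have hsmall : ∀ U : Finset V, U.card ≤ 2 * s → g U ≤ 4 * U.card → U.card < s := by
    intro U hU hgU
    by_contra hlt
    push Not at hlt
    have h1 : ((R \ Y) \ nbF G (R \ Y) U).card < s := by
      by_contra hge
      push Not at hge
      obtain ⟨a, ha, b, hb, hab⟩ := hJ U _ hlt hge
      simp only [nbF, Finset.mem_sdiff, Finset.mem_filter, not_and] at hb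
      exact hb.2 hb.1 ⟨a, ha, hab⟩
    have h2 : (R \ Y).card = ((R \ Y) \ nbF G (R \ Y) U).card + (nbF G (R \ Y) U).card := by
      rw [Finset.card_sdiff_add_card_eq_card]
      exact Finset.filter_subset _ _
    simp only [hg] at hgU
    omega
  -- unions
  have hunion : ∀ A B : Finset V, A.card ≤ 2 * s → B.card ≤ 2 * s → g A ≤ 4 * A.card →
      g B ≤ 4 * B.card → (A ∪ B).card ≤ 2 * s ∧ g (A ∪ B) ≤ 4 * (A ∪ B).card := by
    intro A B hA hB hgA hgB
    have a1 := hsmall A hA hgA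
    have b1 := hsmall B hB hgB
    have c1 := Finset.card_union_add_card_inter A B
    refine ⟨by omega, ?_⟩
    have i1 : 4 * (A ∩ B).card ≤ g (A ∩ B) := hexp _ (by omega)
    have s1 : g (A ∪ B) + g (A ∩ B) ≤ g A + g B := by
      simp only [hg]
      have n1 := Finset.card_union_add_card_inter (nbF G (R \ Y) A) (nbF G (R \ Y) B)
      rw [← nbF_union] at n1
      have n2 := Finset.card_le_card (nbF_inter G (R \ Y) A B)
      have m1 := Finset.card_union_add_card_inter (Y.filter (fun y => p y ∈ A))
        (Y.filter (fun y => p y ∈ B))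
      rw [← Finset.filter_or, ← Finset.filter_and] at m1
      simp only [Finset.mem_union, Finset.mem_inter]
      omega
    omega
  -- witnesses
  have hwit : ∀ y ∈ nbF G (R \ Y) {v}, ∃ U : Finset V, U.card ≤ 2 * s ∧ g U ≤ 4 * U.card ∧
      v ∉ U ∧ y ∈ nbF G (R \ Y) U := by
    intro y hy
    simp only [nbF, Finset.mem_filter, Finset.mem_singleton, exists_eq_left] at hy
    have hng := hcon y hy.1 hy.2
    have hyR : y ∈ R ∧ y ∉ Y := by simpa using hy.1
    by_contra hno
    push Not at hno
    apply hng
    refine ⟨?_, ?_, ?_, ?_⟩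
    · intro x hx
      rcases Finset.mem_insert.1 hx with rfl | hx
      · exact hyR.1
      · exact h.sub hx
    · intro x hx
      rcases Finset.mem_insert.1 hx with rfl | hx'
      · simpa using hy.2
      · rw [Function.update_of_ne]
        · exact h.adj x hx'
        · rintro rfl; exact hyR.2 hx'
    · intro x hx
      rcases Finset.mem_insert.1 hx with rfl | hx'
      · rw [Function.update_self]
        intro h'
        apply hv
        simp only [Finset.mem_sdiff, Finset.mem_insert, not_or] at h' ⊢
        exact ⟨h'.1, h'.2.2⟩
      · rw [Function.update_of_ne]
        · intro h'
          apply h.par x hx'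
          simp only [Finset.mem_sdiff, Finset.mem_insert, not_or] at h' ⊢
          exact ⟨h'.1, h'.2.2⟩
        · rintro rfl; exact hyR.2 hx'
    · intro U hU
      have k1 := hexp U hU
      have k2 := hno U hU
      have e1 : ((insert y Y).filter (fun z => Function.update p y v z ∈ U)).card =
          (Y.filter (fun z => p z ∈ U)).card + if v ∈ U then 1 else 0 := by
        have e : Y.filter (fun z => Function.update p y v z ∈ U) =
            Y.filter (fun z => p z ∈ U) := by
          apply Finset.filter_congr
          intro x hx
          rw [Function.update_of_ne]
          rintro rfl; exact hyR.2 hx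
        rw [Finset.filter_insert, e]
        by_cases hw : v ∈ U
        · simp [hw, hyR.2]
        · simp [hw]
      have e2 : nbF G (R \ insert y Y) U = (nbF G (R \ Y) U).erase y := by
        ext x
        simp only [nbF, Finset.mem_filter, Finset.mem_sdiff, Finset.mem_insert, Finset.mem_erase]
        tauto
      rw [e1, e2]
      have e3 : (nbF G (R \ Y) U).card - 1 ≤ ((nbF G (R \ Y) U).erase y).card :=
        Finset.pred_card_le_card_erase
      simp only [hg] at k1 k2
      by_cases hvU : v ∈ U
      · simp only [hvU, if_true]; omega
      · simp only [hvU, if_false]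
        by_cases hyU : y ∈ nbF G (R \ Y) U
        · have : ¬ (nbF G (R \ Y) U).card + (Y.filter (fun y => p y ∈ U)).card ≤ 4 * U.card :=
            fun hle => k2 hle hvU hyU
          omega
        · rw [Finset.erase_eq_of_notMem hyU]; omega
  have hall : ∀ T : Finset V, T ⊆ nbF G (R \ Y) {v} → ∃ U : Finset V, U.card ≤ 2 * s ∧
      g U ≤ 4 * U.card ∧ v ∉ U ∧ T ⊆ nbF G (R \ Y) U := by
    intro T
    induction T using Finset.induction_on with
    | empty => intro _; exact ⟨∅, by simp, by simp [hg, nbF], by simp, by simp⟩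
    | insert y T hyT ih =>
      intro hT
      obtain ⟨U1, a1, a2, a3, a4⟩ := ih (fun x hx => hT (Finset.mem_insert_of_mem hx))
      obtain ⟨U2, b1, b2, b3, b4⟩ := hwit y (hT (Finset.mem_insert_self _ _))
      obtain ⟨c1, c2⟩ := hunion U1 U2 a1 b1 a2 b2
      refine ⟨U1 ∪ U2, c1, c2, by simp [a3, b3], ?_⟩
      rw [nbF_union]
      intro x hx
      rcases Finset.mem_insert.1 hx with rfl | hx
      · exact Finset.mem_union_right _ b4
      · exact Finset.mem_union_left _ (a4 hx)
  obtain ⟨U, u1, u2, u3, u4⟩ := hall _ subset_rfl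
  have u5 := hsmall U u1 u2
  have hcard : (insert v U).card = U.card + 1 := Finset.card_insert_of_notMem u3
  have k := hexp (insert v U) (by omega)
  have e1 : nbF G (R \ Y) (insert v U) = nbF G (R \ Y) U := by
    rw [Finset.insert_eq, nbF_union]
    exact Finset.union_eq_right.2 u4
  have e2 : (Y.filter (fun y => p y ∈ insert v U)).card ≤
      cc p Y v + (Y.filter (fun y => p y ∈ U)).card := by
    unfold cc
    refine le_trans (Finset.card_le_card ?_) (Finset.card_union_le _ _)
    intro x hx
    simp only [Finset.mem_filter, Finset.mem_insert, Finset.mem_union] at hx ⊢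
    tauto
  simp only [hg, e1] at k u2
  omega

end Crown

open scoped Classical
namespace Crown
variable {V : Type*} [DecidableEq V]

lemma Good.level {G : SimpleGraph V} {s : ℕ} {R : Finset V} (hJ : Joined G s) (hs : 1 ≤ s)
    (A : Finset V) : ∀ {Y : Finset V} {p : V → V}, Good G s R Y p →
    (∀ a ∈ A, a ∉ R \ Y) → (∀ a ∈ A, cc p Y a ≤ 2) → 9 * s + 2 * A.card < (R \ Y).card →
    ∃ (B : Finset V) (q : V → V), Good G s R (Y ∪ B) q ∧ B ⊆ R \ Y ∧ B.card = 2 * A.card ∧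
      (∀ y ∈ Y, q y = p y) ∧ (∀ b ∈ B, q b ∈ A) ∧
      (∀ v ∈ A, cc q (Y ∪ B) v ≤ cc p Y v + 2) ∧
      (∀ v, v ∉ A → cc q (Y ∪ B) v = cc p Y v) := by
  induction A using Finset.induction_on with
  | empty =>
    intro Y p h _ _ _
    exact ⟨∅, p, by simpa using h, by simp, by simp, by simp, by simp, by simp, by simp⟩
  | insert a A ha ih =>
    intro Y p h hA hc hroom
    rw [Finset.card_insert_of_notMem ha] at hroom
    have hca := hc a (Finset.mem_insert_self _ _)
    have haR := hA a (Finset.mem_insert_self _ _)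
    obtain ⟨y1, hy1, adj1, h1⟩ := h.extend hJ hs (by omega) haR (by omega)
    have hy1Y : y1 ∉ Y := (Finset.mem_sdiff.1 hy1).2
    have sub1 : R \ insert y1 Y ⊆ R \ Y :=
      Finset.sdiff_subset_sdiff subset_rfl (Finset.subset_insert _ _)
    have card1 : (R \ insert y1 Y).card + 1 = (R \ Y).card := by
      rw [Finset.sdiff_insert]
      exact Finset.card_erase_add_one hy1
    have cc1 := fun w => cc_insert (p := p) (v := a) hy1Y w
    obtain ⟨y2, hy2, adj2, h2⟩ := h1.extend hJ hs (by omega) (fun hh => haR (sub1 hh))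
      (by rw [cc1]; simp; omega)
    have hy2Y : y2 ∉ insert y1 Y := (Finset.mem_sdiff.1 hy2).2
    have sub2 : R \ insert y2 (insert y1 Y) ⊆ R \ insert y1 Y :=
      Finset.sdiff_subset_sdiff subset_rfl (Finset.subset_insert _ _)
    have card2 : (R \ insert y2 (insert y1 Y)).card + 1 = (R \ insert y1 Y).card := by
      rw [Finset.sdiff_insert]
      exact Finset.card_erase_add_one hy2
    set p1 := Function.update p y1 a with hp1
    set p2 := Function.update p1 y2 a with hp2
    have cc2 := fun w => cc_insert (p := p1) (v := a) hy2Y w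
    have cc3 : ∀ w, cc p2 (insert y2 (insert y1 Y)) w =
        cc p Y w + (if w = a then 1 else 0) + (if w = a then 1 else 0) := by
      intro w; rw [hp2, cc2, cc1]
    obtain ⟨B, q, g, b1, b2, b3, b4, b5, b6⟩ := ih h2
      (fun x hx hh => hA x (Finset.mem_insert_of_mem hx) (sub1 (sub2 hh)))
      (fun x hx => by
        have : x ≠ a := by rintro rfl; exact ha hx
        rw [cc3]; simp only [this, if_false]
        exact hc x (Finset.mem_insert_of_mem hx)) (by omega)
    have hY : insert y2 (insert y1 Y) ∪ B = Y ∪ insert y2 (insert y1 B) := by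
      ext x; simp only [Finset.mem_union, Finset.mem_insert]; tauto
    have hy12 : y1 ≠ y2 := by rintro rfl; exact hy2Y (Finset.mem_insert_self _ _)
    have hq1 : q y1 = a := by
      rw [b3 y1 (by simp), hp2, Function.update_of_ne hy12, hp1, Function.update_self]
    have hq2 : q y2 = a := by
      rw [b3 y2 (by simp), hp2, Function.update_self]
    have hB1 : y1 ∉ B := fun hh => (Finset.mem_sdiff.1 (b1 hh)).2 (by simp)
    have hB2 : y2 ∉ insert y1 B := by
      simp only [Finset.mem_insert, not_or]
      exact ⟨hy12.symm, fun hh => (Finset.mem_sdiff.1 (b1 hh)).2 (by simp)⟩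
    rw [hY] at g b5 b6
    refine ⟨insert y2 (insert y1 B), q, g, ?_, ?_, ?_, ?_, ?_, ?_⟩
    · intro x hx
      simp only [Finset.mem_insert] at hx
      rcases hx with rfl | rfl | hx
      · exact sub1 hy2
      · exact hy1
      · exact sub1 (sub2 (b1 hx))
    · rw [Finset.card_insert_of_notMem hB2, Finset.card_insert_of_notMem hB1,
        Finset.card_insert_of_notMem ha, b2]; ring
    · intro y hy
      rw [b3 y (by simp [hy]), hp2, Function.update_of_ne, hp1, Function.update_of_ne]
      · rintro rfl; exact hy1Y hy
      · rintro rfl; exact hy2Y (by simp [hy])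
    · intro b hb
      simp only [Finset.mem_insert] at hb
      rcases hb with rfl | rfl | hb
      · simp [hq2]
      · simp [hq1]
      · exact Finset.mem_insert_of_mem (b4 b hb)
    · intro v hv
      rcases Finset.mem_insert.1 hv with rfl | hv'
      · rw [b6 v ha, cc3]; simp
      · have : v ≠ a := by rintro rfl; exact ha hv'
        have := b5 v hv'
        rw [cc3] at this; simpa [*] using this
    · intro v hv
      simp only [Finset.mem_insert, not_or] at hv
      rw [b6 v hv.2, cc3]; simp [hv.1]

lemma Good.grow {G : SimpleGraph V} {s : ℕ} {R : Finset V} (hJ : Joined G s) (hs : 1 ≤ s)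
    (h : ℕ) : ∀ {A : Finset V} {Y : Finset V} {p : V → V}, Good G s R Y p →
    (∀ a ∈ A, a ∉ R \ Y) → (∀ a ∈ A, cc p Y a ≤ 2) →
    9 * s + 2 ^ (h + 1) * A.card < (R \ Y).card + 2 * A.card →
    ∃ (Y' L : Finset V) (q : V → V), Good G s R Y' q ∧ Y ⊆ Y' ∧
      (R \ Y).card + 2 * A.card ≤ (R \ Y').card + 2 ^ (h + 1) * A.card ∧
      L.card = 2 ^ h * A.card ∧
      (∀ y ∈ Y, q y = p y) ∧
      (∀ v ∈ A, cc q Y' v ≤ cc p Y v + 2) ∧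
      (∀ v, v ∉ A → v ∉ R \ Y → cc q Y' v = cc p Y v) ∧
      ∀ b ∈ L, ∃ a ∈ A, ∃ Z : List V, Z.length = h ∧ Z.Nodup ∧
        (∀ z ∈ Z, z ∈ Y' ∧ z ∈ R \ Y ∧ (q z = a ∨ q z ∈ Z)) ∧ List.IsChain G.Adj (a :: Z) ∧
        (a :: Z).getLast? = some b := by
  induction h with
  | zero =>
    intro A Y p g _ _ _
    refine ⟨Y, A, p, g, subset_rfl, by omega, by simp, by simp, by simp, by simp, ?_⟩
    intro b hb
    exact ⟨b, hb, [], by simp⟩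
  | succ h ih =>
    intro A Y p g hA hc hroom
    have hpow : 2 ≤ 2 ^ (h + 1) := by
      rw [pow_succ]; have := Nat.one_le_two_pow (n := h); omega
    have e1 : 2 ^ (h + 1 + 1) * A.card = 2 ^ (h + 1) * (2 * A.card) := by ring
    have e2 : 2 * (2 * A.card) ≤ 2 ^ (h + 1) * (2 * A.card) := Nat.mul_le_mul_right _ hpow
    obtain ⟨B, q, g1, b1, b2, b3, b4, b5, b6⟩ := g.level hJ hs A hA hc (by omega)
    have card1 : (R \ (Y ∪ B)).card + 2 * A.card = (R \ Y).card := by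
      have e3 : R \ (Y ∪ B) = (R \ Y) \ B := by
        ext x; simp only [Finset.mem_sdiff, Finset.mem_union]; tauto
      rw [← b2, e3, Finset.card_sdiff_add_card_eq_card b1]
    have hBc : ∀ b ∈ B, cc q (Y ∪ B) b = 0 := by
      intro b hb
      unfold cc
      rw [Finset.card_eq_zero, Finset.filter_eq_empty_iff]
      intro x hx hxb
      subst hxb
      rcases Finset.mem_union.1 hx with hx | hx
      · rw [b3 x hx] at hb
        exact g.par x hx (b1 hb)
      · exact hA _ (b4 x hx) (b1 hb)
    obtain ⟨Y', L, r, g2, c1, c2, c3, c4, c5, c6, c7⟩ := ih (A := B) g1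
      (fun b hb hh => (Finset.mem_sdiff.1 hh).2 (Finset.mem_union_right _ hb))
      (fun b hb => by rw [hBc b hb]; omega) (by rw [b2]; omega)
    rw [b2] at c2 c3
    have hsub : R \ (Y ∪ B) ⊆ R \ Y :=
      Finset.sdiff_subset_sdiff subset_rfl Finset.subset_union_left
    refine ⟨Y', L, r, g2, Finset.subset_union_left.trans c1, by omega, by rw [c3]; ring, ?_, ?_,
      ?_, ?_⟩
    · intro y hy
      rw [c4 y (Finset.mem_union_left _ hy), b3 y hy]
    · intro v hv
      rw [c6 v (fun hh => hA v hv (b1 hh)) (fun hh => hA v hv (hsub hh))]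
      exact b5 v hv
    · intro v hv hvR
      rw [c6 v (fun hh => hvR (b1 hh)) (fun hh => hvR (hsub hh))]
      exact b6 v hv
    · intro b hb
      obtain ⟨b0, hb0, Z, z1, z2, z3, z4, z5⟩ := c7 b hb
      have hrb : r b0 = q b0 := c4 b0 (Finset.mem_union_right _ hb0)
      refine ⟨q b0, b4 b0 hb0, b0 :: Z, by simp [z1], ?_, ?_, ?_, ?_⟩
      · refine List.nodup_cons.2 ⟨fun hh => ?_, z2⟩
        exact (Finset.mem_sdiff.1 (z3 b0 hh).2.1).2 (Finset.mem_union_right _ hb0)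
      · intro z hz
        rcases List.mem_cons.1 hz with rfl | hz
        · exact ⟨c1 (Finset.mem_union_right _ hb0), b1 hb0, Or.inl hrb⟩
        · refine ⟨(z3 z hz).1, hsub (z3 z hz).2.1, Or.inr ?_⟩
          rcases (z3 z hz).2.2 with h | h
          · rw [h]; simp
          · exact List.mem_cons_of_mem _ h
      · refine List.isChain_cons_cons.2 ⟨?_, z4⟩
        have := g1.adj b0 (Finset.mem_union_right _ hb0)
        exact this
      · rw [List.getLast?_cons_cons]; exact z5

lemma cc_mono {p : V → V} {Y Y' : Finset V} (h : Y ⊆ Y') (v : V) : cc p Y v ≤ cc p Y' v :=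
  Finset.card_le_card (Finset.filter_subset_filter _ h)

lemma Good.link {G : SimpleGraph V} {s : ℕ} {R : Finset V} (hJ : Joined G s) (hs : 1 ≤ s)
    {h k : ℕ} {A B : Finset V} {Y : Finset V} {p : V → V} (g : Good G s R Y p)
    (hA : ∀ a ∈ A, a ∉ R \ Y) (hAc : ∀ a ∈ A, cc p Y a ≤ 2)
    (hB : ∀ a ∈ B, a ∉ R \ Y) (hBc : ∀ a ∈ B, cc p Y a ≤ 2) (hAB : Disjoint A B)
    (hAk : A.card = k) (hBk : B.card = k) (hk : s ≤ 2 ^ h * k)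
    (hroom : 9 * s + 2 * (2 ^ (h + 1) * k) < (R \ Y).card + 4 * k) :
    ∃ a ∈ A, ∃ b ∈ B, ∃ (Z : List V) (q : V → V), Z.length = 2 * h ∧ Z.Nodup ∧
      (∀ z ∈ Z, z ∈ R \ Y) ∧ List.IsChain G.Adj (a :: (Z ++ [b])) ∧
      Good G s R (Y ∪ Z.toFinset) q ∧ cc q (Y ∪ Z.toFinset) a ≤ cc p Y a + 2 ∧
      cc q (Y ∪ Z.toFinset) b ≤ cc p Y b + 2 ∧
      (∀ v, v ≠ a → v ≠ b → v ∉ Z → cc q (Y ∪ Z.toFinset) v = cc p Y v) := by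
  have hpow : 2 ≤ 2 ^ (h + 1) := by
    rw [pow_succ]; have := Nat.one_le_two_pow (n := h); omega
  have hk2 : 2 * k ≤ 2 ^ (h + 1) * k := Nat.mul_le_mul_right _ hpow
  obtain ⟨Y1, L1, q1, g1, a1, a2, a3, a4, a5, a6, a7⟩ := g.grow hJ hs h hA hAc (by rw [hAk]; omega)
  have hsub : R \ Y1 ⊆ R \ Y := Finset.sdiff_subset_sdiff subset_rfl a1
  have hBA : ∀ b ∈ B, b ∉ A := fun b hb ha => Finset.disjoint_left.1 hAB ha hb
  obtain ⟨Y2, L2, q2, g2, b1, b2, b3, b4, b5, b6, b7⟩ := g1.grow hJ hs h (A := B)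
    (fun b hb hh => hB b hb (hsub hh))
    (fun b hb => by rw [a6 b (hBA b hb) (hB b hb)]; exact hBc b hb)
    (by rw [hBk]; rw [hAk] at a2; omega)
  obtain ⟨x, hx, y, hy, hxy⟩ := hJ L1 L2 (by rw [a3, hAk]; exact hk) (by rw [b3, hBk]; exact hk)
  obtain ⟨a, ha, ZA, u1, u2, u3, u4, u5⟩ := a7 x hx
  obtain ⟨b, hb, ZB, w1, w2, w3, w4, w5⟩ := b7 y hy
  have hab : a ∉ B := fun h => Finset.disjoint_left.1 hAB ha h
  have hmem : ∀ v, v ∈ Y ∪ (ZA ++ ZB.reverse).toFinset ↔ v ∈ Y ∨ v ∈ ZA ∨ v ∈ ZB := by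
    intro v; simp
  have hZAq : ∀ z ∈ ZA, q2 z = a ∨ q2 z ∈ ZA := by
    intro z hz
    rw [b4 z (u3 z hz).1]; exact (u3 z hz).2.2
  have hY12 : Y ∪ (ZA ++ ZB.reverse).toFinset ⊆ Y2 := by
    intro v hv
    rcases (hmem v).1 hv with h | h | h
    · exact b1 (a1 h)
    · exact b1 (u3 v h).1
    · exact (w3 v h).1
  have hqY : ∀ z ∈ Y, q2 z = p z := fun z hz => by rw [b4 z (a1 hz), a4 z hz]
  refine ⟨a, ha, b, hb, ZA ++ ZB.reverse, q2, ?_, ?_, ?_, ?_, ?_, ?_, ?_, ?_⟩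
  · simp [u1, w1]; ring
  · refine List.Nodup.append u2 (List.nodup_reverse.2 w2) ?_
    intro z hz hz2
    rw [List.mem_reverse] at hz2
    exact (Finset.mem_sdiff.1 (w3 z hz2).2.1).2 (u3 z hz).1
  · intro z hz
    simp only [List.mem_append, List.mem_reverse] at hz
    rcases hz with hz | hz
    · exact (u3 z hz).2.1
    · exact hsub (w3 z hz).2.1
  · have e : a :: (ZA ++ ZB.reverse ++ [b]) = (a :: ZA) ++ (b :: ZB).reverse := by simp
    rw [e]
    refine List.isChain_append.2 ⟨u4, ?_, ?_⟩
    · rw [List.isChain_reverse]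
      exact w4.imp (fun _ _ h => h.symm)
    · intro c hc d hd
      rw [u5] at hc
      rw [List.head?_reverse, w5] at hd
      simp only [Option.mem_def, Option.some.injEq] at hc hd
      subst hc; subst hd; exact hxy
  · refine g2.mono hY12 ?_
    intro z hz hh
    rw [Finset.mem_sdiff, hmem] at hh
    push Not at hh
    rcases (hmem z).1 hz with h | h | h
    · rw [hqY z h] at hh
      exact g.par z h (Finset.mem_sdiff.2 ⟨hh.1, hh.2.1⟩)
    · rcases hZAq z h with h' | h'
      · rw [h'] at hh; exact hA a ha (Finset.mem_sdiff.2 ⟨hh.1, hh.2.1⟩)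
      · exact hh.2.2.1 h'
    · rcases (w3 z h).2.2 with h' | h'
      · rw [h'] at hh; exact hB b hb (Finset.mem_sdiff.2 ⟨hh.1, hh.2.1⟩)
      · exact hh.2.2.2 h'
  · refine (cc_mono hY12 a).trans ?_
    rw [b6 a hab (fun hh => hA a ha (hsub hh))]
    exact a5 a ha
  · refine (cc_mono hY12 b).trans ((b5 b hb).trans ?_)
    rw [a6 b (hBA b hb) (hB b hb)]
  · intro v hva hvb hvZ
    simp only [List.mem_append, List.mem_reverse, not_or] at hvZ
    unfold cc
    congr 1
    ext z
    simp only [Finset.mem_filter, hmem]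
    constructor
    · rintro ⟨h | h | h, h2⟩
      · rw [hqY z h] at h2; exact ⟨h, h2⟩
      · exfalso
        rcases hZAq z h with h' | h'
        · exact hva (h2.symm.trans h')
        · rw [h2] at h'; exact hvZ.1 h'
      · exfalso
        rcases (w3 z h).2.2 with h' | h'
        · exact hvb (h2.symm.trans h')
        · rw [h2] at h'; exact hvZ.2 h'
    · rintro ⟨h, h2⟩
      exact ⟨Or.inl h, by rw [hqY z h]; exact h2⟩

/-- extend by a path of prescribed length -/
lemma Good.path {G : SimpleGraph V} {s : ℕ} {R : Finset V} (hJ : Joined G s) (hs : 1 ≤ s)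
    (t : ℕ) : ∀ {Y : Finset V} {p : V → V} {x : V}, Good G s R Y p →
    x ∉ R \ Y → cc p Y x ≤ 2 → 9 * s + t < (R \ Y).card →
    ∃ (Z : List V) (q : V → V) (x' : V), Z.length = t ∧ Z.Nodup ∧ (∀ z ∈ Z, z ∈ R \ Y) ∧
      List.IsChain G.Adj (x :: Z) ∧ (x :: Z).getLast? = some x' ∧
      Good G s R (Y ∪ Z.toFinset) q ∧ cc q (Y ∪ Z.toFinset) x' ≤ 2 ∧
      (∀ v, v ≠ x → v ∉ R \ Y → cc q (Y ∪ Z.toFinset) v = cc p Y v) := by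
  induction t with
  | zero =>
    intro Y p x g hx hc _
    refine ⟨[], p, x, by simp, by simp, by simp, by simp, by simp, by simpa using g, 
      by simpa using hc, by simp⟩
  | succ t ih =>
    intro Y p x g hx hc hroom
    obtain ⟨y, hy, adj, g1⟩ := g.extend hJ hs (by omega) hx (by omega)
    have hyY : y ∉ Y := (Finset.mem_sdiff.1 hy).2
    have sub1 : R \ insert y Y ⊆ R \ Y :=
      Finset.sdiff_subset_sdiff subset_rfl (Finset.subset_insert _ _)
    have card1 : (R \ insert y Y).card + 1 = (R \ Y).card := by
      rw [Finset.sdiff_insert]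
      exact Finset.card_erase_add_one hy
    have cc1 := fun w => cc_insert (p := p) (v := x) hyY w
    have hyx : y ≠ x := by rintro rfl; exact hx hy
    have hcy : cc p Y y = 0 := by
      unfold cc
      rw [Finset.card_eq_zero, Finset.filter_eq_empty_iff]
      intro z hz hzy
      exact g.par z hz (hzy ▸ hy)
    obtain ⟨Z, q, x', z1, z2, z3, z4, z5, z6, z7, z8⟩ := ih g1 (x := y) (by simp)
      (by rw [cc1]; simp [hyx, hcy]) (by omega)
    have e : insert y Y ∪ Z.toFinset = Y ∪ (y :: Z).toFinset := by
      ext v; simp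
    rw [e] at z6 z7 z8
    refine ⟨y :: Z, q, x', by simp [z1], ?_, ?_, ?_, ?_, z6, z7, ?_⟩
    · refine List.nodup_cons.2 ⟨fun hh => ?_, z2⟩
      exact (Finset.mem_sdiff.1 (z3 y hh)).2 (Finset.mem_insert_self _ _)
    · intro z hz
      rcases List.mem_cons.1 hz with rfl | hz
      · exact hy
      · exact sub1 (z3 z hz)
    · exact List.isChain_cons_cons.2 ⟨adj, z4⟩
    · rw [List.getLast?_cons_cons]; exact z5
    · intro v hvx hv
      rw [z8 v (by rintro rfl; exact hv hy) (fun hh => hv (sub1 hh)), cc1]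
      simp [hvx]

end Crown

open scoped Classical
namespace Crown
variable {V : Type*} [DecidableEq V]

/-- number of levels needed -/
def hk (s k : ℕ) : ℕ := ((Finset.range s).filter (fun j => 2 ^ j * k < s)).card

lemma hk_spec {s k : ℕ} (hk1 : 1 ≤ k) :
    s ≤ 2 ^ hk s k * k ∧ (hk s k = 0 ∨ 2 ^ hk s k * k < 2 * s) := by
  have hex : ∃ h, s ≤ 2 ^ h * k := by
    refine ⟨s, ?_⟩
    have := Nat.lt_two_pow_self (n := s)
    nlinarith
  have key : (Finset.range s).filter (fun j => 2 ^ j * k < s) = Finset.range (Nat.find hex) := by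
    ext j
    simp only [Finset.mem_filter, Finset.mem_range]
    constructor
    · rintro ⟨_, h⟩
      by_contra hlt
      push Not at hlt
      have h1 := Nat.find_spec hex
      have h2 : 2 ^ Nat.find hex ≤ 2 ^ j := Nat.pow_le_pow_right (by norm_num) hlt
      have := Nat.mul_le_mul_right k h2
      omega
    · intro h
      have h1 := Nat.find_min hex h
      push Not at h1
      refine ⟨?_, h1⟩
      have := Nat.lt_two_pow_self (n := j)
      nlinarith
  have e : hk s k = Nat.find hex := by
    unfold hk; rw [key, Finset.card_range]
  rw [e]
  refine ⟨Nat.find_spec hex, ?_⟩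
  rcases Nat.eq_zero_or_pos (Nat.find hex) with h | h
  · exact Or.inl h
  · right
    have h1 := Nat.find_min hex (m := Nat.find hex - 1) (by omega)
    push Not at h1
    obtain ⟨t, ht⟩ : ∃ t, Nat.find hex = t + 1 := ⟨Nat.find hex - 1, by omega⟩
    rw [ht] at h1 ⊢
    simp only [Nat.add_sub_cancel] at h1
    rw [pow_succ]; linarith

lemma sum_hk (s m : ℕ) : ∑ k ∈ Finset.range m, hk s (k + 1) ≤ 2 * s := by
  have h1 : ∀ k, hk s (k + 1) = ∑ j ∈ Finset.range s, if 2 ^ j * (k + 1) < s then 1 else 0 := by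
    intro k; unfold hk; rw [Finset.card_filter]
  simp_rw [h1]
  rw [Finset.sum_comm]
  have h2 : ∀ j ∈ Finset.range s, (∑ k ∈ Finset.range m, if 2 ^ j * (k + 1) < s then 1 else 0)
      ≤ s / 2 ^ j := by
    intro j _
    rw [← Finset.card_filter]
    calc _ ≤ (Finset.range (s / 2 ^ j)).card := by
          apply Finset.card_le_card
          intro k hk
          simp only [Finset.mem_filter, Finset.mem_range] at hk ⊢
          rw [Nat.lt_iff_add_one_le, Nat.le_div_iff_mul_le (by positivity)]
          rw [mul_comm]; exact hk.2.le
      _ = _ := Finset.card_range _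
  refine (Finset.sum_le_sum h2).trans ?_
  have := Nat.geom_sum_le (le_refl 2) s s
  simpa [mul_comm] using this

/-- total cost of the joining process -/
def Psi (s m : ℕ) : ℕ := ∑ i ∈ Finset.range m, 2 * hk s ((i + 2) / 2)

lemma Psi_le (s m : ℕ) : Psi s m ≤ 8 * s := by
  have h1 : ∀ m, ∑ i ∈ Finset.range (2 * m), 2 * hk s ((i + 2) / 2) =
      4 * ∑ k ∈ Finset.range m, hk s (k + 1) := by
    intro m
    induction m with
    | zero => simp
    | succ m ih =>
      rw [show 2 * (m + 1) = 2 * m + 1 + 1 by ring, Finset.sum_range_succ, Finset.sum_range_succ,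
        ih, Finset.sum_range_succ]
      have e1 : (2 * m + 2) / 2 = m + 1 := by omega
      have e2 : (2 * m + 1 + 2) / 2 = m + 1 := by omega
      rw [e1, e2]; ring
  have h2 : Psi s m ≤ ∑ i ∈ Finset.range (2 * m), 2 * hk s ((i + 2) / 2) := by
    unfold Psi
    apply Finset.sum_le_sum_of_subset
    intro x hx
    simp only [Finset.mem_range] at hx ⊢
    omega
  rw [h1] at h2
  have := sum_hk s m
  omega

/-- state of the joining process -/
structure St (G : SimpleGraph V) (s : ℕ) (R1 R : Finset V) (L : List (List V)) (Y : Finset V)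
    (p : V → V) : Prop where
  good : Good G s R Y p
  ne : ∀ l ∈ L, l ≠ []
  chain : ∀ l ∈ L, List.IsChain G.Adj l
  nodup : L.flatten.Nodup
  mem : ∀ v, v ∈ L.flatten ↔ v ∈ R1 ∨ v ∈ Y
  ends : ∀ l ∈ L, ∀ v, (l.head? = some v ∨ l.getLast? = some v) →
    v ∈ R1 ∧ cc p Y v ≤ 2 ∧ (l.length = 1 → cc p Y v = 0)

lemma nodup_map_of_flatten {f : List V → V} : ∀ {L : List (List V)}, L.flatten.Nodup →
    (∀ l ∈ L, f l ∈ l) → (L.map f).Nodup := by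
  intro L
  induction L with
  | nil => intro _ _; simp
  | cons l L ih =>
    intro h hf
    rw [List.flatten_cons, List.nodup_append'] at h
    rw [List.map_cons, List.nodup_cons]
    refine ⟨?_, ih h.2.1 (fun l' hl' => hf l' (List.mem_cons_of_mem _ hl'))⟩
    intro hm
    obtain ⟨l', hl', e⟩ := List.mem_map.1 hm
    refine h.2.2 (hf l (List.mem_cons_self)) ?_
    rw [← e]
    exact List.mem_flatten.2 ⟨l', hl', hf l' (List.mem_cons_of_mem _ hl')⟩

lemma single_of_head_last {l : List V} {v : V} (hn : l.Nodup) (h1 : l.head? = some v)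
    (h2 : l.getLast? = some v) : l.length = 1 := by
  cases l with
  | nil => simp at h1
  | cons a t =>
    cases t with
    | nil => simp
    | cons b t =>
      exfalso
      simp only [List.head?_cons, Option.some.injEq] at h1
      subst h1
      rw [List.getLast?_cons_cons] at h2
      exact (List.nodup_cons.1 hn).1 (List.mem_of_getLast? h2)

lemma St.perm {G : SimpleGraph V} {s : ℕ} {R1 R : Finset V} {L L' : List (List V)} {Y : Finset V}
    {p : V → V} (h : St G s R1 R L Y p) (hp : L.Perm L') : St G s R1 R L' Y p :=
  ⟨h.good, fun l hl => h.ne l (hp.mem_iff.2 hl), fun l hl => h.chain l (hp.mem_iff.2 hl),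
    (hp.flatten.nodup_iff).1 h.nodup, fun v => by rw [← h.mem v, hp.flatten.mem_iff],
    fun l hl => h.ends l (hp.mem_iff.2 hl)⟩

lemma St.merge {G : SimpleGraph V} {s : ℕ} {R1 R : Finset V} (hd : Disjoint R1 R)
    {l1 l2 : List V} {L : List (List V)} {Y : Finset V}
    {p q : V → V} (h : St G s R1 R (l1 :: l2 :: L) Y p) {a b : V} (ha : l1.getLast? = some a)
    (hb : l2.head? = some b) {Z : List V} (z2 : Z.Nodup)
    (z3 : ∀ z ∈ Z, z ∈ R \ Y) (z4 : List.IsChain G.Adj (a :: (Z ++ [b])))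
    (g : Good G s R (Y ∪ Z.toFinset) q) (z5 : cc q (Y ∪ Z.toFinset) a ≤ cc p Y a + 2)
    (z6 : cc q (Y ∪ Z.toFinset) b ≤ cc p Y b + 2)
    (z7 : ∀ v, v ≠ a → v ≠ b → v ∉ Z → cc q (Y ∪ Z.toFinset) v = cc p Y v) :
    St G s R1 R ((l1 ++ Z ++ l2) :: L) (Y ∪ Z.toFinset) q := by
  have nd := h.nodup
  have hZ1 : ∀ z ∈ Z, z ∉ (l1 :: l2 :: L).flatten := by
    intro z hz hm
    have := Finset.mem_sdiff.1 (z3 z hz)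
    rcases (h.mem z).1 hm with h' | h'
    · exact Finset.disjoint_left.1 hd h' this.1
    · exact this.2 h'
  simp only [List.flatten_cons, List.mem_append, not_or] at hZ1
  simp only [List.flatten_cons] at nd
  rw [List.nodup_append', List.nodup_append'] at nd
  obtain ⟨n1, ⟨n2, n3, n23⟩, n1'⟩ := nd
  have n12 : List.Disjoint l1 l2 := fun x hx hx' => n1' hx (List.mem_append_left _ hx')
  have n13 : List.Disjoint l1 L.flatten := fun x hx hx' => n1' hx (List.mem_append_right _ hx')
  have al : a ∈ l1 := List.mem_of_getLast? ha
  have bl : b ∈ l2 := List.mem_of_head? hb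
  have hne1 := h.ne l1 (by simp)
  have hne2 := h.ne l2 (by simp)
  refine ⟨g, ?_, ?_, ?_, ?_, ?_⟩
  · intro l hl
    rcases List.mem_cons.1 hl with rfl | hl
    · simp [hne1]
    · exact h.ne l (by simp [hl])
  · intro l hl
    rcases List.mem_cons.1 hl with rfl | hl
    · have c1 := h.chain l1 (by simp)
      have c2 := h.chain l2 (by simp)
      rw [List.append_assoc]
      refine List.isChain_append.2 ⟨c1, ?_, ?_⟩
      · refine List.isChain_append.2 ⟨?_, c2, ?_⟩
        · exact (List.isChain_append.1 (List.isChain_cons.1 z4).2).1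
        · have := (List.isChain_append.1 (List.isChain_cons.1 z4).2).2.2
          rw [hb]
          simpa using this
      · rw [ha]
        have := (List.isChain_cons.1 z4).1
        intro x hx y hy
        simp only [Option.mem_def, Option.some.injEq] at hx
        subst hx
        apply this
        rw [List.head?_append] at hy ⊢
        rw [hb] at hy
        simpa using hy
    · exact h.chain l (by simp [hl])
  · simp only [List.flatten_cons]
    rw [List.nodup_append', List.nodup_append', List.nodup_append']
    refine ⟨⟨⟨n1, z2, ?_⟩, n2, ?_⟩, n3, ?_⟩
    · intro x hx hx'; exact (hZ1 x hx').1 hx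
    · intro x hx hx'
      rcases List.mem_append.1 hx with hx | hx
      · exact n12 hx hx'
      · exact (hZ1 x hx).2.1 hx'
    · intro x hx hx'
      rcases List.mem_append.1 hx with hx | hx
      · rcases List.mem_append.1 hx with hx | hx
        · exact n13 hx hx'
        · exact (hZ1 x hx).2.2 hx'
      · exact n23 hx hx'
  · intro v
    have := h.mem v
    simp only [List.flatten_cons, List.mem_append] at this
    simp only [List.flatten_cons, List.mem_append, Finset.mem_union, List.mem_toFinset]
    tauto
  · intro l hl v hv
    rcases List.mem_cons.1 hl with rfl | hl
    · have hlen : (l1 ++ Z ++ l2).length ≠ 1 := by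
        have := List.length_pos_of_ne_nil hne1
        have := List.length_pos_of_ne_nil hne2
        simp only [List.length_append]; omega
      refine ⟨?_, ?_, fun hh => absurd hh hlen⟩
      · rcases hv with hv | hv
        · rw [List.append_assoc, List.head?_append_of_ne_nil _ hne1] at hv
          exact (h.ends l1 (by simp) v (Or.inl hv)).1
        · rw [List.getLast?_append_of_ne_nil _ hne2] at hv
          exact (h.ends l2 (by simp) v (Or.inr hv)).1
      · rcases hv with hv | hv
        · rw [List.append_assoc, List.head?_append_of_ne_nil _ hne1] at hv
          have e := h.ends l1 (by simp) v (Or.inl hv)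
          have vl : v ∈ l1 := List.mem_of_head? hv
          by_cases hva : v = a
          · subst hva
            have := e.2.2 (single_of_head_last n1 hv ha)
            omega
          · rw [z7 v hva (by rintro rfl; exact n12 vl bl) (fun hz => (hZ1 v hz).1 vl)]
            exact e.2.1
        · rw [List.getLast?_append_of_ne_nil _ hne2] at hv
          have e := h.ends l2 (by simp) v (Or.inr hv)
          have vl : v ∈ l2 := List.mem_of_getLast? hv
          by_cases hvb : v = b
          · subst hvb
            have := e.2.2 (single_of_head_last n2 hb hv)
            omega
          · rw [z7 v (by rintro rfl; exact n12 al vl) hvb (fun hz => (hZ1 v hz).2.1 vl)]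
            exact e.2.1
    · have vl : v ∈ l := by
        rcases hv with hv | hv
        · exact List.mem_of_head? hv
        · exact List.mem_of_getLast? hv
      have vf : v ∈ L.flatten := List.mem_flatten.2 ⟨l, hl, vl⟩
      rw [z7 v (by rintro rfl; exact n13 al vf) (by rintro rfl; exact n23 bl vf)
        (fun hz => (hZ1 v hz).2.2 vf)]
      exact h.ends l (by simp [hl]) v hv

lemma St.step {G : SimpleGraph V} {s : ℕ} {R1 R : Finset V} (hJ : Joined G s) (hs : 1 ≤ s)
    (hd : Disjoint R1 R) {L : List (List V)} {Y : Finset V} {p : V → V}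
    (h : St G s R1 R L Y p) {m : ℕ} (hL : L.length = m + 2) (hroom : 17 * s < (R \ Y).card) :
    ∃ (L' : List (List V)) (Y' : Finset V) (q : V → V), St G s R1 R L' Y' q ∧
      L'.length = m + 1 ∧ Y'.card ≤ Y.card + 2 * hk s ((m + 2) / 2) := by
  set k := (m + 2) / 2 with hkdef
  have hk1 : 1 ≤ k := by omega
  obtain ⟨sp1, sp2⟩ := hk_spec (s := s) hk1
  have hV : Nonempty V := by
    cases L with
    | nil => simp at hL
    | cons l L => exact ⟨l.head (h.ne l (by simp))⟩
  obtain ⟨v0⟩ := hV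
  let fl : List V → V := fun l => l.getLast?.getD v0
  let fh : List V → V := fun l => l.head?.getD v0
  have hfl : ∀ l ∈ L, l.getLast? = some (fl l) := by
    intro l hl
    have := h.ne l hl
    simp only [fl, List.getLast?_eq_some_getLast this, Option.getD_some]
  have hfh : ∀ l ∈ L, l.head? = some (fh l) := by
    intro l hl
    have := h.ne l hl
    simp only [fh, List.head?_eq_some_head this, Option.getD_some]
  set L1 := L.take k with hL1
  set L2 := (L.drop k).take k with hL2
  have hL12 : L = L1 ++ (L2 ++ (L.drop k).drop k) := by
    rw [hL2, List.take_append_drop, List.take_append_drop]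
  have m1 : ∀ l ∈ L1, l ∈ L := fun l hl => List.mem_of_mem_take hl
  have m2 : ∀ l ∈ L2, l ∈ L := fun l hl => List.mem_of_mem_drop (List.mem_of_mem_take hl)
  have nd := h.nodup
  rw [hL12, List.flatten_append, List.flatten_append, List.nodup_append', List.nodup_append'] at nd
  obtain ⟨n1, ⟨n2, _, _⟩, n12⟩ := nd
  have d12 : List.Disjoint L1.flatten L2.flatten :=
    fun x hx hx' => n12 hx (List.mem_append_left _ hx')
  set A := (L1.map fl).toFinset with hA
  set B := (L2.map fh).toFinset with hB
  have memA : ∀ a ∈ A, ∃ l ∈ L1, fl l = a := by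
    intro a ha; rw [hA, List.mem_toFinset] at ha; exact List.mem_map.1 ha
  have memB : ∀ a ∈ B, ∃ l ∈ L2, fh l = a := by
    intro a ha; rw [hB, List.mem_toFinset] at ha; exact List.mem_map.1 ha
  have cA : A.card = k := by
    rw [hA, List.toFinset_card_of_nodup (nodup_map_of_flatten n1
      (fun l hl => List.mem_of_getLast? (hfl l (m1 l hl)))), List.length_map, hL1,
      List.length_take]
    omega
  have cB : B.card = k := by
    rw [hB, List.toFinset_card_of_nodup (nodup_map_of_flatten n2
      (fun l hl => List.mem_of_head? (hfh l (m2 l hl)))), List.length_map, hL2,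
      List.length_take, List.length_drop]
    omega
  have dAB : Disjoint A B := by
    rw [Finset.disjoint_left]
    intro x hx hx'
    obtain ⟨l, hl, e⟩ := memA x hx
    obtain ⟨l', hl', e'⟩ := memB x hx'
    refine d12 (a := x) (List.mem_flatten.2 ⟨l, hl, ?_⟩) (List.mem_flatten.2 ⟨l', hl', ?_⟩)
    · rw [← e]; exact List.mem_of_getLast? (hfl l (m1 l hl))
    · rw [← e']; exact List.mem_of_head? (hfh l' (m2 l' hl'))
  have eA : ∀ a ∈ A, a ∈ R1 ∧ cc p Y a ≤ 2 := by
    intro a ha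
    obtain ⟨l, hl, e⟩ := memA a ha
    have := h.ends l (m1 l hl) a (Or.inr (e ▸ hfl l (m1 l hl)))
    exact ⟨this.1, this.2.1⟩
  have eB : ∀ a ∈ B, a ∈ R1 ∧ cc p Y a ≤ 2 := by
    intro a ha
    obtain ⟨l, hl, e⟩ := memB a ha
    have := h.ends l (m2 l hl) a (Or.inl (e ▸ hfh l (m2 l hl)))
    exact ⟨this.1, this.2.1⟩
  have hR1 : ∀ a ∈ R1, a ∉ R \ Y :=
    fun a ha hh => Finset.disjoint_left.1 hd ha (Finset.mem_sdiff.1 hh).1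
  obtain ⟨a, ha, b, hb, Z, q, z1, z2, z3, z4, g, z5, z6, z7⟩ := h.good.link hJ hs (h := hk s k)
    (fun a ha => hR1 a (eA a ha).1) (fun a ha => (eA a ha).2)
    (fun a ha => hR1 a (eB a ha).1) (fun a ha => (eB a ha).2) dAB cA cB sp1 (by
      rcases sp2 with h0 | h0
      · rw [h0]; omega
      · rw [pow_succ]
        have : 2 ^ hk s k * 2 * k = 2 * (2 ^ hk s k * k) := by ring
        omega)
  obtain ⟨l1, hl1, e1⟩ := memA a ha
  obtain ⟨l2, hl2, e2⟩ := memB b hb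
  obtain ⟨u1, w1, hs1⟩ := List.append_of_mem hl1
  obtain ⟨u2, w2, hs2⟩ := List.append_of_mem hl2
  set rest := u1 ++ w1 ++ (u2 ++ w2) ++ (L.drop k).drop k with hrest
  have hperm : L.Perm (l1 :: l2 :: rest) := by
    have p1 : L1.Perm (l1 :: (u1 ++ w1)) := by rw [hs1]; exact List.perm_middle
    have p2 : L2.Perm (l2 :: (u2 ++ w2)) := by rw [hs2]; exact List.perm_middle
    calc L = L1 ++ (L2 ++ (L.drop k).drop k) := hL12
      _ = (L1 ++ L2) ++ (L.drop k).drop k := by rw [List.append_assoc]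
      List.Perm _ ((l1 :: (u1 ++ w1)) ++ (l2 :: (u2 ++ w2)) ++ (L.drop k).drop k) :=
        (p1.append p2).append_right _
      List.Perm _ (l1 :: l2 :: rest) := by
        rw [hrest]
        simp only [List.cons_append]
        refine List.Perm.cons _ ?_
        rw [← List.cons_append]
        exact (List.perm_middle).append_right _
  have h' := h.perm hperm
  refine ⟨(l1 ++ Z ++ l2) :: rest, Y ∪ Z.toFinset, q,
    h'.merge hd (e1 ▸ hfl l1 (m1 l1 hl1)) (e2 ▸ hfh l2 (m2 l2 hl2)) z2 z3 z4 g z5 z6 z7, ?_, ?_⟩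
  · have := hperm.length_eq
    simp only [List.length_cons] at this ⊢
    omega
  · refine (Finset.card_union_le _ _).trans ?_
    have := List.toFinset_card_le Z
    omega

lemma St.joinAll {G : SimpleGraph V} {s : ℕ} {R1 R : Finset V} (hJ : Joined G s) (hs : 1 ≤ s)
    (hd : Disjoint R1 R) (hroom : 25 * s < R.card) (m : ℕ) : ∀ {L : List (List V)} {Y : Finset V}
    {p : V → V}, St G s R1 R L Y p → L.length = m + 1 → Y.card + Psi s m ≤ 8 * s →
    ∃ (P : List V) (Y' : Finset V) (q : V → V), St G s R1 R [P] Y' q ∧ Y'.card ≤ 8 * s := by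
  induction m with
  | zero =>
    intro L Y p h hL hY
    obtain ⟨P, rfl⟩ := List.length_eq_one_iff.1 hL
    exact ⟨P, Y, p, h, by omega⟩
  | succ m ih =>
    intro L Y p h hL hY
    have hc := Finset.le_card_sdiff Y R
    obtain ⟨L', Y', q, h', l', y'⟩ := h.step hJ hs hd hL (by omega)
    refine ih h' l' ?_
    unfold Psi at hY ⊢
    rw [Finset.sum_range_succ] at hY
    omega

end Crown

open scoped Classical
namespace Crown
variable {V : Type*} [DecidableEq V]

lemma exists_cycle_list {G : SimpleGraph V} {s : ℕ} {R1 R : Finset V} (hJ : Joined G s)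
    (hs : 1 ≤ s) (hd : Disjoint R1 R)
    (hexp : ∀ U : Finset V, U.card ≤ 2 * s → 4 * U.card ≤ (nbF G R U).card)
    (hroom : 25 * s < R.card) (h2 : 2 ≤ R1.card) {m : ℕ} (hm : R1.card + 10 * s ≤ m)
    (hroom2 : m + 20 * s < R1.card + R.card) :
    ∃ c : List V, c.length = m ∧ c.Nodup ∧ List.IsChain G.Adj c ∧
      (∀ x y, c.getLast? = some x → c.head? = some y → G.Adj x y) ∧
      (∀ v ∈ R1, v ∈ c) ∧ (∀ v ∈ c, v ∈ R1 ∨ v ∈ R) := by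
  have hfl : (R1.toList.map (fun v => [v])).flatten = R1.toList := by
    induction R1.toList with
    | nil => simp
    | cons a t ih => simp [ih]
  have g0 : Good G s R ∅ id := by
    refine ⟨by simp, by simp, by simp, ?_⟩
    intro U hU
    simpa using hexp U hU
  have st0 : St G s R1 R (R1.toList.map (fun v => [v])) ∅ id := by
    refine ⟨g0, ?_, ?_, ?_, ?_, ?_⟩
    · intro l hl; obtain ⟨v, _, rfl⟩ := List.mem_map.1 hl; simp
    · intro l hl; obtain ⟨v, _, rfl⟩ := List.mem_map.1 hl; simp
    · rw [hfl]; exact R1.nodup_toList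
    · intro v; rw [hfl]; simp
    · intro l hl v hv
      obtain ⟨w, hw, rfl⟩ := List.mem_map.1 hl
      have : w = v := by simpa using hv
      subst this
      exact ⟨by simpa using hw, by simp [cc], by simp [cc]⟩
  obtain ⟨P, Y, p, st, hY⟩ := st0.joinAll hJ hs hd hroom (R1.card - 1) (by simp; omega)
    (by simpa using Psi_le s _)
  have ndP : P.Nodup := by simpa using st.nodup
  have memP : ∀ v, v ∈ P ↔ v ∈ R1 ∨ v ∈ Y := by simpa using st.mem
  have hneP : P ≠ [] := st.ne P (by simp)
  have dY : Disjoint R1 Y := Finset.disjoint_of_subset_right st.good.sub hd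
  have lenP : P.length = R1.card + Y.card := by
    rw [← List.toFinset_card_of_nodup ndP, ← Finset.card_union_of_disjoint dY]
    congr 1; ext v; simp [memP]
  obtain ⟨x, hx⟩ : ∃ x, P.getLast? = some x := ⟨_, List.getLast?_eq_some_getLast hneP⟩
  obtain ⟨y, hy⟩ : ∃ y, P.head? = some y := ⟨_, List.head?_eq_some_head hneP⟩
  have ex := st.ends P (by simp) x (Or.inr hx)
  have ey := st.ends P (by simp) y (Or.inl hy)
  have hxy : x ≠ y := by
    rintro rfl
    have := single_of_head_last ndP hy hx
    omega
  have hR1 : ∀ a ∈ R1, a ∉ R \ Y :=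
    fun a ha hh => Finset.disjoint_left.1 hd ha (Finset.mem_sdiff.1 hh).1
  have hhs : hk s 1 ≤ s := by
    unfold hk
    exact (Finset.card_filter_le _ _).trans (by simp)
  obtain ⟨sp1, sp2⟩ := hk_spec (s := s) (le_refl 1)
  set h := hk s 1 with hh
  have hc := Finset.le_card_sdiff Y R
  obtain ⟨Z1, q1, x', a1, a2, a3, a4, a5, a6, a7, a8⟩ := st.good.path hJ hs
    (m - P.length - 2 * h) (hR1 x ex.1) ex.2.1 (by omega)
  set Y1 := Y ∪ Z1.toFinset with hY1
  have cY1 : Y1.card ≤ Y.card + (m - P.length - 2 * h) := by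
    refine (Finset.card_union_le _ _).trans ?_
    have := List.toFinset_card_le Z1
    omega
  have hc1 := Finset.le_card_sdiff Y1 R
  have hsub1 : R \ Y1 ⊆ R \ Y := Finset.sdiff_subset_sdiff subset_rfl Finset.subset_union_left
  have hx'mem : x' = x ∨ x' ∈ Z1 := by
    have := List.mem_of_getLast? a5
    simpa using this
  have hyZ1 : y ∉ Z1 := fun hz => hR1 y ey.1 (a3 y hz)
  have hx'y : x' ≠ y := by
    rcases hx'mem with h | h
    · rw [h]; exact hxy
    · rintro rfl; exact hyZ1 h
  obtain ⟨a, ha, b, hb, Z2, q2, b1, b2, b3, b4, -⟩ := a6.link hJ hs (h := h) (k := 1)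
    (A := {x'}) (B := {y}) (by
      simp only [Finset.mem_singleton, forall_eq]
      rcases hx'mem with h | h
      · rw [h]; exact fun hh => hR1 x ex.1 (hsub1 hh)
      · exact fun hh => (Finset.mem_sdiff.1 hh).2 (by simp [hY1, h])) (by simpa using a7)
    (by simpa using fun hh : y ∈ R => absurd hh (Finset.disjoint_left.1 hd ey.1))
    (by
      simp only [Finset.mem_singleton, forall_eq]
      rw [a8 y hxy.symm (hR1 y ey.1)]; exact ey.2.1)
    (by simpa using hx'y) (by simp) (by simp) sp1 (by
      rcases sp2 with h0 | h0
      · rw [h0]; omega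
      · rw [pow_succ]; omega)
  rw [Finset.mem_singleton] at ha hb
  subst ha; subst hb
  have hZ1P : ∀ z ∈ Z1, z ∉ P := by
    intro z hz hzP
    have := a3 z hz
    rcases (memP z).1 hzP with h | h
    · exact hR1 z h this
    · exact (Finset.mem_sdiff.1 this).2 h
  have hZ2P : ∀ z ∈ Z2, z ∉ P ∧ z ∉ Z1 := by
    intro z hz
    have := b3 z hz
    refine ⟨fun hzP => ?_, fun hzZ => ?_⟩
    · rcases (memP z).1 hzP with h | h
      · exact hR1 z h (hsub1 this)
      · exact (Finset.mem_sdiff.1 (hsub1 this)).2 h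
    · exact (Finset.mem_sdiff.1 this).2 (by simp [hY1, hzZ])
  have lastPZ : (P ++ Z1).getLast? = some a := by
    rw [List.getLast?_append, hx]
    rw [List.getLast?_cons] at a5
    cases hq : Z1.getLast? with
    | none => rw [hq] at a5; simpa using a5
    | some w => rw [hq] at a5; simpa using a5
  have b4' := List.isChain_cons.1 b4
  refine ⟨P ++ Z1 ++ Z2, ?_, ?_, ?_, ?_, ?_, ?_⟩
  · simp only [List.length_append]; omega
  · rw [List.nodup_append', List.nodup_append']
    refine ⟨⟨ndP, a2, fun z hz hz' => hZ1P z hz' hz⟩, b2, fun z hz hz' => ?_⟩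
    rcases List.mem_append.1 hz with h | h
    · exact (hZ2P z hz').1 h
    · exact (hZ2P z hz').2 h
  · refine List.isChain_append.2 ⟨List.isChain_append.2 ⟨st.chain P (by simp),
      (List.isChain_cons.1 a4).2, ?_⟩, (List.isChain_append.1 b4'.2).1, ?_⟩
    · rw [hx]
      intro u hu w hw
      simp only [Option.mem_def, Option.some.injEq] at hu
      subst hu
      exact (List.isChain_cons.1 a4).1 w hw
    · rw [lastPZ]
      intro u hu w hw
      simp only [Option.mem_def, Option.some.injEq] at hu
      subst hu
      apply b4'.1
      rw [List.head?_append, Option.mem_def.1 hw]; simp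
  · intro u w hu hw
    have hw' : w = b := by
      rw [List.append_assoc, List.head?_append_of_ne_nil _ hneP, hy] at hw
      simpa using hw.symm
    subst hw'
    cases hZ : Z2 with
    | nil =>
      subst hZ
      rw [List.append_nil, lastPZ] at hu
      simp only [Option.some.injEq] at hu
      subst hu
      apply b4'.1; simp
    | cons z t =>
      have hne : Z2 ≠ [] := by simp [hZ]
      rw [List.getLast?_append_of_ne_nil _ hne] at hu
      exact (List.isChain_append.1 b4'.2).2.2 u hu w (by simp)
  · intro v hv
    simp [(memP v).2 (Or.inl hv)]
  · intro v hv
    simp only [List.mem_append] at hv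
    rcases hv with (h | h) | h
    · rcases (memP v).1 h with h | h
      · exact Or.inl h
      · exact Or.inr (st.good.sub h)
    · exact Or.inr (Finset.mem_sdiff.1 (a3 v h)).1
    · exact Or.inr (Finset.mem_sdiff.1 (b3 v h)).1

end Crown

namespace Crown
open scoped Classical

theorem crown_of_list {n : ℕ} {G : SimpleGraph (Fin n)} {c : List (Fin n)} (h3 : 3 ≤ c.length)
    (hnd : c.Nodup) (hch : List.IsChain G.Adj c)
    (hcl : ∀ x y, c.getLast? = some x → c.head? = some y → G.Adj x y)
    (φ : Fin n → Fin n) (hφ : ∀ x, x ∉ c → φ x ∈ c ∧ G.Adj x (φ x))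
    (hinj : ∀ x y, x ∉ c → y ∉ c → φ x = φ y → x = y) :
    ContainsSpanningCrown n G (n - c.length) := by
  have hne : c ≠ [] := by rintro rfl; simp at h3
  set p := SimpleGraph.Walk.ofSupport c hne hch with hp
  have hadj : G.Adj (c.getLast hne) (c.head hne) :=
    hcl _ _ (List.getLast?_eq_some_getLast hne) (List.head?_eq_some_head hne)
  have hsup : p.support = c := by rw [hp, SimpleGraph.Walk.support_ofSupport]
  have hlen : p.length + 1 = c.length := by
    rw [← SimpleGraph.Walk.length_support, hsup]
  have hmem : ∀ x, x ∈ (SimpleGraph.Walk.cons hadj p).support ↔ x ∈ c := by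
    intro x
    rw [SimpleGraph.Walk.support_cons, hsup, List.mem_cons]
    constructor
    · rintro (rfl | h)
      · exact List.getLast_mem hne
      · exact h
    · exact Or.inr
  set O : Finset (Fin n) := Finset.univ \ c.toFinset with hO
  have hOm : ∀ x, x ∈ O ↔ x ∉ c := by intro x; simp [hO]
  have key : ∀ x y z, x ∉ c → y ∉ c → z ∈ s(x, φ x) → z ∈ s(y, φ y) → x = y := by
    intro x y z hx hy h1 h2
    rw [Sym2.mem_iff] at h1 h2
    rcases h1 with h1 | h1 <;> rcases h2 with h2 | h2
    · exact h1.symm.trans h2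
    · exact absurd ((h2.symm.trans h1) ▸ (hφ y hy).1) hx
    · exact absurd ((h1.symm.trans h2) ▸ (hφ x hx).1) hy
    · exact hinj x y hx hy (h1.symm.trans h2)
  refine ⟨_, SimpleGraph.Walk.cons hadj p, O.image (fun x => s(x, φ x)), ?_, ?_, ?_, ?_, ?_, ?_, ?_⟩
  · rw [SimpleGraph.Walk.isCycle_iff_isPath_tail_and_le_length]
    constructor
    · rw [SimpleGraph.Walk.isPath_def]
      simp only [SimpleGraph.Walk.tail_cons]
      simpa [hsup] using hnd
    · rw [SimpleGraph.Walk.length_cons, hlen]; exact h3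
  · rw [Finset.card_image_of_injOn]
    · rw [hO, Finset.card_sdiff_of_subset (Finset.subset_univ _), Finset.card_univ, Fintype.card_fin,
        List.toFinset_card_of_nodup hnd]
    · intro x hx y hy hxy
      have hx' := (hOm x).1 (Finset.mem_coe.1 hx)
      have hy' := (hOm y).1 (Finset.mem_coe.1 hy)
      refine key x y x hx' hy' (by simp) ?_
      have : s(x, φ x) = s(y, φ y) := hxy
      rw [← this]; simp
  · intro e he
    obtain ⟨x, hx, rfl⟩ := Finset.mem_image.1 he
    exact (hφ x ((hOm x).1 hx)).2
  · intro e he f hf hef z hz hz'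
    obtain ⟨x, hx, rfl⟩ := Finset.mem_image.1 he
    obtain ⟨y, hy, rfl⟩ := Finset.mem_image.1 hf
    apply hef
    rw [key x y z ((hOm x).1 hx) ((hOm y).1 hy) hz hz']
  · intro e he hce
    obtain ⟨x, hx, rfl⟩ := Finset.mem_image.1 he
    exact (hOm x).1 hx ((hmem x).1 (SimpleGraph.Walk.fst_mem_support_of_mem_edges _ hce))
  · intro e he
    obtain ⟨x, hx, rfl⟩ := Finset.mem_image.1 he
    have hx' := (hOm x).1 hx
    refine ⟨φ x, ⟨by simp, (hmem _).2 (hφ x hx').1⟩, ?_⟩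
    rintro y ⟨hy, hy'⟩
    rcases Sym2.mem_iff.1 hy with rfl | h
    · exact absurd ((hmem _).1 hy') hx'
    · exact h
  · intro x
    by_cases hx : x ∈ c
    · exact Or.inl ((hmem x).2 hx)
    · exact Or.inr ⟨_, Finset.mem_image_of_mem _ ((hOm x).2 hx), by simp⟩

/-- Hall step: a matching of the outside into the cycle. -/
theorem exists_matching {n : ℕ} {G : SimpleGraph (Fin n)} {s : ℕ} (hJ : Joined G s)
    (C : Finset (Fin n)) (hC : n ≤ 2 * C.card)
    (hout : ∀ X W : Finset (Fin n), X.Nonempty → (∀ x ∈ X, x ∉ C) →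
      (∀ x ∈ X, ∀ y ∈ C, G.Adj x y → y ∈ W) → W.card ≤ X.card → s ≤ X.card)
    (hin : ∀ X W : Finset (Fin n), X.Nonempty → (∀ x ∈ X, x ∈ C) →
      (∀ x ∈ X, ∀ y, y ∉ C → G.Adj x y → y ∈ W) → W.card ≤ X.card → s ≤ X.card) :
    ∃ φ : Fin n → Fin n, (∀ x, x ∉ C → φ x ∈ C ∧ G.Adj x (φ x)) ∧
      (∀ x y, x ∉ C → y ∉ C → φ x = φ y → x = y) := by
  let t : {x // x ∉ C} → Finset (Fin n) := fun x => C.filter (fun y => G.Adj x.1 y)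
  have hall : ∀ S : Finset {x // x ∉ C}, S.card ≤ (S.biUnion t).card := by
    intro S
    by_contra hlt
    push Not at hlt
    set X : Finset (Fin n) := S.map (Function.Embedding.subtype _) with hX
    have hXc : X.card = S.card := Finset.card_map _
    have hXm : ∀ x ∈ X, x ∉ C := by
      intro x hx
      obtain ⟨y, hy, rfl⟩ := Finset.mem_map.1 hx
      exact y.2
    set T := S.biUnion t with hT
    have hTC : T ⊆ C := by
      intro y hy
      obtain ⟨x, hx, hy⟩ := Finset.mem_biUnion.1 hy
      exact (Finset.mem_filter.1 hy).1
    have hXT : ∀ x ∈ X, ∀ y ∈ C, G.Adj x y → y ∈ T := by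
      intro x hx y hy hxy
      obtain ⟨z, hz, rfl⟩ := Finset.mem_map.1 hx
      exact Finset.mem_biUnion.2 ⟨z, hz, Finset.mem_filter.2 ⟨hy, hxy⟩⟩
    have hXs := hout X T (Finset.card_pos.1 (by omega)) hXm hXT (by omega)
    have hXsub : X ⊆ Cᶜ := fun x hx => Finset.mem_compl.2 (hXm x hx)
    have hc1 := Finset.card_compl C
    rw [Fintype.card_fin] at hc1
    have hc2 := Finset.card_le_card hXsub
    have hc3 := Finset.card_sdiff_of_subset hTC
    have hc4 := Finset.card_sdiff_of_subset hXsub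
    have hc5 := Finset.card_le_card hTC
    have hc6 : C.card ≤ n := by simpa using Finset.card_le_univ C
    have hs2 := hin (C \ T) (Cᶜ \ X) (Finset.card_pos.1 (by omega))
      (fun x hx => (Finset.mem_sdiff.1 hx).1)
      (by
        intro x hx y hy hxy
        refine Finset.mem_sdiff.2 ⟨Finset.mem_compl.2 hy, fun hyX => ?_⟩
        exact (Finset.mem_sdiff.1 hx).2 (hXT y hyX x (Finset.mem_sdiff.1 hx).1 hxy.symm)) (by omega)
    obtain ⟨a, ha, b, hb, hab⟩ := hJ X (C \ T) hXs hs2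
    exact (Finset.mem_sdiff.1 hb).2 (hXT a ha b (Finset.mem_sdiff.1 hb).1 hab)
  obtain ⟨f, hf, hft⟩ := (Finset.all_card_le_biUnion_card_iff_exists_injective t).1 hall
  refine ⟨fun x => if h : x ∉ C then f ⟨x, h⟩ else x, ?_, ?_⟩
  · intro x hx
    simp only [hx, not_false_eq_true, dite_true]
    have := Finset.mem_filter.1 (hft ⟨x, hx⟩)
    exact this
  · intro x y hx hy hxy
    simp only [hx, hy, not_false_eq_true, dite_true] at hxy
    exact congrArg Subtype.val (hf hxy)

end Crown

namespace Crown
open scoped Classical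

theorem joined_of_ndl {n d : ℕ} {lam : ℝ} {G : SimpleGraph (Fin n)} (hG : IsNDLGraph n G d lam)
    (hd : 0 < d) (hlam : lam ≤ 0.001 * d) (hn : 0 < n) : Joined G (n / 500 + 1) := by
  intro A B hA hB
  by_contra hcon
  push Not at hcon
  have hmix := mixing hG hd hlam A B
  have h0 : ∑ x ∈ A, ((B.filter (fun y => G.Adj x y)).card : ℝ) = 0 := by
    refine Finset.sum_eq_zero fun x hx => ?_
    rw [Finset.filter_false_of_mem (fun y hy => hcon x hx y hy)]
    simp
  rw [h0, zero_sub, abs_neg] at hmix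
  have hmix := (le_abs_self _).trans hmix
  have hs : n < 500 * (n / 500 + 1) := by omega
  have hA' : (n : ℝ) < 500 * A.card := by
    exact_mod_cast lt_of_lt_of_le hs (Nat.mul_le_mul_left _ hA)
  have hB' : (n : ℝ) < 500 * B.card := by
    exact_mod_cast lt_of_lt_of_le hs (Nat.mul_le_mul_left _ hB)
  have hn' : (0:ℝ) < n := by exact_mod_cast hn
  have hd' : (0:ℝ) < d := by exact_mod_cast hd
  set t := Real.sqrt ((A.card : ℝ) * B.card) with ht
  have ht2 : t * t = (A.card : ℝ) * B.card := Real.mul_self_sqrt (by positivity)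
  have ht0 : (n : ℝ) / 500 ≤ t := by
    apply Real.le_sqrt_of_sq_le
    rw [sq]
    apply mul_le_mul <;> first | positivity | linarith
  rw [← ht2, div_le_iff₀ hn'] at hmix
  have h1 : (d * t) * t ≤ (d * t) * (0.001 * n) := by nlinarith
  have h2 : t ≤ 0.001 * n := le_of_mul_le_mul_left h1 (by
    have : 0 < t := lt_of_lt_of_le (by positivity) ht0
    positivity)
  linarith

theorem expand_of_ndl {n d : ℕ} {lam : ℝ} {G : SimpleGraph (Fin n)} (hG : IsNDLGraph n G d lam)
    (hd : 0 < d) (hlam : lam ≤ 0.001 * d) (hn : 1000 ≤ n) (X W : Finset (Fin n))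
    (hX : X.Nonempty) (hdeg : ∀ x ∈ X, 3 * d ≤ 10 * (W.filter (fun y => G.Adj x y)).card)
    (hW : W.card ≤ 4 * X.card) : 2 * (n / 500 + 1) < X.card := by
  have hmix := (le_abs_self _).trans (mixing hG hd hlam X W)
  have hn' : (1000:ℝ) ≤ n := by exact_mod_cast hn
  have hd' : (0:ℝ) < d := by exact_mod_cast hd
  have hX' : (0:ℝ) < X.card := by exact_mod_cast Finset.card_pos.2 hX
  have hW' : (W.card : ℝ) ≤ 4 * X.card := by exact_mod_cast hW
  have h1 : (X.card : ℝ) * (0.3 * d) ≤ ∑ x ∈ X, ((W.filter (fun y => G.Adj x y)).card : ℝ) := by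
    rw [← nsmul_eq_mul]
    refine Finset.card_nsmul_le_sum _ _ _ fun x hx => ?_
    have : (3 * d : ℝ) ≤ 10 * (W.filter (fun y => G.Adj x y)).card := by
      exact_mod_cast hdeg x hx
    linarith
  have h2 : Real.sqrt ((X.card : ℝ) * W.card) ≤ 2 * X.card := by
    apply Real.sqrt_le_iff.2 ⟨by positivity, ?_⟩
    nlinarith
  have h3 : d * ((X.card : ℝ) * W.card) / n ≤ d * X.card * (4 * X.card / n) := by
    have : d * ((X.card : ℝ) * W.card) / n = d * X.card * (W.card / n) := by ring
    rw [this]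
    gcongr
  have h4 : 0.001 * d * Real.sqrt ((X.card : ℝ) * W.card) ≤ 0.001 * d * (2 * X.card) :=
    mul_le_mul_of_nonneg_left h2 (by positivity)
  have h5 : (d * X.card : ℝ) * 0.3 ≤ (d * X.card) * (4 * X.card / n + 0.002) := by linarith
  have h6 := le_of_mul_le_mul_left h5 (by positivity)
  have h7 : (0.298 : ℝ) ≤ 4 * X.card / n := by linarith
  rw [le_div_iff₀ (by linarith)] at h7
  have h8 : (298 * n : ℝ) ≤ 4000 * X.card := by linarith
  have h9 : 298 * n ≤ 4000 * X.card := by exact_mod_cast h8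
  omega

theorem size_of_ndl {n d : ℕ} {lam : ℝ} {G : SimpleGraph (Fin n)} (hG : IsNDLGraph n G d lam)
    (hd : 0 < d) (hlam : lam ≤ 0.001 * d) (hn : 0 < n) (W : Finset (Fin n))
    (hdeg : ∀ x, 3 * d ≤ 10 * (W.filter (fun y => G.Adj x y)).card) :
    299 * n ≤ 1000 * W.card := by
  have hmix := (le_abs_self _).trans (mixing hG hd hlam Finset.univ W)
  have hn' : (0:ℝ) < n := by exact_mod_cast hn
  have hd' : (0:ℝ) < d := by exact_mod_cast hd
  have hW' : (W.card : ℝ) ≤ n := by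
    exact_mod_cast (Finset.card_le_univ W).trans (by simp)
  have h1 : (n : ℝ) * (0.3 * d) ≤
      ∑ x : Fin n, ((W.filter (fun y => G.Adj x y)).card : ℝ) := by
    have := Finset.card_nsmul_le_sum (Finset.univ : Finset (Fin n))
      (fun x => ((W.filter (fun y => G.Adj x y)).card : ℝ)) (0.3 * d) (fun x _ => by
        have : (3 * d : ℝ) ≤ 10 * (W.filter (fun y => G.Adj x y)).card := by
          exact_mod_cast hdeg x
        linarith)
    simpa using this
  have hc : ((Finset.univ : Finset (Fin n)).card : ℝ) = n := by simp
  rw [hc] at hmix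
  have h2 : Real.sqrt ((n : ℝ) * W.card) ≤ n := by
    apply Real.sqrt_le_iff.2 ⟨by positivity, ?_⟩
    nlinarith
  have h3 : d * ((n : ℝ) * W.card) / n = d * W.card := by field_simp
  have h4 : 0.001 * d * Real.sqrt ((n : ℝ) * W.card) ≤ 0.001 * d * n :=
    mul_le_mul_of_nonneg_left h2 (by positivity)
  rw [h3] at hmix
  have h5 : (d : ℝ) * (0.3 * n) ≤ d * (W.card + 0.001 * n) := by linarith
  have h6 := le_of_mul_le_mul_left h5 hd'
  have h8 : (299 * n : ℝ) ≤ 1000 * W.card := by linarith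
  exact_mod_cast h8

theorem main {n d : ℕ} {lam : ℝ} {G : SimpleGraph (Fin n)} (hG : IsNDLGraph n G d lam)
    (hd : 0 < d) (hlam : lam ≤ 0.001 * d) (hn : 100000 ≤ n) (col : Fin n → Fin 3)
    (hcol : ∀ v i, 3 * d ≤ 10 * ((Finset.univ.filter (fun x => G.Adj v x ∧ col x = i)).card)) :
    ContainsSpanningCrown n G (n / 2) := by
  have hJ := joined_of_ndl hG hd hlam (by omega)
  set s := n / 500 + 1 with hs
  let K : Fin 3 → Finset (Fin n) := fun i => Finset.univ.filter (fun x => col x = i)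
  have hKm : ∀ i x, x ∈ K i ↔ col x = i := by intro i x; simp [K]
  have hdegK : ∀ (W : Finset (Fin n)) i x, (∀ y, G.Adj x y → col y = i → y ∈ W) →
      3 * d ≤ 10 * (W.filter (fun y => G.Adj x y)).card := by
    intro W i x hW
    refine (hcol x i).trans (Nat.mul_le_mul_left _ (Finset.card_le_card ?_))
    intro y hy
    have hy := (Finset.mem_filter.1 hy).2
    exact Finset.mem_filter.2 ⟨hW y hy.1 hy.2, hy.1⟩
  have hsize : ∀ i, 299 * n ≤ 1000 * (K i).card := fun i =>
    size_of_ndl hG hd hlam (by omega) (K i)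
      (fun x => hdegK (K i) i x fun y _ hy => (hKm i y).2 hy)
  have hdisj : ∀ i j, i ≠ j → Disjoint (K i) (K j) := by
    intro i j hij
    rw [Finset.disjoint_left]
    intro x hx hx'
    exact hij (((hKm i x).1 hx).symm.trans ((hKm j x).1 hx'))
  have hsum : (K 0).card + (K 1).card + (K 2).card = n := by
    have h := Finset.card_eq_sum_card_fiberwise (s := (Finset.univ : Finset (Fin n)))
      (t := (Finset.univ : Finset (Fin 3))) (f := col) (fun _ _ => by simp)
    rw [Fin.sum_univ_three, Finset.card_univ, Fintype.card_fin] at h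
    exact h.symm
  have h0 := hsize 0
  have h1 := hsize 1
  have h2 := hsize 2
  obtain ⟨c, hlen, hnd, hch, hcl, hR1, hcR⟩ := exists_cycle_list (R1 := K 0) (R := K 2)
    (m := n - n / 2) hJ (by omega) (hdisj 0 2 (by decide)) (by
      intro U hU
      by_contra hlt
      push Not at hlt
      have := expand_of_ndl hG hd hlam (by omega) U (nbF G (K 2) U)
        (Finset.card_pos.1 (by omega)) (fun x hx => hdegK _ 2 x fun y hxy hy => by
          simp only [nbF, Finset.mem_filter]
          exact ⟨(hKm 2 y).2 hy, x, hx, hxy⟩) hlt.le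
      omega) (by omega) (by omega) (by omega) (by omega)
  have hCc : c.toFinset.card = n - n / 2 := by rw [List.toFinset_card_of_nodup hnd, hlen]
  obtain ⟨φ, hφ, hinj⟩ := exists_matching hJ c.toFinset (by omega) (by
      intro X W hX hXC hXW hle
      have := expand_of_ndl hG hd hlam (by omega) X W hX (fun x hx => hdegK W 0 x
        fun y hxy hy => hXW x hx y (List.mem_toFinset.2 (hR1 y ((hKm 0 y).2 hy))) hxy) (by omega)
      omega) (by
      intro X W hX hXC hXW hle
      have := expand_of_ndl hG hd hlam (by omega) X W hX (fun x hx => hdegK W 1 x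
        fun y hxy hy => hXW x hx y (by
          intro hyc
          rcases hcR y (List.mem_toFinset.1 hyc) with h | h
          · rw [hKm, hy] at h; exact absurd h (by decide)
          · rw [hKm, hy] at h; exact absurd h (by decide)) hxy) (by omega)
      omega)
  simp only [List.mem_toFinset] at hφ hinj
  have := crown_of_list (by omega) hnd hch hcl φ hφ hinj
  rw [hlen] at this
  convert this using 1
  omega

end Crown

/-- There exists `d₀` such that every `(n,d,λ)`-graph with `λ/d ≤ 0.001` and `d ≥ d₀`
contains a crown on `n` vertices with `⌊n/2⌋` spikes. -/
theorem crown_in_pseudorandom_graph :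
    ∃ d₀ : ℕ, ∀ (n d : ℕ) (lam : ℝ) (G : SimpleGraph (Fin n)),
      IsNDLGraph n G d lam → lam / (d : ℝ) ≤ 0.001 → d ≥ d₀ →
      ContainsSpanningCrown n G (n / 2) := by
  obtain ⟨d₀, hd₀⟩ := Crown.exists_colouring
  refine ⟨max d₀ 100000, fun n d lam G hG hlam hd => ?_⟩
  have hd1 : 100000 ≤ d := (le_max_right _ _).trans hd
  obtain ⟨col, hcol⟩ := hd₀ n d G ((le_max_left _ _).trans hd) hG.1
  have hdR : (0:ℝ) < d := by exact_mod_cast (by omega : 0 < d)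
  rw [div_le_iff₀ hdR] at hlam
  have hnd : d < n := by
    obtain ⟨hreg, -, i₀, -⟩ := hG
    have := G.degree_lt_card_verts i₀
    rw [hreg i₀, Fintype.card_fin] at this
    exact this
  exact Crown.main hG (by omega) hlam (by omega) col hcol
end

section
/- For every ε with 0 < ε ≤ 1/2 there exists a constant C > 0 such that every (n,d,λ)-graph G with λ > 0 and d/λ ≥ C contains a crown on n vertices with ⌊εn⌋ spikes. -/
open scoped Classical

open Finset Matrix in
theorem quad_mixing {n : ℕ} {G : SimpleGraph (Fin n)} {d : ℕ} {lam : ℝ}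
    (h : IsNDLGraph n G d lam) (hl : 0 < lam) (hd : lam < d) (x y : Fin n → ℝ) :
    |x ⬝ᵥ ((G.adjMatrix ℝ) *ᵥ y) - d / n * ((∑ i, x i) * (∑ i, y i))|
      ≤ lam * (√(∑ i, x i ^ 2) * √(∑ i, y i ^ 2)) := by
  obtain ⟨hreg, hA, i₀, hi₀, hlam⟩ := h
  set A := G.adjMatrix ℝ with hAdef
  set β : Fin n → Fin n → ℝ := fun i => ⇑(hA.eigenvectorBasis i) with hβ
  set μ := hA.eigenvalues with hμ
  have pars : ∀ x y : Fin n → ℝ, ∑ i, (β i ⬝ᵥ x) * (β i ⬝ᵥ y) = x ⬝ᵥ y := by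
    intro x y
    have := hA.eigenvectorBasis.sum_inner_mul_inner (WithLp.toLp 2 x) (WithLp.toLp 2 y)
    simp only [EuclideanSpace.inner_eq_star_dotProduct] at this
    simp only [star_trivial] at this
    rw [dotProduct_comm x y, ← this]
    refine Finset.sum_congr rfl fun i _ => ?_
    rw [dotProduct_comm (β i) y]
  have symm : ∀ i (y : Fin n → ℝ), β i ⬝ᵥ (A *ᵥ y) = μ i * (β i ⬝ᵥ y) := by
    intro i y
    have h1 : A *ᵥ β i = μ i • β i := hA.mulVec_eigenvectorBasis i
    have hT : Aᵀ = A := by simp [hAdef]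
    rw [dotProduct_mulVec, ← mulVec_transpose, hT, h1, smul_dotProduct, smul_eq_mul]
  have hone : ∀ i, i ≠ i₀ → β i ⬝ᵥ (fun _ => (1 : ℝ)) = 0 := by
    intro i hi
    have h1 : A *ᵥ (fun _ => (1 : ℝ)) = (d : ℝ) • (fun _ => (1 : ℝ)) := by
      ext v
      have := hreg v
      simp only [hAdef, SimpleGraph.adjMatrix_mulVec_apply]
      simp [this]
    have h2 := symm i (fun _ => 1)
    rw [h1, dotProduct_smul, smul_eq_mul] at h2
    have h3 : μ i ≠ d := by
      intro h
      have := hlam i hi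
      rw [h, abs_of_nonneg (by positivity)] at this
      linarith
    have : (μ i - d) * (β i ⬝ᵥ (fun _ => (1 : ℝ))) = 0 := by linarith
    rcases mul_eq_zero.1 this with h | h
    · exact absurd (sub_eq_zero.1 h) h3
    · exact h
  set t := β i₀ ⬝ᵥ (fun _ => (1 : ℝ)) with ht
  have hsum : ∀ x : Fin n → ℝ, ∑ i, x i = (β i₀ ⬝ᵥ x) * t := by
    intro x
    have h1 := pars x (fun _ => 1)
    rw [Finset.sum_eq_single i₀] at h1
    · rw [h1]; simp [dotProduct]
    · intro i _ hi; rw [hone i hi, mul_zero]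
    · simp
  have hn : (n : ℝ) = t * t := by
    have := hsum (fun _ => 1)
    simpa using this
  have hnpos : (0 : ℝ) < n := by
    have := i₀.pos; exact_mod_cast this
  have e1 : x ⬝ᵥ (A *ᵥ y) = ∑ i, μ i * ((β i ⬝ᵥ x) * (β i ⬝ᵥ y)) := by
    rw [← pars]
    refine Finset.sum_congr rfl fun i _ => ?_
    rw [symm]; ring
  have e2 : (d : ℝ) / n * ((∑ i, x i) * (∑ i, y i)) = μ i₀ * ((β i₀ ⬝ᵥ x) * (β i₀ ⬝ᵥ y)) := by
    rw [hsum x, hsum y, hi₀]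
    have : t * t ≠ 0 := by rw [← hn]; exact hnpos.ne'
    have ht0 : t ≠ 0 := fun h => this (by rw [h]; ring)
    rw [hn]; field_simp
  rw [e1, e2, ← Finset.add_sum_erase _ _ (Finset.mem_univ i₀), add_sub_cancel_left]
  have p1 : ∑ i, x i ^ 2 = ∑ i, |β i ⬝ᵥ x| ^ 2 := by
    have := pars x x
    simp only [sq_abs]
    simp only [sq]
    rw [this]; simp [dotProduct]
  have p2 : ∑ i, y i ^ 2 = ∑ i, |β i ⬝ᵥ y| ^ 2 := by
    have := pars y y
    simp only [sq_abs]
    simp only [sq]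
    rw [this]; simp [dotProduct]
  calc |∑ i ∈ univ.erase i₀, μ i * ((β i ⬝ᵥ x) * (β i ⬝ᵥ y))|
      ≤ ∑ i ∈ univ.erase i₀, |μ i * ((β i ⬝ᵥ x) * (β i ⬝ᵥ y))| := Finset.abs_sum_le_sum_abs _ _
    _ ≤ ∑ i ∈ univ.erase i₀, lam * (|β i ⬝ᵥ x| * |β i ⬝ᵥ y|) := by
        refine Finset.sum_le_sum fun i hi => ?_
        rw [abs_mul, abs_mul]
        exact mul_le_mul_of_nonneg_right (hlam i (Finset.ne_of_mem_erase hi)) (by positivity)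
    _ ≤ ∑ i, lam * (|β i ⬝ᵥ x| * |β i ⬝ᵥ y|) :=
        Finset.sum_le_sum_of_subset_of_nonneg (Finset.erase_subset _ _) fun _ _ _ => by positivity
    _ = lam * ∑ i, (|β i ⬝ᵥ x| * |β i ⬝ᵥ y|) := by rw [Finset.mul_sum]
    _ ≤ lam * (√(∑ i, x i ^ 2) * √(∑ i, y i ^ 2)) := by
        rw [p1, p2]
        exact mul_le_mul_of_nonneg_left (Real.sum_mul_le_sqrt_mul_sqrt _ _ _) hl.le

/-- Number of ordered pairs `(a,b)`, `a ∈ A`, `b ∈ B`, `ab` an edge. -/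
noncomputable def eAB {n : ℕ} (G : SimpleGraph (Fin n)) (A B : Finset (Fin n)) : ℕ :=
  ∑ a ∈ A, (B.filter fun b => G.Adj a b).card

theorem mixing {n : ℕ} {G : SimpleGraph (Fin n)} {d : ℕ} {lam : ℝ}
    (h : IsNDLGraph n G d lam) (hl : 0 < lam) (hd : lam < d) (A B : Finset (Fin n)) :
    |(eAB G A B : ℝ) - d / n * (A.card * B.card)| ≤ lam * (√A.card * √B.card) := by
  have := quad_mixing h hl hd (fun i => if i ∈ A then 1 else 0) (fun i => if i ∈ B then 1 else 0)
  convert this using 3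
  · rw [eAB]
    simp only [dotProduct, ite_mul, one_mul, zero_mul, Finset.sum_ite_mem, Finset.univ_inter]
    push_cast
    refine Finset.sum_congr rfl fun a _ => ?_
    simp only [Matrix.mulVec, dotProduct, SimpleGraph.adjMatrix_apply, mul_ite, mul_one, mul_zero,
      Finset.sum_ite_mem, Finset.univ_inter]
    rw [Finset.card_filter]; push_cast; rfl
  · simp
  · simp
  · simp

/-- Neighbourhood of a set. -/
noncomputable def nb {n : ℕ} (G : SimpleGraph (Fin n)) (U : Finset (Fin n)) : Finset (Fin n) :=
  Finset.univ.filter fun v => ∃ u ∈ U, G.Adj u v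

theorem mem_nb {n : ℕ} {G : SimpleGraph (Fin n)} {U : Finset (Fin n)} {v : Fin n} :
    v ∈ nb G U ↔ ∃ u ∈ U, G.Adj u v := by simp [nb]

/-- large sets are joined by an edge -/
theorem joined {n : ℕ} {G : SimpleGraph (Fin n)} {d : ℕ} {lam : ℝ}
    (h : IsNDLGraph n G d lam) (hl : 0 < lam) (hd : lam < d) (M : ℕ) (hM : lam * n / d < M)
    (A B : Finset (Fin n)) (hA : M ≤ A.card) (hB : M ≤ B.card) : ∃ a ∈ A, ∃ b ∈ B, G.Adj a b := by
  by_contra hcon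
  push Not at hcon
  have he : eAB G A B = 0 := by
    rw [eAB]
    refine Finset.sum_eq_zero fun a ha => ?_
    rw [Finset.card_eq_zero, Finset.filter_eq_empty_iff]
    intro b hb; exact hcon a ha b hb
  have := mixing h hl hd A B
  have hnpos : (0 : ℝ) < n := by
    obtain ⟨_, _, i, _⟩ := h
    have := i.pos; exact_mod_cast this
  have hdpos : (0 : ℝ) < d := hl.trans hd
  rw [he] at this
  simp only [Nat.cast_zero, zero_sub, abs_neg] at this
  rw [abs_of_nonneg (by positivity)] at this
  set a := √(A.card : ℝ)
  set b := √(B.card : ℝ)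
  have ha2 : (A.card : ℝ) = a * a := (Real.mul_self_sqrt (Nat.cast_nonneg _)).symm
  have hb2 : (B.card : ℝ) = b * b := (Real.mul_self_sqrt (Nat.cast_nonneg _)).symm
  have hMpos : (0 : ℝ) < M := lt_of_le_of_lt (by positivity) hM
  have ha : √(M : ℝ) ≤ a := Real.sqrt_le_sqrt (by exact_mod_cast hA)
  have hb : √(M : ℝ) ≤ b := Real.sqrt_le_sqrt (by exact_mod_cast hB)
  have hMs : 0 < √(M : ℝ) := Real.sqrt_pos.2 hMpos
  have hab : (M : ℝ) ≤ a * b := by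
    rw [← Real.mul_self_sqrt hMpos.le]
    exact mul_le_mul ha hb hMs.le (hMs.le.trans ha)
  have hab0 : 0 < a * b := hMpos.trans_le hab
  rw [ha2, hb2] at this
  have h2 : (d : ℝ) / n * (a * b) ≤ lam := by
    have : ((d : ℝ) / n * (a * b)) * (a * b) ≤ lam * (a * b) := by linarith [this]
    exact le_of_mul_le_mul_right this hab0
  have h3 : lam < d / n * (a * b) := by
    have : lam * n / d < a * b := hM.trans_le hab
    rw [div_lt_iff₀ hdpos] at this
    rw [div_mul_eq_mul_div, lt_div_iff₀ hnpos]; linarith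
  linarith

/-- every set of size at least `M` has almost everything as neighbour -/
theorem joined_nb {n : ℕ} {G : SimpleGraph (Fin n)} {M : ℕ}
    (h : ∀ A B : Finset (Fin n), M ≤ A.card → M ≤ B.card → ∃ a ∈ A, ∃ b ∈ B, G.Adj a b)
    (U : Finset (Fin n)) (hU : M ≤ U.card) : n ≤ (nb G U).card + M := by
  by_contra hcon
  have h1 : (nb G U)ᶜ.card = n - (nb G U).card := by
    rw [Finset.card_compl, Fintype.card_fin]
  obtain ⟨a, ha, b, hb, hab⟩ := h U (nb G U)ᶜ hU (by omega)
  rw [Finset.mem_compl, mem_nb] at hb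
  exact hb ⟨a, ha, hab⟩

/-- small sets expand into a set to which all degrees are large -/
theorem expand {n : ℕ} {G : SimpleGraph (Fin n)} {d : ℕ} {lam : ℝ}
    (h : IsNDLGraph n G d lam) (hl : 0 < lam) (hd : lam < d) (M : ℕ)
    (hM : (M : ℝ) * d ≤ 2 * lam * n) (T U : Finset (Fin n)) (hU : U.card ≤ 2 * M)
    (hdeg : ∀ u ∈ U, 24 * lam ≤ ((T.filter fun b => G.Adj u b).card : ℝ)) :
    5 * U.card ≤ (nb G U ∩ T).card := by
  by_contra hcon
  push Not at hcon
  have hnpos : (0 : ℝ) < n := by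
    obtain ⟨_, _, i, _⟩ := h
    have := i.pos; exact_mod_cast this
  have hdpos : (0 : ℝ) < d := hl.trans hd
  set B := nb G U ∩ T
  have h1 : (24 * lam) * U.card ≤ eAB G U B := by
    rw [eAB]; push_cast
    rw [mul_comm, ← nsmul_eq_mul]
    refine Finset.card_nsmul_le_sum _ _ _ fun u hu => (hdeg u hu).trans ?_
    norm_cast
    refine Finset.card_le_card fun b hb => ?_
    simp only [Finset.mem_filter, B, Finset.mem_inter, mem_nb] at hb ⊢
    exact ⟨⟨⟨u, hu, hb.2⟩, hb.1⟩, hb.2⟩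
  have h2 := (abs_le.1 (mixing h hl hd U B)).2
  have hUpos : 0 < U.card := by omega
  have hUr : (0 : ℝ) < U.card := by exact_mod_cast hUpos
  have hB : (B.card : ℝ) ≤ 5 * U.card := by exact_mod_cast hcon.le
  have hU' : (U.card : ℝ) ≤ 2 * M := by exact_mod_cast hU
  have h3 : √(U.card : ℝ) * √(B.card : ℝ) ≤ 3 * U.card := by
    rw [← Real.sqrt_mul (by positivity)]
    refine Real.sqrt_le_iff.2 ⟨by positivity, ?_⟩
    nlinarith
  have h4 : (d : ℝ) / n * (U.card * B.card) ≤ 20 * lam * U.card := by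
    rw [div_mul_eq_mul_div, div_le_iff₀ hnpos]
    have a1 : (d : ℝ) * (U.card * B.card) ≤ d * (U.card * (5 * (2 * M))) := by
      gcongr; linarith
    have a2 := mul_le_mul_of_nonneg_left hM hUr.le
    nlinarith
  have h5 := mul_le_mul_of_nonneg_left h3 hl.le
  nlinarith
section LLL
open Finset

/-- `E` depends only on the coordinates in `T`. -/
def DependsOnC {n : ℕ} (T : Finset (Fin n)) (E : (Fin n → Fin 3) → Prop) : Prop :=
  ∀ w z : Fin n → Fin 3, (∀ i ∈ T, w i = z i) → (E w ↔ E z)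

/-- counting measure -/
noncomputable def cnt {n : ℕ} (E : (Fin n → Fin 3) → Prop) : ℝ :=
  ((univ.filter E).card : ℝ)

theorem cnt_eq {n : ℕ} (E : (Fin n → Fin 3) → Prop) [DecidablePred E] :
    cnt E = ((univ.filter E).card : ℝ) := by
  unfold cnt; congr!

theorem cnt_mono {n : ℕ} {E F : (Fin n → Fin 3) → Prop} (h : ∀ w, E w → F w) : cnt E ≤ cnt F := by
  unfold cnt
  exact_mod_cast card_le_card (monotone_filter_right _ fun w _ => h w)

theorem cnt_nonneg {n : ℕ} (E : (Fin n → Fin 3) → Prop) : 0 ≤ cnt E := by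
  unfold cnt; positivity

theorem cnt_true {n : ℕ} : cnt (fun _ : Fin n → Fin 3 => True) = 3 ^ n := by
  simp [cnt]

theorem cnt_indep {n : ℕ} (T : Finset (Fin n)) (B E : (Fin n → Fin 3) → Prop)
    (hB : DependsOnC T B) (hE : DependsOnC Tᶜ E) :
    cnt (fun w => B w ∧ E w) * 3 ^ n = cnt B * cnt E := by
  have key : ((univ.filter fun w => B w ∧ E w) ×ˢ (univ : Finset (Fin n → Fin 3))).card
      = ((univ.filter B) ×ˢ (univ.filter E)).card := by
    refine card_nbij' (fun p => (fun i => if i ∈ T then p.1 i else p.2 i, fun i => if i ∈ T then p.2 i else p.1 i))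
      (fun p => (fun i => if i ∈ T then p.1 i else p.2 i, fun i => if i ∈ T then p.2 i else p.1 i)) ?_ ?_ ?_ ?_
    · rintro ⟨w, w'⟩ h
      simp only [coe_product, Set.mem_prod, mem_coe, mem_filter, mem_univ, true_and, and_true] at h ⊢
      refine ⟨(hB _ _ ?_).2 h.1, (hE _ _ ?_).2 h.2⟩
      · intro i hi; simp [hi]
      · intro i hi; rw [mem_compl] at hi; simp [hi]
    · rintro ⟨w, w'⟩ h
      simp only [coe_product, Set.mem_prod, mem_coe, mem_filter, mem_univ, true_and, and_true] at h ⊢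
      refine ⟨(hB _ _ ?_).2 h.1, (hE _ _ ?_).2 h.2⟩
      · intro i hi; simp [hi]
      · intro i hi; rw [mem_compl] at hi; simp [hi]
    · rintro ⟨w, w'⟩ _
      ext i <;> dsimp only <;> split_ifs <;> rfl
    · rintro ⟨w, w'⟩ _
      ext i <;> dsimp only <;> split_ifs <;> rfl
  rw [card_product, card_product] at key
  rw [cnt_eq, cnt_eq, cnt_eq]
  have h3 : ((univ : Finset (Fin n → Fin 3)).card : ℝ) = 3 ^ n := by simp
  rw [← h3]
  exact_mod_cast key

/-- union bound type splitting -/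
theorem cnt_split {n : ℕ} (E B : (Fin n → Fin 3) → Prop) :
    cnt E = cnt (fun w => B w ∧ E w) + cnt (fun w => ¬ B w ∧ E w) := by
  unfold cnt
  norm_cast
  rw [← card_filter_add_card_filter_not (s := univ.filter E) B, filter_filter, filter_filter]
  congr 2 <;> (ext; simp [and_comm])

theorem cnt_avoid_ge {n : ℕ} {B : Fin n → (Fin n → Fin 3) → Prop} (q : ℝ)
    (S₁ : Finset (Fin n)) (E : (Fin n → Fin 3) → Prop)
    (h : ∀ u ∈ S₁, cnt (fun w => B u w ∧ E w) ≤ q * cnt E) :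
    cnt E * (1 - S₁.card * q) ≤ cnt (fun w => (∀ u ∈ S₁, ¬ B u w) ∧ E w) := by
  induction S₁ using Finset.induction_on with
  | empty => simp
  | insert a S ha ih =>
    have ih' := ih fun u hu => h u (mem_insert_of_mem hu)
    have h1 := h a (mem_insert_self _ _)
    rw [cnt_split (fun w => (∀ u ∈ S, ¬ B u w) ∧ E w) (B a)] at ih'
    have h2 : cnt (fun w => B a w ∧ (∀ u ∈ S, ¬ B u w) ∧ E w) ≤ cnt (fun w => B a w ∧ E w) :=
      cnt_mono fun w hw => ⟨hw.1, hw.2.2⟩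
    have h3 : cnt (fun w => ¬ B a w ∧ (∀ u ∈ S, ¬ B u w) ∧ E w)
        ≤ cnt (fun w => (∀ u ∈ insert a S, ¬ B u w) ∧ E w) :=
      cnt_mono fun w hw => ⟨by
        intro u hu
        rcases mem_insert.1 hu with rfl | hu
        · exact hw.1
        · exact hw.2.1 u hu, hw.2.2⟩
    rw [card_insert_of_notMem ha]
    push_cast
    nlinarith

theorem lll_step {n : ℕ} (N : Fin n → Finset (Fin n)) (B : Fin n → (Fin n → Fin 3) → Prop)
    (hB : ∀ v, DependsOnC (N v) (B v)) (p : ℝ) (D : ℕ) (hp : ∀ v, cnt (B v) ≤ p * 3 ^ n)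
    (hD : ∀ v, (univ.filter fun u => ¬ Disjoint (N u) (N v)).card ≤ D) (hpD : 4 * p * D ≤ 1)
    (hp0 : 0 ≤ p) :
    ∀ (k : ℕ) (S : Finset (Fin n)), S.card = k → ∀ v,
      cnt (fun w => B v w ∧ ∀ u ∈ S, ¬ B u w) ≤ 2 * p * cnt (fun w => ∀ u ∈ S, ¬ B u w)
        ∨ v ∈ S := by
  intro k
  induction k using Nat.strong_induction_on with
  | _ k ih =>
  intro S hS v
  by_cases hv : v ∈ S
  · exact Or.inr hv
  left
  set S₁ := S.filter fun u => ¬ Disjoint (N u) (N v) with hS₁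
  set S₂ := S.filter fun u => Disjoint (N u) (N v) with hS₂
  have hsplit : ∀ w, (∀ u ∈ S, ¬ B u w) ↔ ((∀ u ∈ S₁, ¬ B u w) ∧ (∀ u ∈ S₂, ¬ B u w)) := by
    intro w
    simp only [hS₁, hS₂, mem_filter]
    constructor
    · intro h; exact ⟨fun u hu => h u hu.1, fun u hu => h u hu.1⟩
    · intro h u hu
      by_cases hd : Disjoint (N u) (N v)
      · exact h.2 u ⟨hu, hd⟩
      · exact h.1 u ⟨hu, hd⟩
  have hindep := cnt_indep (N v) (B v) (fun w => ∀ u ∈ S₂, ¬ B u w) (hB v) (by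
    intro w w' hw
    refine forall₂_congr fun u hu => not_congr (hB u w w' fun i hi => hw i ?_)
    rw [mem_compl]
    exact fun h => disjoint_left.1 (mem_filter.1 hu).2 hi h)
  have h3 : (0 : ℝ) < 3 ^ n := by positivity
  have e1 : cnt (fun w => B v w ∧ ∀ u ∈ S₂, ¬ B u w) ≤ p * cnt (fun w => ∀ u ∈ S₂, ¬ B u w) := by
    have := mul_le_mul_of_nonneg_right (hp v) (cnt_nonneg (fun w => ∀ u ∈ S₂, ¬ B u w))
    rw [← hindep] at this
    exact le_of_mul_le_mul_right (by linarith) h3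
  have e2 : cnt (fun w => B v w ∧ ∀ u ∈ S, ¬ B u w) ≤ cnt (fun w => B v w ∧ ∀ u ∈ S₂, ¬ B u w) :=
    cnt_mono fun w hw => ⟨hw.1, ((hsplit w).1 hw.2).2⟩
  have e3 : cnt (fun w => ∀ u ∈ S₂, ¬ B u w) ≤ 2 * cnt (fun w => ∀ u ∈ S, ¬ B u w) := by
    have hcard : S₁.card + S₂.card = S.card := by
      rw [add_comm]; exact card_filter_add_card_filter_not _
    have := cnt_avoid_ge (B := B) (2 * p) S₁ (fun w => ∀ u ∈ S₂, ¬ B u w) (by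
      intro u hu
      have hpos : 0 < S₁.card := card_pos.2 ⟨u, hu⟩
      rcases ih S₂.card (by omega) S₂ rfl u with h | h
      · exact h
      · exact absurd (mem_filter.1 h).2 (mem_filter.1 hu).2)
    have hle : (S₁.card : ℝ) ≤ D := by
      have : S₁.card ≤ D := (card_le_card (filter_subset_filter _ (subset_univ _))).trans (hD v)
      exact_mod_cast this
    have h1 : (1 : ℝ) / 2 ≤ 1 - S₁.card * (2 * p) := by nlinarith
    have h2 := mul_le_mul_of_nonneg_left h1 (cnt_nonneg (fun w => ∀ u ∈ S₂, ¬ B u w))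
    have h4 : cnt (fun w => ∀ u ∈ S, ¬ B u w)
        = cnt (fun w => (∀ u ∈ S₁, ¬ B u w) ∧ (∀ u ∈ S₂, ¬ B u w)) := by
      congr 1; funext w; exact propext (hsplit w)
    rw [h4]; linarith
  nlinarith

theorem lll {n : ℕ} (N : Fin n → Finset (Fin n)) (B : Fin n → (Fin n → Fin 3) → Prop)
    (hB : ∀ v, DependsOnC (N v) (B v)) (p : ℝ) (D : ℕ) (hp : ∀ v, cnt (B v) ≤ p * 3 ^ n)
    (hD : ∀ v, (univ.filter fun u => ¬ Disjoint (N u) (N v)).card ≤ D) (hpD : 4 * p * D ≤ 1)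
    (hp0 : 0 ≤ p) (hp1 : 2 * p < 1) : ∃ w, ∀ v, ¬ B v w := by
  have main : ∀ S : Finset (Fin n), 0 < cnt (fun w => ∀ u ∈ S, ¬ B u w) := by
    intro S
    induction S using Finset.induction_on with
    | empty => simp [cnt]
    | insert a S ha ih =>
      rcases lll_step N B hB p D hp hD hpD hp0 S.card S rfl a with h | h
      · have := cnt_split (fun w => ∀ u ∈ S, ¬ B u w) (B a)
        have h2 : cnt (fun w => ¬ B a w ∧ ∀ u ∈ S, ¬ B u w)
            = cnt (fun w => ∀ u ∈ insert a S, ¬ B u w) := by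
          congr 1; funext w; simp
        rw [← h2]
        nlinarith
      · exact absurd h ha
  have := main univ
  rw [cnt_eq] at this
  have h2 : 0 < (univ.filter fun w => ∀ u ∈ univ, ¬ B u w).card := by exact_mod_cast this
  obtain ⟨w, hw⟩ := card_pos.1 h2
  exact ⟨w, fun v => (mem_filter.1 hw).2 v (mem_univ _)⟩

theorem chernoff {n : ℕ} (T : Finset (Fin n)) (i : Fin 3) :
    cnt (fun w : Fin n → Fin 3 => 16 * (T.filter fun u => w u = i).card < T.card) * (9 / 10) ^ T.card
      ≤ 3 ^ n * ((2 + (9 / 10) ^ 16) / 3 : ℝ) ^ T.card := by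
  have h1 : ∑ w : Fin n → Fin 3, ∏ u, (if u ∈ T then (if w u = i then ((9 / 10 : ℝ) ^ 16) else 1) else 1)
      = 3 ^ n * ((2 + (9 / 10) ^ 16) / 3 : ℝ) ^ T.card := by
    rw [← Fintype.prod_sum (f := fun (u : Fin n) (c : Fin 3) =>
      (if u ∈ T then (if c = i then ((9 / 10 : ℝ) ^ 16) else 1) else 1))]
    have : ∀ u : Fin n, ∑ c : Fin 3, (if u ∈ T then (if c = i then ((9 / 10 : ℝ) ^ 16) else 1) else 1)
        = 3 * (if u ∈ T then ((2 + (9 / 10) ^ 16) / 3 : ℝ) else 1) := by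
      intro u
      by_cases hu : u ∈ T
      · simp only [hu, if_true]
        fin_cases i <;> simp [Fin.sum_univ_three] <;> ring
      · simp [hu]
    simp_rw [this]
    rw [prod_mul_distrib, prod_ite_mem, univ_inter, prod_const, prod_const, card_univ, Fintype.card_fin]
  rw [← h1, cnt_eq, ← nsmul_eq_mul]
  refine (card_nsmul_le_sum _ (fun w : Fin n → Fin 3 => ∏ u, (if u ∈ T then (if w u = i then ((9 / 10 : ℝ) ^ 16) else 1) else 1)) _ ?_).trans
    (sum_le_sum_of_subset_of_nonneg (filter_subset _ _) fun w _ _ => prod_nonneg fun u _ => by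
      split_ifs <;> positivity)
  intro w hw
  have hw := (mem_filter.1 hw).2
  rw [prod_ite_mem, univ_inter, prod_ite, prod_const, prod_const_one, mul_one, ← pow_mul]
  exact pow_le_pow_of_le_one (by norm_num) (by norm_num) hw.le

theorem exists_d0 : ∃ d0 : ℕ, ∀ d : ℕ, d0 ≤ d →
    12 * ((d : ℝ) ^ 2 * (((2 + (9 / 10) ^ 16) / 3 : ℝ) / (9 / 10)) ^ d) ≤ 1 := by
  have := tendsto_pow_const_mul_const_pow_of_abs_lt_one 2
    (r := (((2 + (9 / 10) ^ 16) / 3 : ℝ) / (9 / 10))) (by rw [abs_of_pos] <;> norm_num)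
  have h2 := this.eventually (gt_mem_nhds (show (0 : ℝ) < 1 / 12 by norm_num))
  obtain ⟨d0, h⟩ := Filter.eventually_atTop.1 h2
  exact ⟨d0, fun d hd => by have := h d hd; linarith⟩

theorem exists_colouring {n d : ℕ} {G : SimpleGraph (Fin n)} (hreg : G.IsRegularOfDegree d)
    (hd1 : 1 ≤ d)
    (hd : 12 * ((d : ℝ) ^ 2 * (((2 + (9 / 10) ^ 16) / 3 : ℝ) / (9 / 10)) ^ d) ≤ 1) :
    ∃ w : Fin n → Fin 3, ∀ v i, d ≤ 16 * (univ.filter fun u => G.Adj v u ∧ w u = i).card := by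
  set r : ℝ := ((2 + (9 / 10) ^ 16) / 3 : ℝ) / (9 / 10) with hr
  have hcard : ∀ v, (G.neighborFinset v).card = d := fun v => hreg v
  have hr0 : 0 ≤ r := by rw [hr]; positivity
  have hd1' : (1 : ℝ) ≤ d := by exact_mod_cast hd1
  have hd2 : (1 : ℝ) ≤ (d : ℝ) ^ 2 := by nlinarith
  have hrd : 0 ≤ r ^ d := by positivity
  obtain ⟨w, hw⟩ := lll (fun v => G.neighborFinset v)
    (fun v w => ∃ i : Fin 3, 16 * ((G.neighborFinset v).filter fun u => w u = i).card
      < (G.neighborFinset v).card) (by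
      intro v w w' hww
      refine exists_congr fun i => ?_
      rw [filter_congr fun u hu => by rw [hww u hu]]) (3 * r ^ d) (d * d) (by
      intro v
      have h1 : cnt (fun w : Fin n → Fin 3 => ∃ i : Fin 3, 16 * ((G.neighborFinset v).filter fun u => w u = i).card
          < (G.neighborFinset v).card) ≤ ∑ i : Fin 3, cnt (fun w : Fin n → Fin 3 =>
          16 * ((G.neighborFinset v).filter fun u => w u = i).card < (G.neighborFinset v).card) := by
        simp only [cnt_eq]
        norm_cast
        refine le_trans (card_le_card ?_) card_biUnion_le
        intro w hw
        rw [mem_filter] at hw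
        obtain ⟨_, i, hi⟩ := hw
        exact mem_biUnion.2 ⟨i, mem_univ _, mem_filter.2 ⟨mem_univ _, hi⟩⟩
      refine h1.trans ?_
      have h2 : ∀ i : Fin 3, cnt (fun w : Fin n → Fin 3 =>
          16 * ((G.neighborFinset v).filter fun u => w u = i).card < (G.neighborFinset v).card)
          ≤ r ^ d * 3 ^ n := by
        intro i
        have := chernoff (G.neighborFinset v) i
        rw [hcard v] at this ⊢
        have h9 : (0 : ℝ) < (9 / 10) ^ d := by positivity
        rw [hr, div_pow, div_mul_eq_mul_div, le_div_iff₀ h9]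
        linarith
      calc _ ≤ ∑ i : Fin 3, r ^ d * 3 ^ n := sum_le_sum fun i _ => h2 i
        _ = _ := by simp; ring) (by
      intro v
      have : (univ.filter fun u => ¬ Disjoint (G.neighborFinset u) (G.neighborFinset v))
          ⊆ (G.neighborFinset v).biUnion fun x => G.neighborFinset x := by
        intro u hu
        rw [mem_filter, not_disjoint_iff] at hu
        obtain ⟨_, x, hx, hx'⟩ := hu
        rw [mem_biUnion]
        refine ⟨x, hx', ?_⟩
        rw [SimpleGraph.mem_neighborFinset] at hx ⊢
        exact hx.symm
      refine (card_le_card this).trans (card_biUnion_le.trans ?_)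
      rw [sum_congr rfl fun x _ => hcard x, sum_const, hcard v, smul_eq_mul]) (by
      push_cast; nlinarith) (by positivity) (by nlinarith)
  refine ⟨w, fun v i => ?_⟩
  have := hw v
  push Not at this
  have h2 := this i
  rw [hcard v] at h2
  refine h2.trans (Nat.mul_le_mul_left _ (card_le_card fun u hu => ?_))
  simpa using hu

end LLL
section Ext
open Finset

variable {n : ℕ} {G : SimpleGraph (Fin n)} {M : ℕ}

/-- Extendability (in the style of Friedman and Pippenger): `c u` is the number of new
neighbours still promised to `u`. -/
def GoodS {n : ℕ} (G : SimpleGraph (Fin n)) (M : ℕ) (W : Finset (Fin n)) (c : Fin n → ℤ) : Prop :=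
  ∀ U : Finset (Fin n), U.card ≤ 2 * M → ∑ u ∈ U, c u ≤ ((nb G U \ W).card : ℤ)

theorem GoodS.mono {W : Finset (Fin n)} {c c' : Fin n → ℤ} (h : GoodS G M W c)
    (hc : ∀ v, c' v ≤ c v) : GoodS G M W c' :=
  fun U hU => (sum_le_sum fun u _ => hc u).trans (h U hU)

theorem nb_union (A B : Finset (Fin n)) : nb G (A ∪ B) = nb G A ∪ nb G B := by
  ext v; simp only [mem_nb, mem_union]; grind

theorem nb_inter (A B : Finset (Fin n)) : nb G (A ∩ B) ⊆ nb G A ∩ nb G B := by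
  intro v; simp only [mem_nb, mem_inter]; grind

theorem nb_submod (A B W : Finset (Fin n)) :
    (nb G (A ∪ B) \ W).card + (nb G (A ∩ B) \ W).card ≤ (nb G A \ W).card + (nb G B \ W).card := by
  rw [← card_union_add_card_inter (nb G A \ W), nb_union, union_sdiff_distrib]
  refine Nat.add_le_add_left (card_le_card ?_) _
  intro v hv
  rw [mem_sdiff] at hv
  have := nb_inter A B hv.1
  simp only [mem_inter, mem_sdiff] at this ⊢
  exact ⟨⟨this.1, hv.2⟩, this.2, hv.2⟩

theorem GoodS.tight_union {W : Finset (Fin n)} {c : Fin n → ℤ} (h : GoodS G M W c)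
    {A B : Finset (Fin n)} (hA : A.card < M) (hB : B.card < M)
    (tA : ∑ u ∈ A, c u = ((nb G A \ W).card : ℤ)) (tB : ∑ u ∈ B, c u = ((nb G B \ W).card : ℤ)) :
    ∑ u ∈ A ∪ B, c u = ((nb G (A ∪ B) \ W).card : ℤ) := by
  have h1 := h (A ∪ B) ((card_union_le _ _).trans (by omega))
  have h2 := h (A ∩ B) ((card_le_card inter_subset_left).trans (by omega))
  have h3 := sum_union_inter (s₁ := A) (s₂ := B) (f := c)
  have h4 := nb_submod (G := G) A B W
  zify at h4
  linarith

theorem GoodS.ext {W : Finset (Fin n)} {c : Fin n → ℤ} (h : GoodS G M W c)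
    (hnb : ∀ U : Finset (Fin n), M ≤ U.card → n ≤ (nb G U).card + M)
    (hc : ∀ v, c v ≤ 5) (hroom : W.card + 11 * M < n) (s : Fin n) (hs : 1 ≤ c s) :
    ∃ y, G.Adj s y ∧ y ∉ W ∧ GoodS G M (insert y W) (fun v => c v - if v = s then 1 else 0) := by
  have small : ∀ U : Finset (Fin n), U.card ≤ 2 * M → ∑ u ∈ U, c u = ((nb G U \ W).card : ℤ) →
      U.card < M := by
    intro U hU ht
    by_contra hcon
    have h1 := hnb U (by omega)
    have h2 : ∑ u ∈ U, c u ≤ U.card * 5 := by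
      have := sum_le_card_nsmul U c 5 fun u _ => hc u
      simpa using this
    have h3 := le_card_sdiff W (nb G U)
    omega
  by_contra hcon
  push Not at hcon
  have hU : ∀ y ∈ nb G {s} \ W, ∃ U : Finset (Fin n), U.card < M ∧
      ∑ u ∈ U, c u = ((nb G U \ W).card : ℤ) ∧ y ∈ nb G U ∧ s ∉ U := by
    intro y hy
    rw [mem_sdiff, mem_nb] at hy
    obtain ⟨⟨s', hs', hadj⟩, hyW⟩ := hy
    rw [mem_singleton] at hs'; subst hs'
    have hbad := hcon y hadj hyW
    unfold GoodS at hbad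
    push Not at hbad
    obtain ⟨U, hU, hlt⟩ := hbad
    rw [sum_sub_distrib, sum_ite_eq'] at hlt
    have hg := h U hU
    have e1 : nb G U \ insert y W = (nb G U \ W).erase y := by
      ext v; simp only [mem_sdiff, mem_insert, mem_erase]; tauto
    rw [e1] at hlt
    by_cases hyU : y ∈ nb G U
    · have hmem : y ∈ nb G U \ W := mem_sdiff.2 ⟨hyU, hyW⟩
      have e2 := card_erase_add_one hmem
      have ht : ∑ u ∈ U, c u = ((nb G U \ W).card : ℤ) := by
        split_ifs at hlt <;> omega
      have hsU : s' ∉ U := by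
        intro hsU
        rw [if_pos hsU] at hlt
        omega
      exact ⟨U, small U hU ht, ht, hyU, hsU⟩
    · exfalso
      rw [erase_eq_of_notMem (fun hm => hyU (mem_sdiff.1 hm).1)] at hlt
      split_ifs at hlt <;> omega
  -- union of the tight sets
  have hall : ∀ Z : Finset (Fin n), Z ⊆ nb G {s} \ W → ∃ U : Finset (Fin n), (U = ∅ ∨ U.card < M) ∧
      ∑ u ∈ U, c u = ((nb G U \ W).card : ℤ) ∧ Z ⊆ nb G U ∧ s ∉ U := by
    intro Z
    induction Z using Finset.induction_on with
    | empty => intro _; exact ⟨∅, Or.inl rfl, by simp [nb], by simp, by simp⟩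
    | insert y Z hy ih =>
      intro hZ
      obtain ⟨U, hU1, hU2, hU3, hsU⟩ := ih fun z hz => hZ (mem_insert_of_mem hz)
      obtain ⟨U', hU1', hU2', hU3', hsU'⟩ := hU y (hZ (mem_insert_self _ _))
      have hU1 : U.card < M := by
        rcases hU1 with rfl | h
        · simp; omega
        · exact h
      have ht := h.tight_union hU1 hU1' hU2 hU2'
      refine ⟨U ∪ U', Or.inr (small _ ((card_union_le _ _).trans (by omega)) ht), ht, ?_, by simp [hsU, hsU']⟩
      rw [nb_union]
      intro z hz
      rcases mem_insert.1 hz with rfl | hz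
      · exact mem_union_right _ hU3'
      · exact mem_union_left _ (hU3 hz)
  obtain ⟨U, hU1, hU2, hU3, hsU⟩ := hall _ Subset.rfl
  have hMpos : 0 < M := by
    by_contra h0
    have h0 : M = 0 := by omega
    have := hnb ∅ (by omega)
    simp [nb] at this
    omega
  have hU1 : U.card < M := by
    rcases hU1 with rfl | h
    · simpa using hMpos
    · exact h
  have hnbU : nb G ({s} ∪ U) \ W = nb G U \ W := by
    rw [nb_union]
    ext v
    simp only [mem_sdiff, mem_union]
    constructor
    · rintro ⟨h1 | h1, h2⟩
      · exact ⟨hU3 (mem_sdiff.2 ⟨h1, h2⟩), h2⟩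
      · exact ⟨h1, h2⟩
    · rintro ⟨h1, h2⟩; exact ⟨Or.inr h1, h2⟩
  have hg := h ({s} ∪ U) ((card_union_le _ _).trans (by simp; omega))
  rw [hnbU, ← hU2] at hg
  rw [sum_union (by simpa using hsU), sum_singleton] at hg
  omega

theorem GoodS.ext_set {W : Finset (Fin n)} {c : Fin n → ℤ} (h : GoodS G M W c)
    (hnb : ∀ U : Finset (Fin n), M ≤ U.card → n ≤ (nb G U).card + M)
    (hc : ∀ v, c v ≤ 5) (R : Finset (Fin n)) (hroom : W.card + R.card + 11 * M < n)
    (hs : ∀ r ∈ R, 1 ≤ c r) :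
    ∃ f : Fin n → Fin n, Set.InjOn f R ∧ (∀ r ∈ R, G.Adj r (f r)) ∧ (∀ r ∈ R, f r ∉ W) ∧
      GoodS G M (W ∪ R.image f) (fun v => c v - if v ∈ R then 1 else 0) := by
  induction R using Finset.induction_on with
  | empty => exact ⟨id, by simp, by simp, by simp, by simpa using h⟩
  | insert a R ha ih =>
    rw [card_insert_of_notMem ha] at hroom
    obtain ⟨f, hf1, hf2, hf3, hf4⟩ := ih (by omega) fun r hr => hs r (mem_insert_of_mem hr)
    have hcard : (W ∪ R.image f).card ≤ W.card + R.card :=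
      (card_union_le _ _).trans (Nat.add_le_add_left card_image_le _)
    obtain ⟨y, hy1, hy2, hy3⟩ := hf4.ext hnb (fun v => by
      have := hc v; split_ifs <;> omega) (by omega) a (by
      have := hs a (mem_insert_self _ _)
      simpa [ha] using this)
    simp only [mem_union, mem_image, not_or, not_exists, not_and] at hy2
    have hne : ∀ r ∈ R, r ≠ a := fun r hr h => ha (h ▸ hr)
    refine ⟨Function.update f a y, ?_, ?_, ?_, ?_⟩
    · intro x hx z hz hxz
      simp only [coe_insert, Set.mem_insert_iff, mem_coe] at hx hz
      have := hf1 (x₁ := x) (x₂ := z)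
      simp only [mem_coe] at this
      simp only [Function.update_apply] at hxz
      grind
    · intro r hr
      rcases mem_insert.1 hr with rfl | hr
      · simpa using hy1
      · simpa [hne r hr] using hf2 r hr
    · intro r hr
      rcases mem_insert.1 hr with rfl | hr
      · simpa using hy2.1
      · simpa [hne r hr] using hf3 r hr
    · have e1 : W ∪ (insert a R).image (Function.update f a y) = insert y (W ∪ R.image f) := by
        rw [image_insert, Function.update_self, union_insert,
          image_congr (g := f) fun r hr => by simp [hne r hr]]
      rw [e1]
      refine hy3.mono fun v => ?_
      by_cases hv : v = a
      · subst hv; simp [ha]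
      · simp [hv]

theorem GoodS.rollback {W R : Finset (Fin n)} {c : Fin n → ℤ} {f : Fin n → Fin n}
    (h : GoodS G M (W ∪ R.image f) c) (hf1 : Set.InjOn f R) (hf2 : ∀ r ∈ R, G.Adj r (f r))
    (hf3 : ∀ r ∈ R, f r ∉ W) : GoodS G M W (fun v => c v + if v ∈ R then 1 else 0) := by
  intro U hU
  have h1 := h U hU
  rw [sum_add_distrib]
  have e1 : ∑ u ∈ U, (if u ∈ R then (1 : ℤ) else 0) = ((U ∩ R).image f).card := by
    rw [card_image_of_injOn (hf1.mono (by simp)), sum_ite_mem]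
    simp
  have e2 : (nb G U \ (W ∪ R.image f)).card + ((U ∩ R).image f).card ≤ (nb G U \ W).card := by
    rw [← card_union_of_disjoint]
    · refine card_le_card fun v hv => ?_
      simp only [mem_union, mem_sdiff, mem_image, mem_inter, mem_nb] at hv ⊢
      rcases hv with ⟨h1, h2⟩ | ⟨r, ⟨h1, h2⟩, rfl⟩
      · exact ⟨h1, fun h => h2 (Or.inl h)⟩
      · exact ⟨⟨r, h1, hf2 r h2⟩, hf3 r h2⟩
    · rw [disjoint_left]
      intro v hv hv'
      simp only [mem_union, mem_sdiff, mem_image, mem_inter] at hv hv'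
      obtain ⟨r, ⟨h1, h2⟩, rfl⟩ := hv'
      exact hv.2 (Or.inr ⟨r, h2, rfl⟩)
  rw [e1]
  zify at e2
  linarith

set_option maxHeartbeats 2000000 in
theorem GoodS.connect
    (hnb : ∀ U : Finset (Fin n), M ≤ U.card → n ≤ (nb G U).card + M)
    (hj : ∀ A B : Finset (Fin n), M ≤ A.card → M ≤ B.card → ∃ a ∈ A, ∃ b ∈ B, G.Adj a b) :
    ∀ (h : ℕ) (W : Finset (Fin n)) (c : Fin n → ℤ) (R₁ R₂ : Finset (Fin n)), GoodS G M W c →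
    (∀ v, c v ≤ 5) → (∀ v, v ∉ W → c v = 5) → R₁ ⊆ W → R₂ ⊆ W → Disjoint R₁ R₂ →
    (∀ v ∈ R₁, 3 ≤ c v) → (∀ v ∈ R₂, 3 ≤ c v) → M ≤ 2 ^ h * R₁.card → M ≤ 2 ^ h * R₂.card →
    W.card + (2 ^ (h + 1) - 2) * (R₁.card + R₂.card) + 11 * M < n →
    ∃ r₁ ∈ R₁, ∃ r₂ ∈ R₂, ∃ Q : List (Fin n), Q.length = 2 * h ∧ Q.Nodup ∧ (∀ q ∈ Q, q ∉ W) ∧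
      (r₁ :: (Q ++ [r₂])).IsChain G.Adj ∧ GoodS G M (W ∪ Q.toFinset)
        (fun v => if v ∈ Q then 1 else c v - if v = r₁ ∨ v = r₂ then 1 else 0) := by
  intro h
  induction h with
  | zero =>
    intro W c R₁ R₂ hg hc5 hcW hR₁ hR₂ hdisj h1 h2 hM1 hM2 hroom
    obtain ⟨a, ha, b, hb, hab⟩ := hj R₁ R₂ (by simpa using hM1) (by simpa using hM2)
    refine ⟨a, ha, b, hb, [], rfl, List.nodup_nil, by simp, by simpa using hab, ?_⟩
    simp only [List.toFinset_nil, union_empty]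
    refine hg.mono fun v => ?_
    simp only [List.not_mem_nil, if_false]
    split_ifs <;> omega
  | succ h ih =>
    intro W c R₁ R₂ hg hc5 hcW hR₁ hR₂ hdisj h1 h2 hM1 hM2 hroom
    set R := R₁ ∪ R₂ with hR
    have hRcard : R.card = R₁.card + R₂.card := card_union_of_disjoint hdisj
    have hRW : R ⊆ W := union_subset hR₁ hR₂
    have hcR : ∀ r ∈ R, 3 ≤ c r := fun r hr => (mem_union.1 hr).elim (h1 r) (h2 r)
    have hpow : 1 ≤ 2 ^ h := Nat.one_le_two_pow
    have hexp : (2 ^ (h + 1 + 1) - 2) * (R₁.card + R₂.card)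
        = 2 * R.card + (2 ^ (h + 1) - 2) * (2 * R₁.card + 2 * R₂.card) := by
      rw [hRcard]
      obtain ⟨k, hk⟩ : ∃ k, 2 ^ h = k + 1 := ⟨2 ^ h - 1, by omega⟩
      have e1 : 2 ^ (h + 1 + 1) - 2 = 4 * k + 2 := by rw [pow_succ, pow_succ, hk]; omega
      have e2 : 2 ^ (h + 1) - 2 = 2 * k := by rw [pow_succ, hk]; omega
      rw [e1, e2]; ring
    rw [hexp] at hroom
    obtain ⟨f, hf1, hf2, hf3, hf4⟩ := hg.ext_set hnb hc5 R (by omega) fun r hr => by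
      have := hcR r hr; omega
    have hcf : (W ∪ R.image f).card ≤ W.card + R.card :=
      (card_union_le _ _).trans (Nat.add_le_add_left card_image_le _)
    obtain ⟨g, hg1, hg2, hg3, hg4⟩ := hf4.ext_set hnb (fun v => by
      have := hc5 v; split_ifs <;> omega) R (by omega) fun r hr => by
      have := hcR r hr; simp only [hr, if_true]; omega
    have hcg : (W ∪ R.image f ∪ R.image g).card ≤ W.card + 2 * R.card := by
      have := card_union_le (W ∪ R.image f) (R.image g)
      have h2 : (R.image g).card ≤ R.card := card_image_le
      omega
    have hfW : ∀ r ∈ R, f r ∉ W := hf3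
    have hgW : ∀ r ∈ R, g r ∉ W := fun r hr h => hg3 r hr (mem_union_left _ h)
    have hgf : ∀ r ∈ R, ∀ r' ∈ R, g r ≠ f r' := fun r hr r' hr' h =>
      hg3 r hr (mem_union_right _ (h ▸ mem_image_of_mem _ hr'))
    have hff : ∀ r ∈ R, ∀ r' ∈ R, f r = f r' → r = r' := fun r hr r' hr' h => hf1 hr hr' h
    have hgg : ∀ r ∈ R, ∀ r' ∈ R, g r = g r' → r = r' := fun r hr r' hr' h => hg1 hr hr' h
    have hcardS : ∀ S ⊆ R, (S.image f ∪ S.image g).card = 2 * S.card := by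
      intro S hS
      rw [card_union_of_disjoint, card_image_of_injOn (hf1.mono hS), card_image_of_injOn (hg1.mono hS)]
      · ring
      · rw [disjoint_left]
        intro v hv hv'
        obtain ⟨r, hr, rfl⟩ := mem_image.1 hv
        obtain ⟨r', hr', he⟩ := mem_image.1 hv'
        exact hgf r' (hS hr') r (hS hr) he
    have hs1 : R₁ ⊆ R := subset_union_left
    have hs2 : R₂ ⊆ R := subset_union_right
    have hnotW : ∀ v ∈ W, ∀ r ∈ R, f r ≠ v ∧ g r ≠ v := fun v hv r hr =>
      ⟨fun h => hfW r hr (h ▸ hv), fun h => hgW r hr (h ▸ hv)⟩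
    have hsubW : ∀ S ⊆ R, S.image f ∪ S.image g ⊆ W ∪ R.image f ∪ R.image g := by
      intro S hS
      exact union_subset ((image_subset_image hS).trans (subset_union_right.trans subset_union_left))
        ((image_subset_image hS).trans subset_union_right)
    have hc5' : ∀ S ⊆ R, ∀ v ∈ S.image f ∪ S.image g, v ∉ W := by
      intro S hS v hv
      rcases mem_union.1 hv with hv | hv
      · obtain ⟨r, hr, rfl⟩ := mem_image.1 hv; exact hfW r (hS hr)
      · obtain ⟨r, hr, rfl⟩ := mem_image.1 hv; exact hgW r (hS hr)
    obtain ⟨x, hx, y, hy, Q, hQl, hQn, hQW, hQc, hQg⟩ := ih (W ∪ R.image f ∪ R.image g)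
      (fun v => c v - (if v ∈ R then 1 else 0) - if v ∈ R then 1 else 0)
      (R₁.image f ∪ R₁.image g) (R₂.image f ∪ R₂.image g) hg4
      (fun v => by have := hc5 v; split_ifs <;> omega)
      (by
        intro v hv
        simp only [mem_union, not_or] at hv
        have : v ∉ R := fun h => hv.1.1 (hRW h)
        simp only [this, if_false, sub_zero]
        exact hcW v hv.1.1)
      (hsubW R₁ hs1) (hsubW R₂ hs2)
      (by
        rw [disjoint_left]
        intro v hv hv'
        simp only [mem_union, mem_image] at hv hv'
        rw [disjoint_left] at hdisj
        rcases hv with ⟨r, hr, rfl⟩ | ⟨r, hr, rfl⟩ <;> rcases hv' with ⟨r', hr', he⟩ | ⟨r', hr', he⟩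
        · exact hdisj hr (hff _ (hs2 hr') _ (hs1 hr) he ▸ hr')
        · exact hgf _ (hs2 hr') _ (hs1 hr) he
        · exact hgf _ (hs1 hr) _ (hs2 hr') he.symm
        · exact hdisj hr (hgg _ (hs2 hr') _ (hs1 hr) he ▸ hr'))
      (fun v hv => by
        have h1 := hc5' R₁ hs1 v hv
        have h2 : v ∉ R := fun h => h1 (hRW h)
        simp only [h2, if_false, sub_zero, hcW v h1]; norm_num)
      (fun v hv => by
        have h1 := hc5' R₂ hs2 v hv
        have h2 : v ∉ R := fun h => h1 (hRW h)
        simp only [h2, if_false, sub_zero, hcW v h1]; norm_num)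
      (by rw [hcardS R₁ hs1, ← mul_assoc, ← pow_succ]; exact hM1)
      (by rw [hcardS R₂ hs2, ← mul_assoc, ← pow_succ]; exact hM2)
      (by rw [hcardS R₁ hs1, hcardS R₂ hs2]; omega)
    have hxW : x ∉ W := hc5' R₁ hs1 x hx
    have hyW : y ∉ W := hc5' R₂ hs2 y hy
    have hxmem := hsubW R₁ hs1 hx
    have hymem := hsubW R₂ hs2 hy
    have hxQ : x ∉ Q := fun h => hQW x h hxmem
    have hyQ : y ∉ Q := fun h => hQW y h hymem
    obtain ⟨a, ha, hax⟩ : ∃ a ∈ R₁, f a = x ∨ g a = x := by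
      rcases mem_union.1 hx with hx | hx
      · obtain ⟨r, hr, he⟩ := mem_image.1 hx; exact ⟨r, hr, Or.inl he⟩
      · obtain ⟨r, hr, he⟩ := mem_image.1 hx; exact ⟨r, hr, Or.inr he⟩
    obtain ⟨b, hb, hby⟩ : ∃ b ∈ R₂, f b = y ∨ g b = y := by
      rcases mem_union.1 hy with hy | hy
      · obtain ⟨r, hr, he⟩ := mem_image.1 hy; exact ⟨r, hr, Or.inl he⟩
      · obtain ⟨r, hr, he⟩ := mem_image.1 hy; exact ⟨r, hr, Or.inr he⟩
    have hab : a ≠ b := fun h => disjoint_left.1 hdisj ha (h ▸ hb)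
    have haR := hs1 ha
    have hbR := hs2 hb
    have hxy : x ≠ y := by
      intro h
      rcases hax with hax | hax <;> rcases hby with hby | hby
      · exact hab (hff _ haR _ hbR (by rw [hax, hby, h]))
      · exact hgf _ hbR _ haR (by rw [hax, hby, h])
      · exact hgf _ haR _ hbR (by rw [hax, hby, h])
      · exact hab (hgg _ haR _ hbR (by rw [hax, hby, h]))
    set Rf := R.filter fun r => f r ≠ x ∧ f r ≠ y with hRf
    set Rg := R.filter fun r => g r ≠ x ∧ g r ≠ y with hRg
    have hRfR : Rf ⊆ R := filter_subset _ _
    have hRgR : Rg ⊆ R := filter_subset _ _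
    set Q' : List (Fin n) := x :: (Q ++ [y]) with hQ'
    have memQ' : ∀ v, v ∈ Q' ↔ v = x ∨ v ∈ Q ∨ v = y := by intro v; simp [hQ']
    have hset : W ∪ R.image f ∪ R.image g ∪ Q.toFinset
        = (W ∪ Q'.toFinset ∪ Rf.image f) ∪ Rg.image g := by
      ext v
      simp only [mem_union, List.mem_toFinset, memQ', mem_image, hRf, hRg, mem_filter] at hxmem hymem ⊢
      constructor
      · rintro (((h | ⟨r, hr, rfl⟩) | ⟨r, hr, rfl⟩) | h)
        · exact Or.inl (Or.inl (Or.inl h))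
        · by_cases h1 : f r = x
          · exact Or.inl (Or.inl (Or.inr (Or.inl h1)))
          by_cases h2 : f r = y
          · exact Or.inl (Or.inl (Or.inr (Or.inr (Or.inr h2))))
          exact Or.inl (Or.inr ⟨r, ⟨hr, h1, h2⟩, rfl⟩)
        · by_cases h1 : g r = x
          · exact Or.inl (Or.inl (Or.inr (Or.inl h1)))
          by_cases h2 : g r = y
          · exact Or.inl (Or.inl (Or.inr (Or.inr (Or.inr h2))))
          exact Or.inr ⟨r, ⟨hr, h1, h2⟩, rfl⟩
        · exact Or.inl (Or.inl (Or.inr (Or.inr (Or.inl h))))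
      · rintro (((h | rfl | h | rfl) | ⟨r, ⟨hr, _⟩, rfl⟩) | ⟨r, ⟨hr, _⟩, rfl⟩)
        · exact Or.inl (Or.inl (Or.inl h))
        · exact Or.inl hxmem
        · exact Or.inr h
        · exact Or.inl hymem
        · exact Or.inl (Or.inl (Or.inr ⟨r, hr, rfl⟩))
        · exact Or.inl (Or.inr ⟨r, hr, rfl⟩)
    rw [hset] at hQg
    have hfQ : ∀ r ∈ R, f r ∉ Q := fun r hr h => hQW _ h
      (mem_union_left _ (mem_union_right _ (mem_image_of_mem _ hr)))
    have hgQ : ∀ r ∈ R, g r ∉ Q := fun r hr h => hQW _ h (mem_union_right _ (mem_image_of_mem _ hr))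
    have hroll := (hQg.rollback (hg1.mono hRgR) (fun r hr => hg2 r (hRgR hr)) (by
      intro r hr
      have hr' := (mem_filter.1 hr).2
      have hrR := hRgR hr
      simp only [mem_union, List.mem_toFinset, memQ', mem_image, not_or, not_exists, not_and]
      refine ⟨⟨hgW r hrR, hr'.1, hgQ r hrR, hr'.2⟩, fun z hz h => hgf r hrR z (hRfR hz) h.symm⟩)).rollback
      (hf1.mono hRfR) (fun r hr => hf2 r (hRfR hr)) (by
      intro r hr
      have hr' := (mem_filter.1 hr).2
      have hrR := hRfR hr
      simp only [mem_union, List.mem_toFinset, memQ', not_or]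
      exact ⟨hfW r hrR, hr'.1, hfQ r hrR, hr'.2⟩)
    have hadjax : G.Adj a x := by
      rcases hax with h | h
      · exact h ▸ hf2 a haR
      · exact h ▸ hg2 a haR
    have hadjby : G.Adj b y := by
      rcases hby with h | h
      · exact h ▸ hf2 b hbR
      · exact h ▸ hg2 b hbR
    refine ⟨a, ha, b, hb, Q', ?_, ?_, ?_, ?_, ?_⟩
    · simp [hQ', hQl]; ring
    · rw [hQ', List.nodup_cons, List.nodup_append]
      refine ⟨by simp [hxQ, hxy], hQn, by simp, ?_⟩
      intro q hq q' hq' h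
      rw [List.mem_singleton] at hq'
      exact hyQ (by rw [← hq', ← h]; exact hq)
    · intro q hq
      rcases (memQ' q).1 hq with rfl | h | rfl
      · exact hxW
      · exact fun hW => hQW q h (mem_union_left _ (mem_union_left _ hW))
      · exact hyW
    · have : a :: (Q' ++ [b]) = a :: (x :: Q) ++ y :: b :: [] := by simp [hQ']
      rw [this, List.isChain_append_cons_cons]
      refine ⟨?_, hadjby.symm, by simp⟩
      have h2 : a :: x :: Q ++ [y] = a :: x :: (Q ++ [y]) := by simp
      rw [h2, List.isChain_cons_cons]
      exact ⟨hadjax, hQc⟩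
    · refine hroll.mono fun v => ?_
      have hmf : v ∈ Rf ↔ v ∈ R ∧ f v ≠ x ∧ f v ≠ y := mem_filter
      have hmg : v ∈ Rg ↔ v ∈ R ∧ g v ≠ x ∧ g v ≠ y := mem_filter
      by_cases hvR : v ∈ R
      · have hvW := hRW hvR
        have hvQ : v ∉ Q := fun h => hQW v h (mem_union_left _ (mem_union_left _ hvW))
        have hvx : v ≠ x := fun h => hxW (h ▸ hvW)
        have hvy : v ≠ y := fun h => hyW (h ▸ hvW)
        have hvQ' : v ∉ Q' := by
          rw [memQ']; rintro (h | h | h)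
          exacts [hvx h, hvQ h, hvy h]
        simp only [hvQ', hvQ, hvR, hvx, hvy, if_true, if_false, or_self, hmf, hmg, true_and]
        -- at most one child of `v` is kept
        have k1 : f v = x → v = a ∧ g v ≠ x ∧ g v ≠ y := by
          intro h
          have hva : v = a := by
            rcases hax with h' | h'
            · exact hff _ hvR _ haR (by rw [h, h'])
            · exact absurd (by rw [h, h']) (hgf _ haR _ hvR)
          refine ⟨hva, fun h2 => hgf _ hvR _ hvR (by rw [h, h2]), fun h2 => ?_⟩
          rcases hby with h' | h'
          · exact hgf _ hvR _ hbR (by rw [h2, h'])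
          · exact hab (hva.symm.trans (hgg _ hvR _ hbR (by rw [h2, h'])))
        have k2 : f v = y → v = b ∧ g v ≠ x ∧ g v ≠ y := by
          intro h
          have hvb : v = b := by
            rcases hby with h' | h'
            · exact hff _ hvR _ hbR (by rw [h, h'])
            · exact absurd (by rw [h, h']) (hgf _ hbR _ hvR)
          refine ⟨hvb, fun h2 => ?_, fun h2 => hgf _ hvR _ hvR (by rw [h, h2])⟩
          rcases hax with h' | h'
          · exact hgf _ hvR _ haR (by rw [h2, h'])
          · exact hab ((hvb.symm.trans (hgg _ hvR _ haR (by rw [h2, h']))).symm)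
        have k3 : g v = x → v = a := by
          intro h
          rcases hax with h' | h'
          · exact absurd (by rw [h, h']) (hgf _ hvR _ haR)
          · exact hgg _ hvR _ haR (by rw [h, h'])
        have k4 : g v = y → v = b := by
          intro h
          rcases hby with h' | h'
          · exact absurd (by rw [h, h']) (hgf _ hvR _ hbR)
          · exact hgg _ hvR _ hbR (by rw [h, h'])
        have k5 : ¬ (f v ≠ x ∧ f v ≠ y) → (v = a ∨ v = b) ∧ (g v ≠ x ∧ g v ≠ y) := by
          clear hff hgg hgf
          intro h
          by_cases h1 : f v = x
          · exact ⟨Or.inl (k1 h1).1, (k1 h1).2⟩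
          by_cases h2 : f v = y
          · exact ⟨Or.inr (k2 h2).1, (k2 h2).2⟩
          exact absurd ⟨h1, h2⟩ h
        have k6 : ¬ (g v ≠ x ∧ g v ≠ y) → (v = a ∨ v = b) := by
          intro h
          by_cases h1 : g v = x
          · exact Or.inl (k3 h1)
          by_cases h2 : g v = y
          · exact Or.inr (k4 h2)
          exact absurd ⟨h1, h2⟩ h
        by_cases e1 : f v ≠ x ∧ f v ≠ y
        · by_cases e2 : g v ≠ x ∧ g v ≠ y
          · rw [if_pos e1, if_pos e2]; split_ifs <;> omega
          · rw [if_pos e1, if_neg e2, if_pos (k6 e2)]; omega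
        · rw [if_neg e1, if_pos (k5 e1).2, if_pos (k5 e1).1]; omega
      · have hva : v ≠ a := fun h => hvR (h ▸ haR)
        have hvb : v ≠ b := fun h => hvR (h ▸ hbR)
        simp only [hmf, hmg, hvR, hva, hvb, false_and, if_false, or_self, sub_zero, add_zero]
        by_cases hvQ : v ∈ Q
        · simp [hvQ, memQ']
        · simp only [hvQ, if_false]
          by_cases hvxy : v = x ∨ v = y
          · have hvQ' : v ∈ Q' := by
              rw [memQ']; exact hvxy.elim Or.inl fun h => Or.inr (Or.inr h)
            have hvW : v ∉ W := by rcases hvxy with rfl | rfl <;> assumption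
            have := hcW v hvW
            rw [if_pos hvQ', if_pos hvxy]; omega
          · have : v ∉ Q' := by rw [memQ']; tauto
            simp only [this, hvxy, if_false]; omega

end Ext

section Forests
open Finset

variable {n : ℕ} {G : SimpleGraph (Fin n)} {M : ℕ}

/-- The invariant of a linear forest (a list of vertex lists) during the construction. -/
structure Forest {n : ℕ} (G : SimpleGraph (Fin n)) (M : ℕ) (L : List (List (Fin n)))
    (c : Fin n → ℤ) : Prop where
  nd : L.flatten.Nodup
  ne : ∀ l ∈ L, l ≠ []
  ch : ∀ l ∈ L, l.IsChain G.Adj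
  hg : GoodS G M L.flatten.toFinset c
  c5 : ∀ v, c v ≤ 5
  c1 : ∀ v, 1 ≤ c v
  off : ∀ v, v ∉ L.flatten → c v = 5
  ends : ∀ l ∈ L, ∀ v, l.head? = some v ∨ l.getLast? = some v → 3 ≤ c v
  sing : ∀ l ∈ L, ∀ v, l = [v] → 4 ≤ c v

theorem Forest.perm {L L' : List (List (Fin n))} {c : Fin n → ℤ} (h : Forest G M L c)
    (hp : L.Perm L') : Forest G M L' c := by
  have hf : L.flatten.Perm L'.flatten := hp.flatten
  refine ⟨hf.nodup_iff.1 h.nd, fun l hl => h.ne l (hp.mem_iff.2 hl),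
    fun l hl => h.ch l (hp.mem_iff.2 hl), ?_, h.c5, h.c1, fun v hv => h.off v fun h' =>
      hv (hf.mem_iff.1 h'), fun l hl => h.ends l (hp.mem_iff.2 hl),
      fun l hl => h.sing l (hp.mem_iff.2 hl)⟩
  rw [← List.toFinset_eq_of_perm _ _ hf]; exact h.hg

theorem nodup_map_repr {L : List (List (Fin n))} (hL : L.flatten.Nodup) (φ : List (Fin n) → Fin n)
    (hφ : ∀ l ∈ L, φ l ∈ l) : (L.map φ).Nodup := by
  rw [List.nodup_flatten] at hL
  rw [List.Nodup, List.pairwise_map]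
  refine hL.2.imp_of_mem ?_
  intro a b ha hb hab h
  exact hab (hφ a ha) (h ▸ hφ b hb)

theorem Forest.join {l₁ l₂ : List (Fin n)} {L : List (List (Fin n))} {c : Fin n → ℤ}
    (h : Forest G M (l₁ :: l₂ :: L) c) {r₁ r₂ : Fin n} {Q : List (Fin n)}
    (h1 : l₁.getLast? = some r₁) (h2 : l₂.head? = some r₂)
    (hQn : Q.Nodup) (hQW : ∀ q ∈ Q, q ∉ (l₁ :: l₂ :: L).flatten)
    (hQc : (r₁ :: (Q ++ [r₂])).IsChain G.Adj)
    (hg : GoodS G M ((l₁ :: l₂ :: L).flatten.toFinset ∪ Q.toFinset)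
        (fun v => if v ∈ Q then 1 else c v - if v = r₁ ∨ v = r₂ then 1 else 0)) :
    Forest G M ((l₁ ++ Q ++ l₂) :: L)
      (fun v => if v ∈ Q then 1 else c v - if v = r₁ ∨ v = r₂ then 1 else 0) := by
  have hperm : (((l₁ ++ Q ++ l₂) :: L).flatten).Perm (Q ++ (l₁ :: l₂ :: L).flatten) := by
    simp only [List.flatten_cons, List.append_assoc]
    rw [← List.append_assoc, ← List.append_assoc Q]
    exact List.perm_append_comm.append_right _
  obtain ⟨x, rfl⟩ : ∃ x, l₁ = x ++ [r₁] := by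
    rw [List.getLast?_eq_some_iff] at h1; exact h1
  obtain ⟨y, rfl⟩ : ∃ y, l₂ = r₂ :: y := by
    rw [List.head?_eq_some_iff] at h2; exact h2
  have hnd := h.nd
  have hr₁ : r₁ ∈ ((x ++ [r₁]) :: (r₂ :: y) :: L).flatten := by simp
  have hr₂ : r₂ ∈ ((x ++ [r₁]) :: (r₂ :: y) :: L).flatten := by simp
  have hr₁Q : r₁ ∉ Q := fun hq => hQW _ hq hr₁
  have hr₂Q : r₂ ∉ Q := fun hq => hQW _ hq hr₂
  have h31 : 3 ≤ c r₁ := h.ends (x ++ [r₁]) (by simp) r₁ (Or.inr (by simp))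
  have h32 : 3 ≤ c r₂ := h.ends (r₂ :: y) (by simp) r₂ (Or.inl (by simp))
  have hnd2 := hnd
  simp only [List.flatten_cons, List.nodup_append, List.nodup_cons, List.mem_append,
    List.mem_cons, List.not_mem_nil, or_false] at hnd2
  obtain ⟨⟨hx1, -, hx2⟩, ⟨⟨hy1, hy2⟩, hLn, hyL⟩, hxL⟩ := hnd2
  have hne12 : r₁ ≠ r₂ := hxL r₁ (Or.inr rfl) r₂ (Or.inl (Or.inl rfl))
  refine ⟨?_, ?_, ?_, ?_, ?_, ?_, ?_, ?_, ?_⟩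
  · rw [hperm.nodup_iff, List.nodup_append]
    exact ⟨hQn, hnd, fun a ha b hb hab => hQW a ha (hab ▸ hb)⟩
  · intro l hl
    rcases List.mem_cons.1 hl with rfl | hl
    · simp
    · exact h.ne l (by simp [hl])
  · intro l hl
    rcases List.mem_cons.1 hl with rfl | hl
    · have c1 := h.ch (x ++ [r₁]) (by simp)
      have c2 := h.ch (r₂ :: y) (by simp)
      have e : x ++ [r₁] ++ Q ++ r₂ :: y = (x ++ r₁ :: Q) ++ r₂ :: y := by simp
      rw [e, List.isChain_split]
      refine ⟨?_, c2⟩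
      have e : x ++ r₁ :: Q ++ [r₂] = x ++ r₁ :: (Q ++ [r₂]) := by simp
      rw [e, List.isChain_split]
      exact ⟨c1, hQc⟩
    · exact h.ch l (by simp [hl])
  · rw [List.toFinset_eq_of_perm _ _ hperm, List.toFinset_append, union_comm]; exact hg
  · intro v
    have := h.c5 v
    split_ifs <;> omega
  · intro v
    have := h.c1 v
    by_cases hq : v ∈ Q
    · rw [if_pos hq]
    · rw [if_neg hq]
      split_ifs with hv
      · rcases hv with rfl | rfl <;> omega
      · omega
  · intro v hv
    rw [hperm.mem_iff, List.mem_append, not_or] at hv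
    have n1 : v ≠ r₁ := fun e => hv.2 (e ▸ hr₁)
    have n2 : v ≠ r₂ := fun e => hv.2 (e ▸ hr₂)
    simp only [hv.1, n1, n2, or_self, if_false, sub_zero]
    exact h.off v hv.2
  · intro l hl v hv
    rcases List.mem_cons.1 hl with rfl | hl
    · rcases hv with hv | hv
      · cases x with
        | nil =>
          have : r₁ = v := by simpa using hv
          subst this
          have := h.sing ([] ++ [r₁]) (by simp) r₁ (by simp)
          simp only [hr₁Q, if_false]; split_ifs <;> omega
        | cons z x =>
          have : z = v := by simpa using hv
          subst this
          have h3 := h.ends (z :: x ++ [r₁]) (by simp) z (by simp)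
          have n1 : z ≠ r₁ := hx2 z (by simp) r₁ rfl
          have n2 : z ≠ r₂ := hxL z (by simp) r₂ (by simp)
          have n3 : z ∉ Q := fun hq => hQW _ hq (by simp)
          simp only [n3, n1, n2, or_self, if_false, sub_zero]; exact h3
      · rcases List.eq_nil_or_concat' y with rfl | ⟨y', z, rfl⟩
        · have : r₂ = v := by
            rw [List.getLast?_append] at hv
            simpa using hv
          subst this
          have := h.sing [r₂] (by simp) r₂ rfl
          simp only [hr₂Q, if_false]; split_ifs <;> omega
        · have : z = v := by
            have e : x ++ [r₁] ++ Q ++ r₂ :: (y' ++ [z]) = (x ++ [r₁] ++ Q ++ r₂ :: y') ++ [z] := by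
              simp
            rw [e, List.getLast?_append] at hv
            simpa using hv
          subst this
          have h3 := h.ends (r₂ :: (y' ++ [z])) (by simp) z (Or.inr (by
            rw [← List.cons_append, List.getLast?_append]; simp))
          have n1 : z ≠ r₁ := fun e => hxL r₁ (by simp) z (by simp) e.symm
          have n2 : z ≠ r₂ := fun e => hy1 (by rw [← e]; simp)
          have n3 : z ∉ Q := fun hq => hQW _ hq (by simp)
          simp only [n3, n1, n2, or_self, if_false, sub_zero]; exact h3
    · have hvl : v ∈ l := by
        rcases hv with hv | hv
        · exact List.mem_of_mem_head? hv
        · exact List.mem_of_mem_getLast? hv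
      have hvL : v ∈ L.flatten := List.mem_flatten.2 ⟨l, hl, hvl⟩
      have h3 := h.ends l (by simp [hl]) v hv
      have n1 : v ≠ r₁ := fun e => hxL r₁ (by simp) v (Or.inr hvL) e.symm
      have n2 : v ≠ r₂ := fun e => hyL r₂ (by simp) v hvL e.symm
      have n3 : v ∉ Q := fun hq => hQW _ hq (by simp [hvL])
      simp only [n3, n1, n2, or_self, if_false, sub_zero]; exact h3
  · intro l hl v hv
    rcases List.mem_cons.1 hl with rfl | hl
    · have := congrArg List.length hv
      simp at this; omega
    · have hvL : v ∈ L.flatten := List.mem_flatten.2 ⟨l, hl, by simp [hv]⟩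
      have h3 := h.sing l (by simp [hl]) v hv
      have n1 : v ≠ r₁ := fun e => hxL r₁ (by simp) v (Or.inr hvL) e.symm
      have n2 : v ≠ r₂ := fun e => hyL r₂ (by simp) v hvL e.symm
      have n3 : v ∉ Q := fun hq => hQW _ hq (by simp [hvL])
      simp only [n3, n1, n2, or_self, if_false, sub_zero]; exact h3

theorem Forest.merge
    (hnb : ∀ U : Finset (Fin n), M ≤ U.card → n ≤ (nb G U).card + M)
    (hj : ∀ A B : Finset (Fin n), M ≤ A.card → M ≤ B.card → ∃ a ∈ A, ∃ b ∈ B, G.Adj a b)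
    {L : List (List (Fin n))} {c : Fin n → ℤ} (hI : Forest G M L c) (hL : 2 ≤ L.length) (h : ℕ)
    (hM : M ≤ 2 ^ h * (L.length / 2))
    (hroom : L.flatten.length + (2 ^ (h + 1) - 2) * L.length + 11 * M < n) :
    ∃ L' c', Forest G M L' c' ∧ L'.length + 1 = L.length ∧ (∀ v ∈ L.flatten, v ∈ L'.flatten) ∧
      L'.flatten.length = L.flatten.length + 2 * h := by
  have hn : 0 < n := by omega
  set A := L.take (L.length / 2) with hA
  set B := L.drop (L.length / 2) with hB
  have hAB : A ++ B = L := List.take_append_drop _ _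
  have hAl : A.length = L.length / 2 := by simp [hA]; omega
  have hBl : B.length = L.length - L.length / 2 := by simp [hB]
  have hnd : A.flatten.Nodup ∧ B.flatten.Nodup ∧ ∀ a ∈ A.flatten, ∀ b ∈ B.flatten, a ≠ b := by
    have := hI.nd
    rw [← hAB, List.flatten_append, List.nodup_append] at this
    exact this
  have hAL : ∀ l ∈ A, l ∈ L := fun l hl => by rw [← hAB]; simp [hl]
  have hBL : ∀ l ∈ B, l ∈ L := fun l hl => by rw [← hAB]; simp [hl]
  let φ : List (Fin n) → Fin n := fun l => l.getLastD ⟨0, hn⟩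
  let ψ : List (Fin n) → Fin n := fun l => l.headD ⟨0, hn⟩
  have hφ : ∀ l ∈ L, l.getLast? = some (φ l) := by
    intro l hl
    have := hI.ne l hl
    rcases List.eq_nil_or_concat l with rfl | ⟨l', z, rfl⟩
    · exact absurd rfl this
    · simp [φ]
  have hψ : ∀ l ∈ L, l.head? = some (ψ l) := by
    intro l hl
    have := hI.ne l hl
    cases l with
    | nil => exact absurd rfl this
    | cons z l => simp [ψ]
  have hφm : ∀ l ∈ L, φ l ∈ l := fun l hl => List.mem_of_mem_getLast? (hφ l hl)
  have hψm : ∀ l ∈ L, ψ l ∈ l := fun l hl => List.mem_of_mem_head? (hψ l hl)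
  have c1 : (A.map φ).toFinset.card = L.length / 2 := by
    rw [List.toFinset_card_of_nodup (nodup_map_repr hnd.1 φ fun l hl => hφm l (hAL l hl)),
      List.length_map, hAl]
  have c2 : (B.map ψ).toFinset.card = L.length - L.length / 2 := by
    rw [List.toFinset_card_of_nodup (nodup_map_repr hnd.2.1 ψ fun l hl => hψm l (hBL l hl)),
      List.length_map, hBl]
  obtain ⟨r₁, hr₁, r₂, hr₂, Q, hQl, hQn, hQW, hQc, hQg⟩ := GoodS.connect hnb hj h L.flatten.toFinset c
    (A.map φ).toFinset (B.map ψ).toFinset hI.hg hI.c5 (fun v hv => hI.off v (by simpa using hv))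
    (by
      intro v hv
      rw [List.mem_toFinset, List.mem_map] at hv
      obtain ⟨l, hl, rfl⟩ := hv
      exact List.mem_toFinset.2 (List.mem_flatten.2 ⟨l, hAL l hl, hφm l (hAL l hl)⟩))
    (by
      intro v hv
      rw [List.mem_toFinset, List.mem_map] at hv
      obtain ⟨l, hl, rfl⟩ := hv
      exact List.mem_toFinset.2 (List.mem_flatten.2 ⟨l, hBL l hl, hψm l (hBL l hl)⟩))
    (by
      rw [disjoint_left]
      intro v hv hv'
      rw [List.mem_toFinset, List.mem_map] at hv hv'
      obtain ⟨l, hl, rfl⟩ := hv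
      obtain ⟨l', hl', he⟩ := hv'
      exact hnd.2.2 _ (List.mem_flatten.2 ⟨l, hl, hφm l (hAL l hl)⟩) _
        (List.mem_flatten.2 ⟨l', hl', hψm l' (hBL l' hl')⟩) he.symm)
    (by
      intro v hv
      rw [List.mem_toFinset, List.mem_map] at hv
      obtain ⟨l, hl, rfl⟩ := hv
      exact hI.ends l (hAL l hl) _ (Or.inr (hφ l (hAL l hl))))
    (by
      intro v hv
      rw [List.mem_toFinset, List.mem_map] at hv
      obtain ⟨l, hl, rfl⟩ := hv
      exact hI.ends l (hBL l hl) _ (Or.inl (hψ l (hBL l hl))))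
    (by rw [c1]; exact hM)
    (by rw [c2]; exact hM.trans (Nat.mul_le_mul_left _ (by omega)))
    (by
      rw [c1, c2, List.toFinset_card_of_nodup hI.nd,
        show L.length / 2 + (L.length - L.length / 2) = L.length by omega]
      exact hroom)
  rw [List.mem_toFinset, List.mem_map] at hr₁ hr₂
  obtain ⟨l₁, hl₁, rfl⟩ := hr₁
  obtain ⟨l₂, hl₂, rfl⟩ := hr₂
  obtain ⟨A1, A2, hA'⟩ := List.append_of_mem hl₁
  obtain ⟨B1, B2, hB'⟩ := List.append_of_mem hl₂
  have hp : L.Perm (l₁ :: l₂ :: (A1 ++ A2 ++ (B1 ++ B2))) := by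
    rw [← hAB, hA', hB']
    calc (A1 ++ l₁ :: A2 ++ (B1 ++ l₂ :: B2)).Perm ((l₁ :: (A1 ++ A2)) ++ (l₂ :: (B1 ++ B2))) :=
          List.perm_middle.append List.perm_middle
      _ = l₁ :: ((A1 ++ A2) ++ l₂ :: (B1 ++ B2)) := by simp
      _ |>.Perm _ := List.Perm.cons _ List.perm_middle
  have hpf := hp.flatten
  have hI' := hI.perm hp
  have hJ := hI'.join (hφ l₁ (hAL l₁ hl₁)) (hψ l₂ (hBL l₂ hl₂)) hQn
    (fun q hq hq' => hQW q hq (List.mem_toFinset.2 (hpf.mem_iff.2 hq'))) hQc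
    (by rw [← List.toFinset_eq_of_perm _ _ hpf]; exact hQg)
  refine ⟨_, _, hJ, ?_, ?_, ?_⟩
  · have := hp.length_eq
    simp only [List.length_cons] at this ⊢
    omega
  · intro v hv
    have := hpf.mem_iff.1 hv
    simp only [List.flatten_cons, List.mem_append] at this ⊢
    rcases this with h | h | h
    · exact Or.inl (Or.inl (Or.inl h))
    · exact Or.inl (Or.inr h)
    · exact Or.inr h
  · have := hpf.length_eq
    simp only [List.flatten_cons, List.length_append] at this ⊢
    omega

end Forests

section Merging
open Finset

variable {n : ℕ} {G : SimpleGraph (Fin n)} {M : ℕ}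

/-- Number of doublings needed to get from `t / 2` to `M`. -/
def hh (M t : ℕ) : ℕ := ((range M).filter fun i => 2 ^ i * (t / 2) < M).card

theorem hh_filter {M t : ℕ} (ht : 2 ≤ t) (i : ℕ) : 2 ^ i * (t / 2) < M ↔ i < hh M t := by
  have hsub : ∀ i, 2 ^ i * (t / 2) < M → i < M := by
    intro i hi
    have h1 : i < 2 ^ i := Nat.lt_two_pow_self
    have h2 : 2 ^ i * 1 ≤ 2 ^ i * (t / 2) := Nat.mul_le_mul_left _ (by omega)
    omega
  have hdown : ∀ i j, j ≤ i → 2 ^ i * (t / 2) < M → 2 ^ j * (t / 2) < M := by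
    intro i j hij hi
    exact lt_of_le_of_lt (Nat.mul_le_mul_right _ (Nat.pow_le_pow_right (by norm_num) hij)) hi
  constructor
  · intro hi
    have : range (i + 1) ⊆ (range M).filter fun i => 2 ^ i * (t / 2) < M := by
      intro j hj
      have hj' := hdown i j (by simpa [Nat.lt_succ_iff] using hj) hi
      exact mem_filter.2 ⟨mem_range.2 (hsub j hj'), hj'⟩
    have := card_le_card this
    rw [card_range] at this
    exact this
  · intro hi
    by_contra hcon
    have : (range M).filter (fun i => 2 ^ i * (t / 2) < M) ⊆ range i := by
      intro j hj
      rw [mem_filter] at hj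
      rw [mem_range]
      by_contra hji
      exact hcon (hdown j i (by omega) hj.2)
    have := card_le_card this
    rw [card_range] at this
    exact absurd hi (not_lt.2 this)

theorem sum_hh (M t : ℕ) : ∑ s ∈ Icc 2 t, hh M s ≤ 4 * M := by
  have h1 : ∑ s ∈ Icc 2 t, hh M s
      = ∑ i ∈ range M, ((Icc 2 t).filter fun s => 2 ^ i * (s / 2) < M).card := by
    simp only [hh, card_filter]
    exact sum_comm
  have h2 : ∀ i ∈ range M, ((Icc 2 t).filter fun s => 2 ^ i * (s / 2) < M).card
      ≤ 2 * (M / 2 ^ i) := by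
    intro i _
    have : (Icc 2 t).filter (fun s => 2 ^ i * (s / 2) < M) ⊆ Icc 2 (2 * (M / 2 ^ i) + 1) := by
      intro s hs
      rw [mem_filter, mem_Icc] at hs
      rw [mem_Icc]
      have : s / 2 ≤ M / 2 ^ i := by
        rw [Nat.le_div_iff_mul_le (by positivity)]
        rw [mul_comm]; omega
      omega
    refine (card_le_card this).trans ?_
    rw [Nat.card_Icc]; omega
  rw [h1]
  refine (sum_le_sum h2).trans ?_
  rw [← mul_sum]
  have := Nat.geom_sum_le (b := 2) le_rfl M M
  omega

theorem Forest.mergeAll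
    (hnb : ∀ U : Finset (Fin n), M ≤ U.card → n ≤ (nb G U).card + M)
    (hj : ∀ A B : Finset (Fin n), M ≤ A.card → M ≤ B.card → ∃ a ∈ A, ∃ b ∈ B, G.Adj a b) :
    ∀ (t : ℕ) (L : List (List (Fin n))) (c : Fin n → ℤ), Forest G M L c → L.length = t → 1 ≤ t →
    L.flatten.length + 2 * ∑ s ∈ Icc 2 t, hh M s + 23 * M < n →
    ∃ l c', Forest G M [l] c' ∧ (∀ v ∈ L.flatten, v ∈ l) ∧
      l.length = L.flatten.length + 2 * ∑ s ∈ Icc 2 t, hh M s := by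
  intro t
  induction t with
  | zero => intro L c _ _ h; omega
  | succ t ih =>
    intro L c hF hL _ hroom
    rcases Nat.eq_zero_or_pos t with rfl | ht
    · obtain ⟨l, rfl⟩ := List.length_eq_one_iff.1 hL
      exact ⟨l, c, hF, by simp, by simp⟩
    · rw [sum_Icc_succ_top (by omega)] at hroom ⊢
      have hle : M ≤ 2 ^ (hh M (t + 1)) * ((t + 1) / 2) := by
        by_contra hcon
        exact lt_irrefl _ ((hh_filter (M := M) (t := t + 1) (by omega) _).1 (not_le.1 hcon))
      have hbound : (2 ^ (hh M (t + 1) + 1) - 2) * (t + 1) ≤ 12 * M := by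
        rcases Nat.eq_zero_or_pos (hh M (t + 1)) with h0 | h0
        · rw [h0]; simp
        · obtain ⟨j, hj'⟩ : ∃ j, hh M (t + 1) = j + 1 := ⟨hh M (t + 1) - 1, by omega⟩
          have h1 := (hh_filter (M := M) (t := t + 1) (by omega) j).2 (by omega)
          rw [hj']
          have h2 : (t + 1) ≤ 3 * ((t + 1) / 2) := by omega
          calc (2 ^ (j + 1 + 1) - 2) * (t + 1) ≤ 2 ^ (j + 1 + 1) * (3 * ((t + 1) / 2)) :=
                Nat.mul_le_mul (Nat.sub_le _ _) h2
            _ = 12 * (2 ^ j * ((t + 1) / 2)) := by ring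
            _ ≤ 12 * M := by omega
      obtain ⟨L', c', hF', hl', hsub, hlen⟩ := hF.merge hnb hj (by omega) (hh M (t + 1))
        (by rw [hL]; exact hle) (by rw [hL]; omega)
      obtain ⟨l, c₃, hF₃, hsub', hlen'⟩ := ih L' c' hF' (by omega) ht (by omega)
      exact ⟨l, c₃, hF₃, fun v hv => hsub' v (hsub v hv), by omega⟩

theorem Forest.step
    (hnb : ∀ U : Finset (Fin n), M ≤ U.card → n ≤ (nb G U).card + M)
    {l : List (Fin n)} {c : Fin n → ℤ} (h : Forest G M [l] c) (hroom : l.length + 11 * M < n) :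
    ∃ y c', Forest G M [l ++ [y]] c' := by
  have hne := h.ne l (by simp)
  obtain ⟨x, s, rfl⟩ : ∃ x s, l = x ++ [s] := by
    rcases List.eq_nil_or_concat' l with h | h
    · exact absurd h hne
    · exact h
  have hs3 : 3 ≤ c s := h.ends (x ++ [s]) (by simp) s (Or.inr (by simp))
  have hnd : (x ++ [s]).Nodup := by simpa using h.nd
  have hfl : [x ++ [s]].flatten = x ++ [s] := by simp
  have hg := h.hg
  rw [hfl] at hg
  obtain ⟨y, hy1, hy2, hy3⟩ := hg.ext hnb h.c5 (by
    rw [List.toFinset_card_of_nodup hnd]; exact hroom) s (by omega)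
  have hyl : y ∉ x ++ [s] := fun h => hy2 (List.mem_toFinset.2 h)
  have hys : y ≠ s := fun e => hyl (by simp [e])
  have hyc : c y = 5 := h.off y (by rw [hfl]; exact hyl)
  refine ⟨y, fun v => c v - if v = s then 1 else 0, ⟨?_, ?_, ?_, ?_, ?_, ?_, ?_, ?_, ?_⟩⟩
  · simp only [List.flatten_cons, List.flatten_nil, List.append_nil]
    rw [List.nodup_append]
    exact ⟨hnd, by simp, fun a ha b hb e => hyl (by
      rw [List.mem_singleton] at hb; rw [← hb, ← e]; exact ha)⟩
  · simp
  · intro l hl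
    rw [List.mem_singleton] at hl
    subst hl
    have e : x ++ [s] ++ [y] = x ++ s :: [y] := by simp
    rw [e, List.isChain_split]
    exact ⟨h.ch _ (by simp), by simpa using hy1⟩
  · convert hy3 using 1
    ext v
    simp only [List.flatten_cons, List.flatten_nil, List.append_nil, List.mem_toFinset,
      List.mem_append, mem_insert, List.mem_singleton]
    tauto
  · intro v; have := h.c5 v; split_ifs <;> omega
  · intro v; have := h.c1 v
    by_cases hv : v = s
    · subst hv; simp; omega
    · simp [hv]; exact this
  · intro v hv
    have hv' : v ∉ x ++ [s] := fun h' => hv (by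
      simp only [List.flatten_cons, List.flatten_nil, List.append_nil]
      exact List.mem_append_left _ h')
    have : v ≠ s := fun e => hv' (by simp [e])
    simp only [this, if_false, sub_zero]
    exact h.off v (by rw [hfl]; exact hv')
  · intro l hl v hv
    rw [List.mem_singleton] at hl
    subst hl
    rcases hv with hv | hv
    · cases x with
      | nil =>
        have : s = v := by simpa using hv
        subst this
        have := h.sing _ (List.mem_singleton.2 rfl) s (by simp)
        simp; omega
      | cons z x =>
        have : z = v := by simpa using hv
        subst this
        have h3 := h.ends (z :: x ++ [s]) (by simp) z (by simp)
        have n1 : z ≠ s := by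
          rw [List.nodup_append] at hnd
          exact hnd.2.2 z (by simp) s (by simp)
        simp only [n1, if_false, sub_zero]; exact h3
    · have : y = v := by
        rw [List.getLast?_append] at hv
        simpa using hv
      subst this
      simp only [hys, if_false, sub_zero, hyc]; norm_num
  · intro l hl v hv
    rw [List.mem_singleton] at hl
    subst hl
    have := congrArg List.length hv
    simp at this

theorem Forest.extend
    (hnb : ∀ U : Finset (Fin n), M ≤ U.card → n ≤ (nb G U).card + M) :
    ∀ (j : ℕ) {l : List (Fin n)} {c : Fin n → ℤ}, Forest G M [l] c → l.length + j + 11 * M ≤ n →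
    ∃ l' c', Forest G M [l'] c' ∧ (∀ v ∈ l, v ∈ l') ∧ l'.length = l.length + j := by
  intro j
  induction j with
  | zero => intro l c h _; exact ⟨l, c, h, fun v hv => hv, rfl⟩
  | succ j ih =>
    intro l c h hroom
    obtain ⟨y, c', h'⟩ := h.step hnb (by omega)
    obtain ⟨l', c₃, h₃, hsub, hlen⟩ := ih h' (by simp; omega)
    refine ⟨l', c₃, h₃, fun v hv => hsub v (List.mem_append_left _ hv), ?_⟩
    rw [hlen]; simp; omega

theorem Forest.close
    (hnb : ∀ U : Finset (Fin n), M ≤ U.card → n ≤ (nb G U).card + M)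
    (hj : ∀ A B : Finset (Fin n), M ≤ A.card → M ≤ B.card → ∃ a ∈ A, ∃ b ∈ B, G.Adj a b)
    {l : List (Fin n)} {c : Fin n → ℤ} (h : Forest G M [l] c) (hl : 2 ≤ l.length) (H : ℕ)
    (hH : M ≤ 2 ^ H) (hroom : l.length + (2 ^ (H + 1) - 2) * 2 + 11 * M < n) :
    ∃ (C : List (Fin n)) (a : Fin n), C.head? = some a ∧ C.Nodup ∧ (C ++ [a]).IsChain G.Adj ∧
      C.length = l.length + 2 * H ∧ (∀ v ∈ l, v ∈ C) ∧ GoodS G M C.toFinset (fun _ => 1) := by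
  have hnd : l.Nodup := by simpa using h.nd
  have hfl : [l].flatten = l := by simp
  obtain ⟨b, l', rfl⟩ : ∃ b l', l = b :: l' := by
    cases l with
    | nil => simp at hl
    | cons b l' => exact ⟨b, l', rfl⟩
  obtain ⟨x, a, rfl⟩ : ∃ x a, l' = x ++ [a] := by
    rcases List.eq_nil_or_concat' l' with h | h
    · subst h; simp at hl
    · exact h
  have hab : a ≠ b := by
    intro e
    rw [List.nodup_cons] at hnd
    exact hnd.1 (by simp [e])
  have hg := h.hg
  rw [hfl] at hg
  have ha3 : 3 ≤ c a := h.ends (b :: (x ++ [a])) (by simp) a (Or.inr (by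
    rw [← List.cons_append, List.getLast?_append]; simp))
  have hb3 : 3 ≤ c b := h.ends (b :: (x ++ [a])) (by simp) b (Or.inl (by simp))
  obtain ⟨r₁, hr₁, r₂, hr₂, Q, hQl, hQn, hQW, hQc, hQg⟩ := GoodS.connect hnb hj H _ c {a} {b} hg
    h.c5 (fun v hv => h.off v (by
      rw [hfl]; exact fun h => hv (List.mem_toFinset.2 h))) (by simp) (by simp)
    (by simpa using hab) (by simpa using ha3) (by simpa using hb3) (by simpa using hH)
    (by simpa using hH) (by
      rw [List.toFinset_card_of_nodup hnd, card_singleton, card_singleton]; exact hroom)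
  rw [mem_singleton] at hr₁ hr₂
  subst hr₁ hr₂
  refine ⟨r₂ :: (x ++ [r₁]) ++ Q, r₂, by simp, ?_, ?_, ?_, ?_, ?_⟩
  · rw [List.nodup_append]
    exact ⟨hnd, hQn, fun u hu v hv e => hQW v hv (List.mem_toFinset.2 (e ▸ hu))⟩
  · have e : r₂ :: (x ++ [r₁]) ++ Q ++ [r₂] = (r₂ :: x) ++ r₁ :: (Q ++ [r₂]) := by simp
    rw [e, List.isChain_split]
    exact ⟨by simpa using h.ch _ (List.mem_singleton.2 rfl), hQc⟩
  · rw [List.length_append, hQl]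
  · intro v hv; exact List.mem_append_left _ hv
  · rw [List.toFinset_append]
    refine hQg.mono fun v => ?_
    have := h.c1 v
    by_cases hv : v ∈ Q
    · simp [hv]
    · simp only [hv, if_false]
      split_ifs with hv'
      · rcases hv' with rfl | rfl <;> omega
      · omega

theorem walk_of_list {V : Type*} {G : SimpleGraph V} (l : List V) (a b : V)
    (h1 : l.head? = some a) (h2 : l.getLast? = some b) (h : l.IsChain G.Adj) :
    ∃ p : G.Walk a b, p.support = l := by
  have hne : l ≠ [] := by rintro rfl; simp at h1
  have e1 : l.head hne = a := by rw [List.head?_eq_some_head hne] at h1; exact Option.some.inj h1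
  have e2 : l.getLast hne = b := by
    rw [List.getLast?_eq_some_getLast hne] at h2; exact Option.some.inj h2
  subst e1 e2
  exact ⟨SimpleGraph.Walk.ofSupport l hne h, SimpleGraph.Walk.support_ofSupport hne h⟩

theorem cycle_of_list {C : List (Fin n)} {a : Fin n} (ha : C.head? = some a) (hn : C.Nodup)
    (hc : (C ++ [a]).IsChain G.Adj) (hl : 3 ≤ C.length) :
    ∃ p : G.Walk a a, p.IsCycle ∧ ∀ v, v ∈ p.support ↔ v ∈ C := by
  obtain ⟨t, rfl⟩ : ∃ t, C = a :: t := by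
    rw [List.head?_eq_some_iff] at ha; exact ha
  obtain ⟨p, hp⟩ := walk_of_list (a :: t ++ [a]) a a (by simp) (by
    rw [List.getLast?_append]; simp) hc
  refine ⟨p, ?_, fun v => by rw [hp]; simp; tauto⟩
  have hlen : p.length = t.length + 1 := by
    have := p.length_support
    rw [hp] at this; simp at this; omega
  rw [SimpleGraph.Walk.isCycle_iff_isPath_tail_and_le_length]
  refine ⟨?_, by simp at hl; omega⟩
  rw [SimpleGraph.Walk.isPath_def, SimpleGraph.Walk.support_tail_of_not_nil, hp]
  · simp only [List.cons_append, List.tail_cons]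
    rw [List.nodup_cons] at hn
    rw [List.nodup_append]
    exact ⟨hn.2, by simp, fun u hu v hv e => hn.1 (by
      rw [List.mem_singleton] at hv; rw [← hv, ← e]; exact hu)⟩
  · rw [← SimpleGraph.Walk.length_eq_zero_iff]; omega

end Merging

section Final
open Finset

variable {n : ℕ} {G : SimpleGraph (Fin n)} {M : ℕ}

theorem crown_of_cycle {C : List (Fin n)} {a : Fin n} (ha : C.head? = some a) (hn : C.Nodup)
    (hc : (C ++ [a]).IsChain G.Adj) (hl : 3 ≤ C.length) (f : {v : Fin n // v ∉ C} → Fin n)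
    (hf : Function.Injective f) (hfC : ∀ v, f v ∈ C) (hfa : ∀ v, G.Adj v.1 (f v)) :
    ContainsSpanningCrown n G (n - C.length) := by
  obtain ⟨p, hp, hs⟩ := cycle_of_list ha hn hc hl
  let e : {v : Fin n // v ∉ C} → Sym2 (Fin n) := fun v => s(v.1, f v)
  have he : Function.Injective e := by
    intro v w hvw
    rcases Sym2.eq_iff.1 hvw with h | h
    · exact Subtype.ext h.1
    · exact absurd (h.1 ▸ hfC w) v.2
  have hcard : Fintype.card {v : Fin n // v ∉ C} = n - C.length := by
    have h1 : Fintype.card {v : Fin n // v ∉ C} = (C.toFinsetᶜ).card := by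
      rw [Fintype.card_subtype]
      congr 1
      ext v; simp
    rw [h1, card_compl, Fintype.card_fin, List.toFinset_card_of_nodup hn]
  refine ⟨a, p, univ.image e, hp, ?_, ?_, ?_, ?_, ?_, ?_⟩
  · rw [card_image_of_injective _ he, card_univ, hcard]
  · intro x hx
    obtain ⟨v, -, rfl⟩ := mem_image.1 hx
    exact hfa v
  · intro x hx y hy hxy z hz hz'
    obtain ⟨v, -, rfl⟩ := mem_image.1 hx
    obtain ⟨w, -, rfl⟩ := mem_image.1 hy
    have hvw : v ≠ w := fun h => hxy (h ▸ rfl)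
    rcases Sym2.mem_iff.1 hz with h | h <;> rcases Sym2.mem_iff.1 hz' with h' | h'
    · exact hvw (Subtype.ext (h.symm.trans h'))
    · exact v.2 (h ▸ h' ▸ hfC w)
    · exact w.2 (h' ▸ h ▸ hfC v)
    · exact hvw (hf (h.symm.trans h'))
  · intro x hx hx'
    obtain ⟨v, -, rfl⟩ := mem_image.1 hx
    exact v.2 ((hs _).1 (p.fst_mem_support_of_mem_edges hx'))
  · intro x hx
    obtain ⟨v, -, rfl⟩ := mem_image.1 hx
    refine ⟨f v, ⟨Sym2.mem_mk_right _ _, (hs _).2 (hfC v)⟩, ?_⟩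
    rintro y ⟨hy, hy'⟩
    rcases Sym2.mem_iff.1 hy with h | h
    · exact absurd ((hs _).1 hy') (h ▸ v.2)
    · exact h
  · intro x
    by_cases hx : x ∈ C
    · exact Or.inl ((hs _).2 hx)
    · exact Or.inr ⟨e ⟨x, hx⟩, mem_image_of_mem _ (mem_univ _), Sym2.mem_mk_left _ _⟩

theorem crown_hall
    (hj : ∀ A B : Finset (Fin n), M ≤ A.card → M ≤ B.card → ∃ a ∈ A, ∃ b ∈ B, G.Adj a b)
    {Y : Finset (Fin n)} (hY : ∀ S : Finset (Fin n), S.card ≤ 2 * M → S.card ≤ (nb G S ∩ Y).card)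
    {C : List (Fin n)} {a : Fin n} (ha : C.head? = some a) (hn : C.Nodup)
    (hc : (C ++ [a]).IsChain G.Adj) (hl : 3 ≤ C.length) (hYC : ∀ y ∈ Y, y ∈ C)
    (hg : GoodS G M C.toFinset (fun _ => 1)) (hhalf : n ≤ 2 * C.length) :
    ContainsSpanningCrown n G (n - C.length) := by
  have hCc : C.toFinset.card = C.length := List.toFinset_card_of_nodup hn
  obtain ⟨f, hf, hft⟩ := (all_card_le_biUnion_card_iff_exists_injective
    (fun v : {v : Fin n // v ∉ C} => C.toFinset.filter fun u => G.Adj v.1 u)).1 (by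
    intro S
    set S' : Finset (Fin n) := S.map (Function.Embedding.subtype _) with hS'
    have hSc : S'.card = S.card := card_map _
    have hSC : ∀ v ∈ S', v ∉ C := by
      intro v hv
      obtain ⟨w, _, rfl⟩ := mem_map.1 hv
      exact w.2
    have hbi : S.biUnion (fun v : {v : Fin n // v ∉ C} => C.toFinset.filter fun u => G.Adj v.1 u)
        = nb G S' ∩ C.toFinset := by
      ext u
      simp only [mem_biUnion, mem_filter, mem_inter, mem_nb, hS', mem_map,
        Function.Embedding.subtype_apply]
      constructor
      · rintro ⟨v, hv, h1, h2⟩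
        exact ⟨⟨v.1, ⟨v, hv, rfl⟩, h2⟩, h1⟩
      · rintro ⟨⟨_, ⟨v, hv, rfl⟩, h2⟩, h1⟩
        exact ⟨v, hv, h1, h2⟩
    rw [hbi, ← hSc]
    by_cases hS : S'.card ≤ 2 * M
    · refine (hY S' hS).trans (card_le_card (inter_subset_inter_left ?_))
      intro y hy
      exact List.mem_toFinset.2 (hYC y hy)
    · set T := C.toFinset \ nb G S' with hT
      have hTM : T.card < M := by
        by_contra hcon
        obtain ⟨x, hx, y, hy, hxy⟩ := hj S' T (by omega) (by omega)
        exact (mem_sdiff.1 hy).2 (mem_nb.2 ⟨x, hx, hxy⟩)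
      have h1 := hg T (by omega)
      simp only [sum_const, nsmul_eq_mul, mul_one] at h1
      have h1' : T.card ≤ (nb G T \ C.toFinset).card := by exact_mod_cast h1
      have h2 : Disjoint (nb G T \ C.toFinset) S' := by
        rw [disjoint_left]
        intro v hv hv'
        rw [mem_sdiff, mem_nb] at hv
        obtain ⟨⟨u, hu, huv⟩, _⟩ := hv
        exact (mem_sdiff.1 hu).2 (mem_nb.2 ⟨v, hv', huv.symm⟩)
      have h3 : ((nb G T \ C.toFinset) ∪ S').card ≤ (C.toFinsetᶜ).card := by
        apply card_le_card
        intro v hv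
        rw [mem_compl, List.mem_toFinset]
        rcases mem_union.1 hv with h | h
        · exact fun h' => (mem_sdiff.1 h).2 (List.mem_toFinset.2 h')
        · exact hSC v h
      rw [card_union_of_disjoint h2, card_compl, Fintype.card_fin, hCc] at h3
      have h4 : T.card + (nb G S' ∩ C.toFinset).card = C.length := by
        rw [hT, inter_comm, card_sdiff_add_card_inter, hCc]
      omega)
  refine crown_of_cycle ha hn hc hl f hf (fun v => ?_) (fun v => ?_)
  · exact List.mem_toFinset.1 (mem_filter.1 (hft v)).1
  · exact (mem_filter.1 (hft v)).2

theorem crown_core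
    (hj : ∀ A B : Finset (Fin n), M ≤ A.card → M ≤ B.card → ∃ a ∈ A, ∃ b ∈ B, G.Adj a b)
    {Y : Finset (Fin n)} (hY : ∀ S : Finset (Fin n), S.card ≤ 2 * M → S.card ≤ (nb G S ∩ Y).card)
    (hYg : GoodS G M Y (fun _ => 5)) (hY0 : 1 ≤ Y.card) (hY3 : 3 * Y.card ≤ n) (hM1 : 1 ≤ M)
    (hMn : 100 * M ≤ n) (k : ℕ) (hk : 2 * k ≤ n) (hMk : 20 * M ≤ k) :
    ContainsSpanningCrown n G k := by
  have hnb := fun U hU => joined_nb hj U hU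
  set L : List (List (Fin n)) := Y.toList.map (fun v => [v]) with hL
  have hflat : L.flatten = Y.toList := by
    rw [hL]
    induction Y.toList with
    | nil => rfl
    | cons a l ih => simp [ih]
  have hmem : ∀ l ∈ L, ∃ v, l = [v] := by
    intro l hl
    obtain ⟨v, _, rfl⟩ := List.mem_map.1 hl
    exact ⟨v, rfl⟩
  have hF : Forest G M L (fun _ => 5) := by
    refine ⟨?_, ?_, ?_, ?_, ?_, ?_, ?_, ?_, ?_⟩
    · rw [hflat]; exact Y.nodup_toList
    · intro l hl; obtain ⟨v, rfl⟩ := hmem l hl; simp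
    · intro l hl; obtain ⟨v, rfl⟩ := hmem l hl; simp
    · rw [hflat, toList_toFinset]; exact hYg
    · intro v; exact le_rfl
    · intro v; norm_num
    · intro v _; rfl
    · intro l _ v _; norm_num
    · intro l _ v _; norm_num
  have hsum := sum_hh M Y.card
  have hfl : L.flatten.length = Y.card := by rw [hflat, length_toList]
  obtain ⟨l, c, hl, hlsub, hllen⟩ := Forest.mergeAll hnb hj Y.card L _ hF
    (by simp [hL]) hY0 (by omega)
  obtain ⟨H, hH1, hH2, hH3⟩ : ∃ H : ℕ, M ≤ 2 ^ H ∧ 2 ^ H ≤ 2 * M ∧ H ≤ M := by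
    refine ⟨Nat.clog 2 M, Nat.le_pow_clog (by norm_num) M, ?_, ?_⟩
    · rcases Nat.lt_or_ge 1 M with h | h
      · have h1 := Nat.pow_pred_clog_lt_self (b := 2) (by norm_num) h
        have h2 : 0 < Nat.clog 2 M := Nat.clog_pos (by norm_num) h
        obtain ⟨j, hj'⟩ : ∃ j, Nat.clog 2 M = j + 1 := ⟨Nat.clog 2 M - 1, by omega⟩
        rw [hj'] at h1 ⊢
        rw [pow_succ]
        simp at h1; omega
      · have : M = 1 := by omega
        subst this; simp
    · exact Nat.clog_le_of_le_pow (Nat.lt_two_pow_self).le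
  obtain ⟨l', c', hl', hsub', hlen'⟩ := hl.extend hnb (n - k - 2 * H - l.length) (by omega)
  have hlen2 : l'.length = n - k - 2 * H := by omega
  obtain ⟨C, a, hC1, hC2, hC3, hC4, hC5, hC6⟩ := hl'.close hnb hj (by omega) H hH1 (by
    rw [pow_succ]; omega)
  have hCl : C.length = n - k := by omega
  have := crown_hall hj hY hC1 hC2 hC3 (by omega) (fun y hy => hC5 y (hsub' y (hlsub y (by
    rw [hflat]; simpa using hy)))) hC6 (by omega)
  rwa [hCl, show n - (n - k) = k by omega] at this

theorem param_n {d : ℕ} {lam : ℝ} (h : IsNDLGraph n G d lam) (hl : 0 < lam) (hd : lam < d) :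
    (d : ℝ) ≤ lam * n := by
  obtain ⟨_, _, v, _⟩ := id h
  have hn : (0 : ℝ) < n := by exact_mod_cast v.pos
  have := mixing h hl hd {v} {v}
  have he : eAB G {v} {v} = 0 := by simp [eAB, filter_singleton]
  rw [he] at this
  simp at this
  rw [abs_of_nonneg (by positivity)] at this
  rwa [div_le_iff₀ hn] at this

theorem param_d {d : ℕ} {lam C : ℝ} (h : IsNDLGraph n G d lam) (hl : 0 < lam) (hd : lam < d)
    (hC : 2 ≤ C) (hCd : C * lam ≤ d) : C ≤ 2 * d := by
  have hpn := param_n h hl hd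
  obtain ⟨hreg, _, v, _⟩ := id h
  have hn : (0 : ℝ) < n := by exact_mod_cast v.pos
  have hdpos : (0 : ℝ) < d := hl.trans hd
  have hCn : C ≤ n := by
    have : C * lam ≤ n * lam := by linarith
    exact le_of_mul_le_mul_right this hl
  rcases le_or_gt (n : ℝ) (2 * d) with h2 | h2
  · linarith
  · have := mixing h hl hd {v} (G.neighborFinset v)
    have hc : (G.neighborFinset v).card = d := hreg v
    have he : eAB G {v} (G.neighborFinset v) = d := by
      rw [eAB, sum_singleton, filter_true_of_mem, hc]
      intro x hx; simpa using hx
    rw [he, hc] at this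
    simp at this
    have h3 := (le_abs_self _).trans this
    have h4 : (d : ℝ) / n * d ≤ d / 2 := by
      rw [div_mul_eq_mul_div, div_le_div_iff₀ hn (by norm_num)]
      nlinarith
    have hs := Real.sq_sqrt hdpos.le
    have hs0 : 0 < √(d : ℝ) := Real.sqrt_pos.2 hdpos
    have h5 : √(d : ℝ) ≤ 2 * lam := by
      have : √(d : ℝ) * √(d : ℝ) ≤ (2 * lam) * √(d : ℝ) := by nlinarith
      exact le_of_mul_le_mul_right this hs0
    have h6 : C ≤ 2 * √(d : ℝ) := by
      have : C * √(d : ℝ) ≤ (2 * √(d : ℝ)) * √(d : ℝ) := by nlinarith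
      exact le_of_mul_le_mul_right this hs0
    nlinarith

end Final

/-- For every `ε` with `0 < ε ≤ 1/2` there is `C > 0` such that every `(n,d,λ)`-graph with
`λ > 0` and `d/λ ≥ C` contains a crown on `n` vertices with `⌊εn⌋` spikes. -/
theorem crown_with_epsilon_spikes (ε : ℝ) (hε0 : 0 < ε) (hε : ε ≤ 1 / 2) :
    ∃ C : ℝ, 0 < C ∧
      ∀ (n d : ℕ) (lam : ℝ) (G : SimpleGraph (Fin n)),
        IsNDLGraph n G d lam → 0 < lam → (d : ℝ) / lam ≥ C →
        ContainsSpanningCrown n G ⌊ε * (n : ℝ)⌋₊ := by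
  obtain ⟨d0, hd0⟩ := exists_d0
  set C : ℝ := 400 + 2 * d0 + 41 / ε with hC
  have hε41 : 0 < 41 / ε := by positivity
  have hC400 : 400 ≤ C := by
    have : (0 : ℝ) ≤ d0 := Nat.cast_nonneg _
    linarith
  refine ⟨C, by linarith, ?_⟩
  intro n d lam G h hl hdl
  have hCd : C * lam ≤ d := by rwa [ge_iff_le, le_div_iff₀ hl] at hdl
  have hd : lam < d := by nlinarith
  have hdpos : (0 : ℝ) < d := hl.trans hd
  have hpn := param_n h hl hd
  have hpd := param_d h hl hd (by linarith) hCd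
  obtain ⟨hreg, _, v0, _⟩ := id h
  have hn : (0 : ℝ) < n := by exact_mod_cast v0.pos
  have hCn : C ≤ n := by
    have : C * lam ≤ n * lam := by linarith
    exact le_of_mul_le_mul_right this hl
  have hdd0 : d0 ≤ d := by
    have : (d0 : ℝ) ≤ d := by linarith
    exact_mod_cast this
  have hd1 : 1 ≤ d := by exact_mod_cast hdpos
  obtain ⟨w, hw⟩ := exists_colouring hreg hd1 (hd0 d hdd0)
  set M : ℕ := ⌊lam * n / d⌋₊ + 1 with hM
  have hMgt : lam * n / d < M := by rw [hM]; push_cast; exact Nat.lt_floor_add_one _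
  have hMle : (M : ℝ) ≤ lam * n / d + 1 := by
    rw [hM]; push_cast
    have := Nat.floor_le (a := lam * n / d) (by positivity)
    linarith
  have hMd : (M : ℝ) * d ≤ 2 * lam * n := by
    have h1 : (M : ℝ) * d ≤ (lam * n / d + 1) * d := by nlinarith
    have h2 : (lam * n / d + 1) * d = lam * n + d := by field_simp
    linarith
  have hMC : (M : ℝ) * C ≤ 2 * n := by
    have h0 : (0 : ℝ) ≤ M := Nat.cast_nonneg _
    have h1 : (M * C) * lam ≤ (2 * n) * lam := by nlinarith
    exact le_of_mul_le_mul_right h1 hl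
  have hj := joined h hl hd M hMgt
  -- the smallest colour class
  obtain ⟨i, hi⟩ : ∃ i : Fin 3, 3 * (Finset.univ.filter fun u => w u = i).card ≤ n := by
    by_contra hcon
    push Not at hcon
    have h1 : ∑ i : Fin 3, (Finset.univ.filter fun u => w u = i).card = n := by
      rw [← Finset.card_eq_sum_card_fiberwise (fun x _ => by simp)]
      simp
    rw [Fin.sum_univ_three] at h1
    have a := hcon 0
    have b := hcon 1
    have c := hcon 2
    omega
  set Y : Finset (Fin n) := Finset.univ.filter fun u => w u = i with hYdef
  have hdeg : ∀ (T : Finset (Fin n)) (i' : Fin 3), (∀ u, w u = i' → u ∈ T) → ∀ u : Fin n,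
      24 * lam ≤ ((T.filter fun b => G.Adj u b).card : ℝ) := by
    intro T i' hT u
    have h1 := hw u i'
    have h2 : (Finset.univ.filter fun x => G.Adj u x ∧ w x = i').card
        ≤ (T.filter fun b => G.Adj u b).card := by
      apply Finset.card_le_card
      intro x hx
      rw [Finset.mem_filter] at hx
      exact Finset.mem_filter.2 ⟨hT x hx.2.2, hx.2.1⟩
    have h3 : d ≤ 16 * (T.filter fun b => G.Adj u b).card := by omega
    have h4 : (d : ℝ) ≤ 16 * ((T.filter fun b => G.Adj u b).card : ℝ) := by exact_mod_cast h3
    nlinarith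
  have hYdeg := hdeg Y i (fun u hu => by simp [hYdef, hu])
  have hk1 := Nat.lt_floor_add_one (ε * n)
  have hk2 := Nat.floor_le (a := ε * n) (by positivity)
  refine crown_core (M := M) (Y := Y) hj ?_ ?_ ?_ hi (by omega) ?_ _ ?_ ?_
  · intro S hS
    have := expand h hl hd M hMd Y S hS fun u _ => hYdeg u
    omega
  · intro U hU
    obtain ⟨i', hi'⟩ : ∃ i' : Fin 3, i' ≠ i := exists_ne i
    have := expand h hl hd M hMd Yᶜ U hU fun u _ => hdeg Yᶜ i' (fun x hx => by
      simp [hYdef, hx, hi']) u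
    have e : nb G U \ Y = nb G U ∩ Yᶜ := by
      ext x; simp
    rw [e, Finset.sum_const, nsmul_eq_mul]
    have h2 : (5 : ℤ) * U.card ≤ (nb G U ∩ Yᶜ).card := by exact_mod_cast this
    linarith
  · have h1 := hYdeg v0
    by_contra hcon
    have h2 : Y.card = 0 := by omega
    rw [Finset.card_eq_zero] at h2
    rw [h2] at h1
    simp at h1
    linarith
  · have : (100 : ℝ) * M ≤ n := by
      have h0 : (0 : ℝ) ≤ M := Nat.cast_nonneg _
      nlinarith
    exact_mod_cast this
  · have : (2 : ℝ) * (⌊ε * n⌋₊ : ℕ) ≤ n := by nlinarith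
    exact_mod_cast this
  · have h0 : (0 : ℝ) ≤ M := Nat.cast_nonneg _
    have h1 : (1 : ℝ) ≤ M := by rw [hM]; push_cast; linarith [Nat.cast_nonneg (α := ℝ) ⌊lam * n / d⌋₊]
    have hCε : 41 ≤ ε * C := by
      rw [hC]
      have : ε * (41 / ε) = 41 := by field_simp
      have : 0 ≤ ε * (400 + 2 * d0) := by positivity
      nlinarith
    have h2 : (M : ℝ) * 41 ≤ 2 * (ε * n) := by
      have : (M : ℝ) * 41 ≤ M * (ε * C) := by nlinarith
      nlinarith
    have h3 : (20 : ℝ) * M < (⌊ε * n⌋₊ : ℕ) + 1 := by linarith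
    have h4 : 20 * M < ⌊ε * n⌋₊ + 1 := by exact_mod_cast h3
    omega
end
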